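/- Let H be a finite dimensional Hopf algebra over k acting inner faithfully on the Weyl algebra A = A_n(k). Then for a sufficiently large prime p, the reduced action of H_p on A_p = A_n(F̄_p) is inner faithful. -/

import Mathlib

open TensorProduct

/-- The defining relations of the `n`-th Weyl algebra: generators `xᵢ = .inl i`,
`yᵢ = .inr i`, relations `[xᵢ,xⱼ] = [yᵢ,yⱼ] = 0` and `[yᵢ,xⱼ] = δᵢⱼ`. -/
inductive WeylRel (R : Type) [CommRing R] (n : ℕ) :
    FreeAlgebra R (Fin n ⊕ Fin n) → FreeAlgebra R (Fin n ⊕ Fin n) → Prop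
  | xx (i j : Fin n) : WeylRel R n (FreeAlgebra.ι R (Sum.inl i) * FreeAlgebra.ι R (Sum.inl j))
      (FreeAlgebra.ι R (Sum.inl j) * FreeAlgebra.ι R (Sum.inl i))
  | yy (i j : Fin n) : WeylRel R n (FreeAlgebra.ι R (Sum.inr i) * FreeAlgebra.ι R (Sum.inr j))
      (FreeAlgebra.ι R (Sum.inr j) * FreeAlgebra.ι R (Sum.inr i))
  | yx (i j : Fin n) : WeylRel R n (FreeAlgebra.ι R (Sum.inr i) * FreeAlgebra.ι R (Sum.inl j))
      (FreeAlgebra.ι R (Sum.inl j) * FreeAlgebra.ι R (Sum.inr i) + if i = j then 1 else 0)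

/-- The `n`-th Weyl algebra `A_n(R)` over a commutative ring `R`. -/
def WeylAlgebra (R : Type) [CommRing R] (n : ℕ) : Type := RingQuot (WeylRel R n)

noncomputable instance (R : Type) [CommRing R] (n : ℕ) : Ring (WeylAlgebra R n) :=
  inferInstanceAs (Ring (RingQuot (WeylRel R n)))

noncomputable instance (S R : Type) [CommSemiring S] [CommRing R] [Algebra S R] (n : ℕ) :
    Algebra S (WeylAlgebra R n) :=
  inferInstanceAs (Algebra S (RingQuot (WeylRel R n)))

namespace WeylAlgebra

/-- The generator `xᵢ` of the Weyl algebra. -/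
noncomputable def X {R : Type} [CommRing R] {n : ℕ} (i : Fin n) : WeylAlgebra R n :=
  RingQuot.mkRingHom (WeylRel R n) (FreeAlgebra.ι R (Sum.inl i))

/-- The generator `yᵢ` of the Weyl algebra. -/
noncomputable def Y {R : Type} [CommRing R] {n : ℕ} (i : Fin n) : WeylAlgebra R n :=
  RingQuot.mkRingHom (WeylRel R n) (FreeAlgebra.ι R (Sum.inr i))

end WeylAlgebra

/-- An action of a (bi/Hopf) algebra `H` on an algebra `A`, where the comultiplication and
counit of `H` are supplied explicitly as `comul` and `counit`.  This says exactly that `A`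
is an `H`-module algebra:  `h ⬝ (ab) = ∑ (h₁ ⬝ a)(h₂ ⬝ b)` and `h ⬝ 1 = ε(h) 1`. -/
structure ModAlgAction (k : Type) [CommRing k] (H : Type) [Ring H] [Module k H]
    (comul : H →ₗ[k] H ⊗[k] H) (counit : H →ₗ[k] k)
    (A : Type) [Ring A] [Algebra k A] where
  /-- the action map -/
  act : H →ₗ[k] A →ₗ[k] A
  one_act : ∀ a : A, act 1 a = a
  mul_act : ∀ (g h : H) (a : A), act (g * h) a = act g (act h a)
  act_one : ∀ h : H, act h 1 = algebraMap k A (counit h)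
  act_mul : ∀ (h : H) (a b : A), act h (a * b) =
    TensorProduct.lift (((LinearMap.mul k A).comp (act.flip a)).compl₂ (act.flip b)) (comul h)

/-- An action of a Hopf algebra `H` on an algebra `A`, i.e. an `H`-module algebra
structure on `A`. -/
abbrev HopfAction (k : Type) [CommRing k] (H : Type) [Ring H] [Bialgebra k H]
    (A : Type) [Ring A] [Algebra k A] :=
  ModAlgAction k H (Coalgebra.comul (R := k)) (Coalgebra.counit (R := k)) A

/-- The `k`-subspace `I ⊗ H + H ⊗ I` of `H ⊗ H` determined by a subspace `I ⊆ H`. -/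
noncomputable def tensorIdeal (k : Type) [CommRing k] (H : Type) [Ring H] [Module k H]
    (I : Submodule k H) : Submodule k (H ⊗[k] H) :=
  Submodule.span k {z : H ⊗[k] H |
    (∃ a ∈ I, ∃ b : H, z = a ⊗ₜ[k] b) ∨ (∃ a : H, ∃ b ∈ I, z = a ⊗ₜ[k] b)}

/-- A (two-sided) Hopf ideal of `H`, with respect to explicitly supplied comultiplication,
counit and antipode. -/
def IsHopfIdealWith (k : Type) [CommRing k] (H : Type) [Ring H] [Module k H]
    (comul : H →ₗ[k] H ⊗[k] H) (counit : H →ₗ[k] k) (antipode : H →ₗ[k] H)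
    (I : Submodule k H) : Prop :=
  (∀ x ∈ I, ∀ h : H, h * x ∈ I ∧ x * h ∈ I) ∧
  (∀ x ∈ I, comul x ∈ tensorIdeal k H I) ∧
  (∀ x ∈ I, counit x = 0) ∧
  (∀ x ∈ I, antipode x ∈ I)

/-- A Hopf ideal of a Hopf algebra `H`. -/
abbrev IsHopfIdeal (k : Type) [CommRing k] (H : Type) [Ring H] [HopfAlgebra k H]
    (I : Submodule k H) : Prop :=
  IsHopfIdealWith k H (Coalgebra.comul (R := k)) (Coalgebra.counit (R := k))
    (HopfAlgebra.antipode (R := k)) I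

/-- Inner faithfulness of an action map `act`: no nonzero Hopf ideal annihilates `A`. -/
def InnerFaithfulWith (k : Type) [CommRing k] (H : Type) [Ring H] [Module k H]
    (comul : H →ₗ[k] H ⊗[k] H) (counit : H →ₗ[k] k) (antipode : H →ₗ[k] H)
    (A : Type) [Ring A] [Algebra k A] (act : H →ₗ[k] A →ₗ[k] A) : Prop :=
  ∀ I : Submodule k H, IsHopfIdealWith k H comul counit antipode I →
    (∀ x ∈ I, ∀ a : A, act x a = 0) → I = ⊥

/-- Inner faithfulness of a Hopf algebra action: no nonzero Hopf ideal of `H` acts by zero. -/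
abbrev HopfAction.InnerFaithful {k : Type} [CommRing k] {H : Type} [Ring H] [HopfAlgebra k H]
    {A : Type} [Ring A] [Algebra k A] (ha : HopfAction k H A) : Prop :=
  InnerFaithfulWith k H (Coalgebra.comul (R := k)) (Coalgebra.counit (R := k))
    (HopfAlgebra.antipode (R := k)) A ha.act

/-- The set of invariants of an action. -/
def ModAlgAction.invariants {k : Type} [CommRing k] {H : Type} [Ring H] [Module k H]
    {comul : H →ₗ[k] H ⊗[k] H} {counit : H →ₗ[k] k}
    {A : Type} [Ring A] [Algebra k A] (ha : ModAlgAction k H comul counit A) : Set A :=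
  {a : A | ∀ h : H, ha.act h a = counit h • a}

/-- The kernel of an action, as a subspace of `H`. -/
noncomputable def ModAlgAction.actionKernel {k : Type} [CommRing k] {H : Type} [Ring H]
    [Module k H] {comul : H →ₗ[k] H ⊗[k] H} {counit : H →ₗ[k] k}
    {A : Type} [Ring A] [Algebra k A] (ha : ModAlgAction k H comul counit A) :
    Submodule k H :=
  ⨅ a : A, LinearMap.ker (ha.act.flip a)

noncomputable def bcComul (R S H : Type) [CommRing R] [CommRing S] [Algebra R S]
    [AddCommGroup H] [Module R H] (comul : H →ₗ[R] H ⊗[R] H) :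
    S ⊗[R] H →ₗ[S] (S ⊗[R] H) ⊗[S] (S ⊗[R] H) :=
  (TensorProduct.AlgebraTensorModule.distribBaseChange R S H H).toLinearMap ∘ₗ
    comul.baseChange S

noncomputable def bcCounit (R S H : Type) [CommRing R] [CommRing S] [Algebra R S]
    [AddCommGroup H] [Module R H] (counit : H →ₗ[R] R) :
    S ⊗[R] H →ₗ[S] S :=
  (TensorProduct.AlgebraTensorModule.rid R S S).toLinearMap ∘ₗ counit.baseChange S


/-- The natural map `M ⊗[R] M → H ⊗[k] H` induced by an `R`-linear map `ι : M → H`,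
where `R → k`. -/
noncomputable def ordTensor (R k : Type) [CommRing R] [CommRing k] [Algebra R k]
    (H : Type) [AddCommGroup H] [Module k H] [Module R H] [IsScalarTower R k H]
    (M : Type) [AddCommGroup M] [Module R M] (ι : M →ₗ[R] H) :
    M ⊗[R] M →ₗ[R] H ⊗[k] H :=
  TensorProduct.lift (LinearMap.mk₂ R (fun x y => ι x ⊗ₜ[k] ι y)
    (fun x x' y => by simp [map_add, TensorProduct.add_tmul])
    (fun r x y => by
      show ι (r • x) ⊗ₜ[k] ι y = r • (ι x ⊗ₜ[k] ι y)
      rw [map_smul, ← algebraMap_smul k r (ι x), TensorProduct.smul_tmul',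
        algebraMap_smul])
    (fun x y y' => by simp [map_add, TensorProduct.tmul_add])
    (fun r x y => by
      show ι x ⊗ₜ[k] ι (r • y) = r • (ι x ⊗ₜ[k] ι y)
      rw [map_smul, ← algebraMap_smul k r (ι y), TensorProduct.tmul_smul,
        algebraMap_smul]))

/-!
The matrix coefficients `h ↦ l (h ⬝ a)` of the action turn out to commute in the dual of `H`, and
this forces `H` to be a group algebra.

To see that they commute, it is enough to do so modulo infinitely many primes `p`, after
specialising the base ring to discrete valuation rings with uniformiser `p > dim H`. Modulo `p ^ s`
the Weyl algebra is finite over its center, and it has no proper central-saturated subring of index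
less than `p`. Hence the elements which commute with a given functional form everything as soon as
they contain the elements central modulo `p ^ s`. The action preserves those central elements, whose
reductions modulo `p` are polynomials in the `p ^ s`-th powers of the generators; for `s` large
these powers are independent of the monomials occurring in the orbit of a fixed element, and reading
off coefficients in `h ⬝ (w a) = h ⬝ (a w)` for central `w` gives the commutation.

By inner faithfulness the matrix coefficients generate the dual of `H`, which is then commutative,
and by Cartier's theorem the group-like elements form a basis of `H`. Let `K` be a field over `R` in
which `dim H ≠ 0`, and choose a place of `k` extending the point `R → K`. Evaluation at the
group-like elements gives `dim H` characters of the dual of `H_R` which are integral at this place.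
An element of finite order prime to the residue characteristic which acts trivially modulo the
maximal ideal acts trivially, so the reduced characters remain distinct on the subalgebra of matrix
coefficients of the `R`-form. By Dedekind's independence of characters that subalgebra separates the
points of `K ⊗ H_R`, and a Hopf ideal annihilating the Weyl algebra over `K` pairs to zero with it.
-/

/-! ### The Weyl algebra: presentation and normal ordering -/

namespace WeylAlgebra

section Presentation

variable {R : Type} [CommRing R] {n : ℕ}

/-- The generators `xᵢ = gen (.inl i)` and `yᵢ = gen (.inr i)` of the Weyl algebra as one family. -/
noncomputable def gen : Fin n ⊕ Fin n → WeylAlgebra R n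
  | .inl i => X i
  | .inr i => Y i

/-- The presentation of the Weyl algebra as a quotient of the free algebra. -/
noncomputable def ofFree (R : Type) [CommRing R] (n : ℕ) :
    FreeAlgebra R (Fin n ⊕ Fin n) →ₐ[R] WeylAlgebra R n :=
  RingQuot.mkAlgHom R (WeylRel R n)

lemma ofFree_surjective : Function.Surjective (ofFree R n) :=
  RingQuot.mkAlgHom_surjective R (WeylRel R n)

@[simp]
lemma ofFree_ι (v : Fin n ⊕ Fin n) : ofFree R n (FreeAlgebra.ι R v) = gen v := by
  have h := RingHom.congr_fun (RingQuot.mkAlgHom_coe R (WeylRel R n)) (FreeAlgebra.ι R v)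
  cases v <;> exact h

lemma ofFree_eq_of_rel {a b : FreeAlgebra R (Fin n ⊕ Fin n)} (h : WeylRel R n a b) :
    ofFree R n a = ofFree R n b :=
  RingQuot.mkAlgHom_rel R h

lemma X_mul_X_comm (i j : Fin n) : (X i * X j : WeylAlgebra R n) = X j * X i := by
  simpa [gen] using ofFree_eq_of_rel (WeylRel.xx (R := R) i j)

lemma Y_mul_Y_comm (i j : Fin n) : (Y i * Y j : WeylAlgebra R n) = Y j * Y i := by
  simpa [gen] using ofFree_eq_of_rel (WeylRel.yy (R := R) i j)

lemma Y_mul_X (i j : Fin n) :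
    (Y i * X j : WeylAlgebra R n) = X j * Y i + if i = j then 1 else 0 := by
  simpa [gen, apply_ite (ofFree R n)] using ofFree_eq_of_rel (WeylRel.yx (R := R) i j)

/-- The universal property of the Weyl algebra: elements satisfying the Weyl relations define an
algebra homomorphism. -/
noncomputable def lift {B : Type*} [Ring B] [Algebra R B] (x y : Fin n → B)
    (hxx : ∀ i j, x i * x j = x j * x i) (hyy : ∀ i j, y i * y j = y j * y i)
    (hyx : ∀ i j, y i * x j = x j * y i + if i = j then 1 else 0) : WeylAlgebra R n →ₐ[R] B :=
  RingQuot.liftAlgHom R (s := WeylRel R n) ⟨FreeAlgebra.lift R (Sum.elim x y), by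
    rintro _ _ (⟨i, j⟩ | ⟨i, j⟩ | ⟨i, j⟩)
    · simpa using hxx i j
    · simpa using hyy i j
    · simp only [map_mul, FreeAlgebra.lift_ι_apply, Sum.elim_inl, Sum.elim_inr, map_add, hyx i j]
      split_ifs <;> simp⟩

section Lift

variable {B : Type*} [Ring B] [Algebra R B] (x y : Fin n → B)
  (hxx : ∀ i j, x i * x j = x j * x i) (hyy : ∀ i j, y i * y j = y j * y i)
  (hyx : ∀ i j, y i * x j = x j * y i + if i = j then 1 else 0)

lemma lift_gen (v : Fin n ⊕ Fin n) : lift (R := R) x y hxx hyy hyx (gen v) = Sum.elim x y v := by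
  rw [← ofFree_ι]
  exact (RingQuot.liftAlgHom_mkAlgHom_apply R _ _ _).trans (FreeAlgebra.lift_ι_apply _ _)

@[simp]
lemma lift_X (i : Fin n) : lift (R := R) x y hxx hyy hyx (X i) = x i :=
  lift_gen x y hxx hyy hyx (.inl i)

@[simp]
lemma lift_Y (i : Fin n) : lift (R := R) x y hxx hyy hyx (Y i) = y i :=
  lift_gen x y hxx hyy hyx (.inr i)

end Lift

lemma adjoin_range_gen : Algebra.adjoin R (Set.range (gen (R := R) (n := n))) = ⊤ := by
  have h := congrArg (Subalgebra.map (ofFree R n)) (FreeAlgebra.adjoin_range_ι R (Fin n ⊕ Fin n))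
  rwa [AlgHom.map_adjoin, ← Set.range_comp, Algebra.map_top,
    (AlgHom.range_eq_top _).2 ofFree_surjective,
    show ofFree R n ∘ FreeAlgebra.ι R = gen from funext ofFree_ι] at h

@[elab_as_elim]
lemma induction_mul_left {P : WeylAlgebra R n → Prop} (one : P 1)
    (X_mul : ∀ i a, P a → P (X i * a)) (Y_mul : ∀ i a, P a → P (Y i * a))
    (add : ∀ a b, P a → P b → P (a + b)) (smul : ∀ (r : R) a, P a → P (r • a))
    (a : WeylAlgebra R n) : P a := by
  suffices ∀ b, P b → P (a * b) by simpa using this 1 one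
  have ha : a ∈ Algebra.adjoin R (Set.range (gen (R := R) (n := n))) := by
    rw [adjoin_range_gen]
    trivial
  induction ha using Algebra.adjoin_induction with
  | mem x hx =>
    obtain ⟨i | i, rfl⟩ := hx
    exacts [X_mul i, Y_mul i]
  | algebraMap r =>
    intro b hb
    rw [← Algebra.smul_def]
    exact smul r b hb
  | add x y _ _ hx hy =>
    intro b hb
    rw [add_mul]
    exact add _ _ (hx b hb) (hy b hb)
  | mul x y _ _ hx hy =>
    intro b hb
    rw [mul_assoc]
    exact hx _ (hy _ hb)

lemma algHom_ext {B : Type*} [Ring B] [Algebra R B] {f g : WeylAlgebra R n →ₐ[R] B}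
    (hX : ∀ i, f (X i) = g (X i)) (hY : ∀ i, f (Y i) = g (Y i)) : f = g := by
  ext a
  induction a using induction_mul_left with
  | one => simp
  | X_mul i a h => simp [hX, h]
  | Y_mul i a h => simp [hY, h]
  | add a b h h' => simp [h, h']
  | smul s a h => simp [h]

lemma commute_of_commute_gen {w : WeylAlgebra R n} (hX : ∀ i, Commute (X i) w)
    (hY : ∀ i, Commute (Y i) w) (a : WeylAlgebra R n) : Commute a w := by
  induction a using induction_mul_left with
  | one => exact Commute.one_left _
  | X_mul i a h => exact (hX i).mul_left h
  | Y_mul i a h => exact (hY i).mul_left h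
  | add a b h h' => exact h.add_left h'
  | smul s a h => exact h.smul_left s

end Presentation

section Symbol

open MvPolynomial (pderiv pderiv_X)

variable {R : Type} [CommRing R] {n : ℕ}

lemma pderiv_pderiv_comm {σ : Type*} (u v : σ) (P : MvPolynomial σ R) :
    pderiv u (pderiv v P) = pderiv v (pderiv u P) := by
  classical
  have h : ⁅(pderiv u : Derivation R (MvPolynomial σ R) (MvPolynomial σ R)),
      (pderiv v : Derivation R (MvPolynomial σ R) (MvPolynomial σ R))⁆ = 0 := by
    refine MvPolynomial.derivation_ext fun i => ?_
    rw [Derivation.commutator_apply, pderiv_X, pderiv_X, Pi.single_apply, Pi.single_apply]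
    split_ifs <;> simp
  have hP := DFunLike.congr_fun h P
  rw [Derivation.commutator_apply] at hP
  exact sub_eq_zero.1 hP

/-- Commutative polynomials in symbols `xᵢ`, `yᵢ`: the normally ordered symbols of elements of the
Weyl algebra. -/
abbrev SymbolPoly (R : Type) [CommRing R] (n : ℕ) : Type := MvPolynomial (Fin n ⊕ Fin n) R

/-- Left multiplication in the Weyl algebra transported to normally ordered symbols: `xᵢ` acts by
multiplication and `yᵢ` by multiplication plus `∂/∂xᵢ`. -/
noncomputable def symbolRep : WeylAlgebra R n →ₐ[R] Module.End R (SymbolPoly R n) :=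
  lift (fun i => LinearMap.mulLeft R (MvPolynomial.X (.inl i)))
    (fun i => LinearMap.mulLeft R (MvPolynomial.X (.inr i)) + (pderiv (.inl i)).toLinearMap)
    (fun i j => LinearMap.ext fun P => by
      simp only [Module.End.mul_apply, LinearMap.mulLeft_apply]
      ring)
    (fun i j => LinearMap.ext fun P => by
      simp [Derivation.leibniz, pderiv_X, pderiv_pderiv_comm (Sum.inl i) (Sum.inl j)]
      ring)
    (fun i j => LinearMap.ext fun P => by
      rcases eq_or_ne i j with rfl | h
      · simp
        ring
      · simp [pderiv_X, h, h.symm]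
        ring)

lemma symbolRep_X_apply (i : Fin n) (P : SymbolPoly R n) :
    symbolRep (X i) P = MvPolynomial.X (.inl i) * P := by
  simp [symbolRep]

lemma symbolRep_Y_apply (i : Fin n) (P : SymbolPoly R n) :
    symbolRep (Y i) P = MvPolynomial.X (.inr i) * P + pderiv (.inl i) P := by
  simp [symbolRep]

lemma symbolRep_y_mul (i : Fin n) (a : WeylAlgebra R n) (P : SymbolPoly R n) :
    symbolRep a (MvPolynomial.X (.inr i) * P) = MvPolynomial.X (.inr i) * symbolRep a P := by
  induction a using induction_mul_left generalizing P with
  | one => simp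
  | X_mul j a h => simp only [map_mul, Module.End.mul_apply, symbolRep_X_apply, h]; ring
  | Y_mul j a h =>
    simp only [map_mul, Module.End.mul_apply, symbolRep_Y_apply, h, Derivation.leibniz,
      smul_eq_mul, pderiv_X, ne_eq, reduceCtorEq, not_false_eq_true, Pi.single_eq_of_ne, mul_zero,
      add_zero]
    ring
  | add a b h h' => simp only [map_add, LinearMap.add_apply, h, h', mul_add]
  | smul s a h => simp [h]

lemma symbolRep_x_mul_add_pderiv (i : Fin n) (a : WeylAlgebra R n) (P : SymbolPoly R n) :
    symbolRep a (MvPolynomial.X (.inl i) * P + pderiv (.inr i) P) =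
      MvPolynomial.X (.inl i) * symbolRep a P + pderiv (.inr i) (symbolRep a P) := by
  induction a using induction_mul_left generalizing P with
  | one => simp
  | X_mul j a h =>
    simp only [map_mul, Module.End.mul_apply, symbolRep_X_apply, h, Derivation.leibniz,
      smul_eq_mul, pderiv_X, ne_eq, reduceCtorEq, not_false_eq_true, Pi.single_eq_of_ne, mul_zero,
      add_zero]
    ring
  | Y_mul j a h =>
    rw [map_mul, Module.End.mul_apply, h, Module.End.mul_apply, symbolRep_Y_apply,
      symbolRep_Y_apply]
    simp only [Derivation.leibniz, smul_eq_mul, pderiv_X, map_add,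
      pderiv_pderiv_comm (Sum.inl j) (Sum.inr i)]
    rcases eq_or_ne i j with rfl | hij
    · simp
      ring
    · simp [hij, hij.symm]
      ring
  | add a b h h' =>
    rw [map_add symbolRep, LinearMap.add_apply, h, h', LinearMap.add_apply, map_add]
    ring
  | smul s a h => simp [h, smul_add]

/-- The operators of left multiplication by `xᵢ` and right multiplication by `yᵢ`. They commute, so
polynomials in them produce the normally ordered elements. -/
noncomputable def orderedMul : Fin n ⊕ Fin n → Module.End R (WeylAlgebra R n)
  | .inl i => LinearMap.mulLeft R (X i)
  | .inr i => LinearMap.mulRight R (Y i)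

lemma orderedMul_comm (u v : Fin n ⊕ Fin n) :
    orderedMul (R := R) u * orderedMul v = orderedMul v * orderedMul u := by
  ext a
  rcases u with i | i <;> rcases v with j | j
  · simp only [orderedMul, Module.End.mul_apply, LinearMap.mulLeft_apply, ← mul_assoc,
      X_mul_X_comm]
  · simp [orderedMul, mul_assoc]
  · simp [orderedMul, mul_assoc]
  · simp [orderedMul, mul_assoc, Y_mul_Y_comm]

open scoped IsMulCommutative in
/-- Normal ordering: the linear map sending a monomial `x^α y^β` to the same product, with all
`y`s on the right, in the Weyl algebra. -/
noncomputable def normalOrder : SymbolPoly R n →ₗ[R] WeylAlgebra R n :=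
  letI B := Algebra.adjoin R (Set.range (orderedMul (R := R) (n := n)))
  haveI : IsMulCommutative B := Algebra.isMulCommutative_adjoin R (by
    rintro _ ⟨u, rfl⟩ _ ⟨v, rfl⟩
    exact orderedMul_comm u v)
  LinearMap.applyₗ 1 ∘ₗ B.val.toLinearMap ∘ₗ
    (MvPolynomial.aeval fun v => (⟨orderedMul v, Algebra.subset_adjoin ⟨v, rfl⟩⟩ : B)).toLinearMap

open scoped IsMulCommutative in
@[simp]
lemma normalOrder_one : normalOrder (1 : SymbolPoly R n) = 1 := by
  simp [normalOrder]

open scoped IsMulCommutative in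
lemma normalOrder_X_mul (v : Fin n ⊕ Fin n) (P : SymbolPoly R n) :
    normalOrder (MvPolynomial.X v * P) = orderedMul v (normalOrder P) := by
  simp only [normalOrder, LinearMap.comp_apply, AlgHom.toLinearMap_apply, map_mul,
    MvPolynomial.aeval_X]
  rfl

lemma normalOrder_x_mul (i : Fin n) (P : SymbolPoly R n) :
    normalOrder (MvPolynomial.X (.inl i) * P) = X i * normalOrder P :=
  normalOrder_X_mul _ P

lemma normalOrder_y_mul (i : Fin n) (P : SymbolPoly R n) :
    normalOrder (MvPolynomial.X (.inr i) * P) = normalOrder P * Y i :=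
  normalOrder_X_mul _ P

lemma Y_mul_normalOrder (i : Fin n) (P : SymbolPoly R n) :
    Y i * normalOrder P =
      normalOrder (MvPolynomial.X (.inr i) * P + pderiv (.inl i) P) := by
  induction P using MvPolynomial.induction_on with
  | C r =>
    have h := normalOrder_y_mul (R := R) i 1
    simp only [mul_one, normalOrder_one, one_mul] at h
    simp [MvPolynomial.C_eq_smul_one, h]
  | add P Q hP hQ => simp only [map_add, mul_add, hP, hQ]; abel
  | mul_X P v hP =>
    rw [mul_comm P]
    rcases v with j | j
    · rw [normalOrder_x_mul, ← mul_assoc, Y_mul_X, add_mul, mul_assoc, hP]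
      simp only [map_add, mul_add, Derivation.leibniz, pderiv_X, smul_eq_mul, normalOrder_x_mul,
        normalOrder_y_mul]
      rcases eq_or_ne i j with rfl | h
      · simp [mul_assoc]
        abel
      · simp [h, mul_assoc, h.symm]
    · rw [normalOrder_y_mul, ← mul_assoc, hP]
      simp [add_mul, mul_assoc, Y_mul_Y_comm j i, normalOrder_y_mul]

lemma normalOrder_surjective : Function.Surjective (normalOrder (R := R) (n := n)) := by
  intro a
  induction a using induction_mul_left with
  | one => exact ⟨1, normalOrder_one⟩
  | X_mul i a h =>
    obtain ⟨P, rfl⟩ := h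
    exact ⟨_, normalOrder_x_mul i P⟩
  | Y_mul i a h =>
    obtain ⟨P, rfl⟩ := h
    exact ⟨_, (Y_mul_normalOrder i P).symm⟩
  | add a b h h' =>
    obtain ⟨P, rfl⟩ := h
    obtain ⟨Q, rfl⟩ := h'
    exact ⟨P + Q, map_add ..⟩
  | smul s a h =>
    obtain ⟨P, rfl⟩ := h
    exact ⟨s • P, map_smul ..⟩

lemma symbolRep_normalOrder_one (P : SymbolPoly R n) : symbolRep (normalOrder P) 1 = P := by
  induction P using MvPolynomial.induction_on with
  | C r => simp [MvPolynomial.C_eq_smul_one]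
  | add P Q hP hQ => simp [hP, hQ]
  | mul_X P v hP =>
    rw [mul_comm P]
    rcases v with j | j
    · simp [normalOrder_x_mul, symbolRep_X_apply, hP]
    · have hY : symbolRep (Y j) 1 = (MvPolynomial.X (.inr j) * 1 : SymbolPoly R n) := by
        simp [symbolRep_Y_apply]
      rw [normalOrder_y_mul, map_mul, Module.End.mul_apply, hY, symbolRep_y_mul, hP]

/-- The Poincaré–Birkhoff–Witt isomorphism: every element of the Weyl algebra has a unique
normally ordered symbol. -/
noncomputable def symbol (R : Type) [CommRing R] (n : ℕ) : WeylAlgebra R n ≃ₗ[R] SymbolPoly R n :=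
  { LinearMap.applyₗ 1 ∘ₗ (symbolRep (R := R) (n := n)).toLinearMap with
    invFun := normalOrder
    left_inv := fun a => by
      obtain ⟨P, rfl⟩ := normalOrder_surjective a
      exact congrArg normalOrder (symbolRep_normalOrder_one P)
    right_inv := symbolRep_normalOrder_one }

lemma symbol_apply (a : WeylAlgebra R n) : symbol R n a = symbolRep a 1 := rfl

@[simp]
lemma symbol_one : symbol R n 1 = 1 := by
  simp [symbol_apply]

lemma symbol_X_mul (i : Fin n) (a : WeylAlgebra R n) :
    symbol R n (X i * a) = MvPolynomial.X (.inl i) * symbol R n a := by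
  simp [symbol_apply, symbolRep_X_apply]

lemma symbol_Y_mul (i : Fin n) (a : WeylAlgebra R n) :
    symbol R n (Y i * a) =
      MvPolynomial.X (.inr i) * symbol R n a + pderiv (.inl i) (symbol R n a) := by
  simp [symbol_apply, symbolRep_Y_apply]

lemma symbol_mul_Y (i : Fin n) (a : WeylAlgebra R n) :
    symbol R n (a * Y i) = MvPolynomial.X (.inr i) * symbol R n a := by
  simpa [symbol_apply, symbolRep_Y_apply] using symbolRep_y_mul i a 1

lemma symbol_mul_X (i : Fin n) (a : WeylAlgebra R n) :
    symbol R n (a * X i) =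
      MvPolynomial.X (.inl i) * symbol R n a + pderiv (.inr i) (symbol R n a) := by
  simpa [symbol_apply, symbolRep_X_apply] using symbolRep_x_mul_add_pderiv i a 1

/-- The coefficient of the normally ordered monomial with exponent `m`. -/
noncomputable def coeff (m : (Fin n ⊕ Fin n) →₀ ℕ) : WeylAlgebra R n →ₗ[R] R :=
  MvPolynomial.lcoeff R m ∘ₗ (symbol R n).toLinearMap

lemma coeff_apply (m : (Fin n ⊕ Fin n) →₀ ℕ) (a : WeylAlgebra R n) :
    coeff m a = MvPolynomial.coeff m (symbol R n a) := rfl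

lemma ext_coeff {a b : WeylAlgebra R n} (h : ∀ m, coeff m a = coeff m b) : a = b :=
  (symbol R n).injective (MvPolynomial.ext _ _ h)

/-- The basis of normally ordered monomials `x^α y^β`. -/
noncomputable def monomialBasis (R : Type) [CommRing R] (n : ℕ) :
    Module.Basis ((Fin n ⊕ Fin n) →₀ ℕ) R (WeylAlgebra R n) :=
  (MvPolynomial.basisMonomials _ R).map (symbol R n).symm

lemma monomialBasis_coord (m : (Fin n ⊕ Fin n) →₀ ℕ) : (monomialBasis R n).coord m = coeff m :=
  rfl

end Symbol

section BaseChange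

variable (R : Type) [CommRing R] (S : Type) [CommRing S] [Algebra R S] (n : ℕ)

instance : IsScalarTower R S (WeylAlgebra S n) :=
  inferInstanceAs (IsScalarTower R S (RingQuot (WeylRel S n)))

/-- The canonical map `A_n(R) → A_n(S)` along a ring homomorphism `R → S`. -/
noncomputable def baseChange : WeylAlgebra R n →ₐ[R] WeylAlgebra S n :=
  lift X Y X_mul_X_comm Y_mul_Y_comm Y_mul_X

@[simp]
lemma baseChange_X (i : Fin n) : baseChange R S n (X i) = X i := lift_X _ _ _ _ _ i

@[simp]
lemma baseChange_Y (i : Fin n) : baseChange R S n (Y i) = Y i := lift_Y _ _ _ _ _ i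

lemma symbol_baseChange (a : WeylAlgebra R n) :
    symbol S n (baseChange R S n a) = MvPolynomial.map (algebraMap R S) (symbol R n a) := by
  induction a using induction_mul_left with
  | one => simp
  | X_mul i a h => simp [symbol_X_mul, h]
  | Y_mul i a h => simp [symbol_Y_mul, h, MvPolynomial.pderiv_map]
  | add a b h h' => simp [h, h']
  | smul r a h =>
    rw [map_smul, ← algebraMap_smul S r, map_smul, h, map_smul, MvPolynomial.smul_eq_C_mul,
      MvPolynomial.smul_eq_C_mul, map_mul, MvPolynomial.map_C]

lemma coeff_baseChange (m : (Fin n ⊕ Fin n) →₀ ℕ) (a : WeylAlgebra R n) :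
    coeff m (baseChange R S n a) = algebraMap R S (coeff m a) := by
  simp [coeff_apply, symbol_baseChange, MvPolynomial.coeff_map]

lemma eq_baseChange (j : WeylAlgebra R n →+* WeylAlgebra S n) (hX : ∀ i, j (X i) = X i)
    (hY : ∀ i, j (Y i) = Y i) (hj : ∀ r : R, j (algebraMap R _ r) = algebraMap R _ r)
    (a : WeylAlgebra R n) : j a = baseChange R S n a := by
  let j' : WeylAlgebra R n →ₐ[R] WeylAlgebra S n := { j with commutes' := hj }
  have h : j' = baseChange R S n :=
    algHom_ext (fun i => (hX i).trans (baseChange_X R S n i).symm)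
      (fun i => (hY i).trans (baseChange_Y R S n i).symm)
  exact DFunLike.congr_fun h a

lemma isBaseChange_baseChange : IsBaseChange S (baseChange R S n).toLinearMap :=
  .of_equiv ((symbol R n).baseChange R S _ _ ≪≫ₗ
      (MvPolynomial.algebraTensorAlgEquiv R S).toLinearEquiv ≪≫ₗ (symbol S n).symm) fun a => by
    simp [LinearEquiv.symm_apply_eq, symbol_baseChange, MvPolynomial.algebraTensorAlgEquiv_tmul]

end BaseChange

end WeylAlgebra

/-! ### Module algebras and the convolution algebra of endomorphisms -/

open Coalgebra WithConv

namespace HopfAction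

section Extend

variable {R : Type} [CommRing R] {H : Type} [Ring H] [Bialgebra R H]
  {A : Type} [Ring A] [Algebra R A]

lemma lift_mul_comul_eq_sum (act : H →ₗ[R] A →ₗ[R] A) (h : H) (a b : A) :
    TensorProduct.lift (((LinearMap.mul R A).comp (act.flip a)).compl₂ (act.flip b))
        (comul (R := R) h) =
      ∑ i ∈ (ℛ R h).index, act ((ℛ R h).left i) a * act ((ℛ R h).right i) b := by
  conv_lhs => rw [← (ℛ R h).eq]
  simp

lemma act_mul_eq_sum (ha : HopfAction R H A) (h : H) (a b : A) :
    ha.act h (a * b) =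
      ∑ i ∈ (ℛ R h).index, ha.act ((ℛ R h).left i) a * ha.act ((ℛ R h).right i) b := by
  rw [ha.act_mul, lift_mul_comul_eq_sum]

variable {S : Type} [CommRing S] [Algebra R S] {B : Type} [Ring B] [Algebra R B] [Algebra S B]
  [IsScalarTower R S B] {f : A →ₐ[R] B}

lemma endHom_map (hf : IsBaseChange S f.toLinearMap) (g : Module.End R A) (a : A) :
    hf.endHom g (f a) = f (g a) :=
  hf.endHom_comp_apply g a

/-- The `S`-linear extension of a module algebra structure on `A` to a base change `B` of `A`. -/
noncomputable def extend (ha : HopfAction R H A) (hf : IsBaseChange S f.toLinearMap) :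
    HopfAction R H B where
  act := LinearMap.restrictScalarsₗ R S B B R ∘ₗ hf.endHom ∘ₗ ha.act
  one_act b := by
    induction b using hf.inductionOn with
    | zero => simp
    | add x y hx hy => simp_all
    | smul _ _ h => simp_all
    | tmul a => simp [endHom_map, ha.one_act]
  mul_act g h b := by
    induction b using hf.inductionOn with
    | zero => simp
    | add x y hx hy => simp_all
    | smul _ _ h => simp_all
    | tmul a => simp [endHom_map, ha.mul_act]
  act_one h := by simpa [ha.act_one] using endHom_map hf (ha.act h) 1
  act_mul h b c := by
    rw [lift_mul_comul_eq_sum]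
    simp only [LinearMap.comp_apply, LinearMap.restrictScalarsₗ_apply,
      LinearMap.restrictScalars_apply]
    induction b using hf.inductionOn with
    | zero => simp
    | add x y hx hy => simp [add_mul, hx, hy, Finset.sum_add_distrib]
    | smul s x hx => simp [hx, Finset.smul_sum]
    | tmul a =>
      induction c using hf.inductionOn with
      | zero => simp
      | add x y hx hy => simp only [mul_add, map_add, hx, hy, Finset.sum_add_distrib]
      | smul s x hx => simp only [mul_smul_comm, map_smul, hx, Finset.smul_sum]
      | tmul b =>
        simp only [AlgHom.toLinearMap_apply, ← map_mul, endHom_map, ← map_sum, act_mul_eq_sum]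

lemma extend_act_map (ha : HopfAction R H A) (hf : IsBaseChange S f.toLinearMap) (h : H) (a : A) :
    (ha.extend hf).act h (f a) = f (ha.act h a) :=
  endHom_map hf _ a

end Extend

end HopfAction

/-- The convolution algebra `Hom(H, End A)`. -/
abbrev ConvEnd (R H A : Type) [CommRing R] [Ring H] [HopfAlgebra R H] [Ring A] [Algebra R A] :=
  WithConv (H →ₗ[R] Module.End R A)

section Convolution

variable {R : Type} [CommRing R] {H : Type} [Ring H] [HopfAlgebra R H]
  {A : Type} [Ring A] [Algebra R A]

namespace ConvEnd

lemma ext {f g : ConvEnd R H A} (hfg : ∀ h a, f h a = g h a) : f = g :=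
  WithConv.ofConv_injective (LinearMap.ext₂ hfg)

lemma mul_apply (f g : ConvEnd R H A) (h : H) (a : A) :
    (f * g) h a = ∑ i ∈ (ℛ R h).index, f ((ℛ R h).left i) (g ((ℛ R h).right i) a) := by
  simp [(ℛ R h).convMul_apply, LinearMap.sum_apply]

lemma one_apply (h : H) (a : A) : (1 : ConvEnd R H A) h a = counit (R := R) h • a := by
  simp [LinearMap.convOne_apply, Module.algebraMap_end_apply]

lemma sum_counit_right_smul (h : H) :
    ∑ i ∈ (ℛ R h).index, counit (R := R) ((ℛ R h).right i) • (ℛ R h).left i = h := by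
  simpa only [map_sum, TensorProduct.rid_tmul, one_smul] using
    congrArg (TensorProduct.rid R H) (sum_tmul_counit_eq (R := R) (ℛ R h))

variable (R H) in
/-- The embedding of `A` into `Hom(H, End A)` sending `c` to `h ↦ (a ↦ ε(h) c a)`. -/
noncomputable def leftMul : A →+* ConvEnd R H A where
  toFun c := toConv (LinearMap.toSpanSingleton R _ (LinearMap.mulLeft R c) ∘ₗ counit)
  map_one' := ext fun h a => by simp
  map_zero' := ext fun h a => by simp
  map_add' c d := ext fun h a => by simp [add_mul]
  map_mul' c d := ext fun h a => by
    conv_lhs => rw [← sum_counit_smul (R := R) (ℛ R h)]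
    rw [mul_apply]
    simp [smul_smul, mul_comm]

lemma leftMul_apply (c : A) (h : H) (a : A) :
    leftMul R H c h a = counit (R := R) h • (c * a) := rfl

lemma leftMul_mul_apply (c : A) (f : ConvEnd R H A) (h : H) (a : A) :
    (leftMul R H c * f) h a = c * f h a := by
  conv_rhs => rw [← sum_counit_smul (R := R) (ℛ R h)]
  rw [mul_apply]
  simp [leftMul_apply, LinearMap.sum_apply, Finset.mul_sum]

lemma mul_leftMul_apply (f : ConvEnd R H A) (c : A) (h : H) (a : A) :
    (f * leftMul R H c) h a = f h (c * a) := by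
  conv_rhs => rw [← sum_counit_right_smul (R := R) h]
  rw [mul_apply]
  simp [leftMul_apply, LinearMap.sum_apply]

end ConvEnd

namespace HopfAction

open ConvEnd

variable (ha : HopfAction R H A)

/-- The action map, a unit of `Hom(H, End A)` whose inverse is the action of the antipode. -/
noncomputable def convUnit : (ConvEnd R H A)ˣ where
  val := toConv ha.act
  inv := toConv (ha.act ∘ₗ HopfAlgebra.antipode R)
  val_inv := ext fun h a => by
    simp only [mul_apply, one_apply, LinearMap.comp_apply, ← ha.mul_act]
    rw [← LinearMap.sum_apply, ← map_sum, HopfAlgebra.sum_mul_antipode_eq_smul]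
    simp [ha.one_act]
  inv_val := ext fun h a => by
    simp only [mul_apply, one_apply, LinearMap.comp_apply, ← ha.mul_act]
    rw [← LinearMap.sum_apply, ← map_sum, HopfAlgebra.sum_antipode_mul_eq_smul]
    simp [ha.one_act]

lemma convUnit_apply (h : H) (a : A) : (ha.convUnit : ConvEnd R H A) h a = ha.act h a := rfl

lemma convUnit_inv_apply (h : H) (a : A) :
    (↑ha.convUnit⁻¹ : ConvEnd R H A) h a = ha.act (HopfAlgebra.antipode R h) a := rfl

/-- The coaction-like ring homomorphism sending `a` to `h ↦ (b ↦ (h ⬝ a) b)`. -/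
noncomputable def actLeftMul : A →+* ConvEnd R H A where
  toFun a := toConv (LinearMap.mul R A ∘ₗ ha.act.flip a)
  map_one' := ext fun h b => by simp [ha.act_one, Algebra.smul_def]
  map_zero' := ext fun h b => by simp
  map_add' a b := ext fun h c => by simp
  map_mul' a b := ext fun h c => by
    rw [mul_apply]
    simp [act_mul_eq_sum, mul_assoc]

lemma actLeftMul_apply (a : A) (h : H) (b : A) : ha.actLeftMul a h b = ha.act h a * b := rfl

lemma actLeftMul_mul_convUnit (a : A) :
    ha.actLeftMul a * (ha.convUnit : ConvEnd R H A) = ha.convUnit * leftMul R H a :=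
  ext fun h b => by
    rw [mul_leftMul_apply, mul_apply, convUnit_apply, act_mul_eq_sum]; rfl

end HopfAction

end Convolution

/-! ### Hopf actions on rings with a large center modulo powers of `p` -/

section CentralMod

variable {A : Type*} [Ring A]

lemma natCast_dvd_mul_left {N : ℕ} {x : A} (h : (N : A) ∣ x) (y : A) : (N : A) ∣ y * x := by
  obtain ⟨z, rfl⟩ := h
  exact ⟨y * z, (Nat.cast_commute N y).symm.left_comm z⟩

lemma natCast_dvd_sub_comm {N : ℕ} {x y : A} : (N : A) ∣ x - y ↔ (N : A) ∣ y - x := by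
  rw [← dvd_neg, neg_sub]

lemma natCast_dvd_mul_pow_sub {N : ℕ} {c t : A} (h : (N : A) ∣ c * t - t * c) (j : ℕ) :
    (N : A) ∣ c * t ^ j - t ^ j * c := by
  induction j with
  | zero => simp
  | succ j ih =>
    have : c * t ^ (j + 1) - t ^ (j + 1) * c =
        (c * t ^ j - t ^ j * c) * t + t ^ j * (c * t - t * c) := by
      rw [pow_succ]; noncomm_ring
    exact this ▸ dvd_add (ih.mul_right _) (natCast_dvd_mul_left h _)

/-- `w` is central in `A` modulo the integer `N`. -/
def CentralMod (N : ℕ) (w : A) : Prop := ∀ x, (N : A) ∣ w * x - x * w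

lemma CentralMod.of_dvd {M N : ℕ} {w : A} (hw : CentralMod N w) (hMN : M ∣ N) :
    CentralMod M w :=
  fun x => (Nat.cast_dvd_cast hMN).trans (hw x)

-- Modulo `p ^ (m + 1)`, `t` commutes with `[t, x]`, so `[t ^ p, x] = p t ^ (p - 1) [t, x]`.
lemma CentralMod.pow_self {p m : ℕ} (hp : p ≠ 0) (hm : 1 ≤ m) {t : A}
    (ht : CentralMod (p ^ m) t) : CentralMod (p ^ (m + 1)) (t ^ p) := by
  intro x
  obtain ⟨y, hy⟩ := ht x
  set c := t * x - x * t
  have commutator_dvd : ((p ^ (m + 1) : ℕ) : A) ∣ c * t - t * c := by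
    obtain ⟨z, hz⟩ := natCast_dvd_sub_comm.1 (ht.of_dvd (dvd_pow_self p (by lia)) y)
    refine ⟨z, ?_⟩
    rw [hy, ← (Nat.cast_commute (p ^ m) t).left_comm, mul_assoc, ← mul_sub, hz, ← mul_assoc,
      ← Nat.cast_mul, pow_succ]
  have commutator_pow (i : ℕ) : ((p ^ (m + 1) : ℕ) : A) ∣
      t ^ (i + 1) * x - x * t ^ (i + 1) - ((i + 1 : ℕ) : A) * (t ^ i * c) := by
    induction i with
    | zero => simp [c]
    | succ i ih =>
      have : t ^ (i + 2) * x - x * t ^ (i + 2) - ((i + 2 : ℕ) : A) * (t ^ (i + 1) * c) =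
          t * (t ^ (i + 1) * x - x * t ^ (i + 1) - ((i + 1 : ℕ) : A) * (t ^ i * c)) +
            (c * t ^ (i + 1) - t ^ (i + 1) * c) := by
        rw [mul_sub t, (Nat.cast_commute (i + 1) t).symm.left_comm]
        simp only [c, pow_succ' t, Nat.cast_add, Nat.cast_one, Nat.cast_ofNat]
        noncomm_ring
      exact this ▸ dvd_add (natCast_dvd_mul_left ih _) (natCast_dvd_mul_pow_sub commutator_dvd _)
  obtain ⟨q, rfl⟩ := Nat.exists_eq_succ_of_ne_zero hp
  refine (dvd_sub_left ⟨t ^ q * y, ?_⟩).1 (commutator_pow q)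
  rw [hy, ← (Nat.cast_commute _ (t ^ q)).left_comm, ← mul_assoc, ← Nat.cast_mul, ← pow_succ']

end CentralMod

/-- The properties of the Weyl algebra over an unramified `p`-adic base which govern its Hopf
actions: `p` is a regular, separated, completely prime element of `A`; modulo `p`, every nonzero
element has a nonzero central multiple; and a subring of `A / p`, saturated with respect to the
reductions of the elements central modulo `p ^ s` and containing them, has index `1` if its index
is less than `p`. -/
structure IsWeylLike (p : ℕ) (A : Type) [Ring A] : Prop where
  eq_zero_of_mul_eq_zero : ∀ a : A, (p : A) * a = 0 → a = 0
  dvd_or_dvd : ∀ a b : A, (p : A) ∣ a * b → (p : A) ∣ a ∨ (p : A) ∣ b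
  not_dvd_one : ¬ (p : A) ∣ 1
  exists_not_pow_dvd : ∀ a : A, a ≠ 0 → ∃ m : ℕ, ¬ ((p ^ m : ℕ) : A) ∣ a
  exists_centralMod_mul : ∀ b : A, ¬ (p : A) ∣ b → ∃ a, ¬ (p : A) ∣ a * b ∧ CentralMod p (a * b)
  eq_top_of_dependent : ∀ d < p, ∀ s, 1 ≤ s → ∀ E : Subring A, (∀ a : A, (p : A) * a ∈ E) →
    (∀ w : A, CentralMod (p ^ s) w → w ∈ E) →
    (∀ u x : A, CentralMod (p ^ s) u → ¬ (p : A) ∣ u → u * x ∈ E → x ∈ E) →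
    (∀ v : Fin (d + 1) → A, ∃ c : Fin (d + 1) → A,
      (∀ j, c j ∈ E) ∧ (∃ j, ¬ (p : A) ∣ c j) ∧ ∑ j, c j * v j = 0) → E = ⊤

namespace IsWeylLike

variable {A : Type} [Ring A] {p : ℕ}

lemma ne_zero (hA : IsWeylLike p A) : p ≠ 0 := by
  rintro rfl
  exact hA.not_dvd_one (hA.eq_zero_of_mul_eq_zero 1 (by simp) ▸ dvd_zero _)

lemma eq_zero_of_pow_mul_eq_zero (hA : IsWeylLike p A) (s : ℕ) {a : A}
    (h : ((p ^ s : ℕ) : A) * a = 0) : a = 0 := by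
  induction s with
  | zero => simpa using h
  | succ s ih =>
    refine ih (hA.eq_zero_of_mul_eq_zero _ ?_)
    rwa [← mul_assoc, ← Nat.cast_mul, ← pow_succ']

lemma pow_dvd_of_pow_dvd_mul (hA : IsWeylLike p A) (s : ℕ) {a b : A} (ha : ¬ (p : A) ∣ a)
    (h : ((p ^ s : ℕ) : A) ∣ a * b) : ((p ^ s : ℕ) : A) ∣ b := by
  induction s generalizing b with
  | zero => simp
  | succ s ih =>
    obtain ⟨z, hz⟩ := h
    rw [pow_succ', Nat.cast_mul, mul_assoc] at hz
    obtain ⟨b', rfl⟩ := (hA.dvd_or_dvd a b ⟨_, hz⟩).resolve_left ha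
    have hab : a * b' = ((p ^ s : ℕ) : A) * z := sub_eq_zero.1 (hA.eq_zero_of_mul_eq_zero _ (by
      rw [mul_sub, sub_eq_zero, ← hz, (Nat.cast_commute p a).left_comm]))
    obtain ⟨y, rfl⟩ := ih ⟨z, hab⟩
    exact ⟨y, by rw [pow_succ', Nat.cast_mul, mul_assoc]⟩

lemma exists_eq_pow_mul (hA : IsWeylLike p A) {ι : Type} {c : ι → A} (hc : c ≠ 0) :
    ∃ (m : ℕ) (c' : ι → A), (∀ j, c j = ((p ^ m : ℕ) : A) * c' j) ∧ ∃ j, ¬ (p : A) ∣ c' j := by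
  classical
  obtain ⟨j, hj⟩ := Function.ne_iff.1 hc
  obtain ⟨m, hm⟩ := hA.exists_not_pow_dvd _ hj
  have hex : ∃ m : ℕ, ¬ ∀ j, ((p ^ m : ℕ) : A) ∣ c j := ⟨m, fun h => hm (h j)⟩
  obtain ⟨k, hk⟩ : ∃ k, Nat.find hex = k + 1 :=
    Nat.exists_eq_succ_of_ne_zero fun h0 => Nat.find_spec hex fun j => by rw [h0]; simp
  choose c' hc' using not_not.1 (Nat.find_min hex (m := k) (by lia))
  refine ⟨k, c', hc', not_forall.1 fun hdvd => Nat.find_spec hex fun j => ?_⟩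
  obtain ⟨y, hy⟩ := hdvd j
  exact ⟨y, by rw [hk, hc', hy, ← mul_assoc, ← Nat.cast_mul, pow_succ]⟩

lemma not_dvd_pow (hA : IsWeylLike p A) {a : A} (ha : ¬ (p : A) ∣ a) (i : ℕ) :
    ¬ (p : A) ∣ a ^ i := by
  induction i with
  | zero => simpa using hA.not_dvd_one
  | succ i ih => exact pow_succ a i ▸ fun h => (hA.dvd_or_dvd _ _ h).elim ih ha

lemma exists_centralMod_pow_mul (hA : IsWeylLike p A) {s : ℕ} (hs : 1 ≤ s) {b : A}
    (hb : ¬ (p : A) ∣ b) : ∃ a, ¬ (p : A) ∣ a * b ∧ CentralMod (p ^ s) (a * b) := by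
  induction s, hs using Nat.le_induction with
  | base => simpa using hA.exists_centralMod_mul b hb
  | succ s hs ih =>
    obtain ⟨a, hab, hcentral⟩ := ih
    have e : (a * b) ^ (p - 1) * a * b = (a * b) ^ p := by
      rw [mul_assoc, ← pow_succ, Nat.sub_add_cancel (Nat.pos_of_ne_zero hA.ne_zero)]
    exact ⟨(a * b) ^ (p - 1) * a, e ▸ hA.not_dvd_pow hab p, e ▸ hcentral.pow_self hA.ne_zero hs⟩

lemma exists_left_ore [StrongRankCondition A] (hA : IsWeylLike p A) (e : A) {u : A}
    (hu : ¬ (p : A) ∣ u) : ∃ t t' : A, ¬ (p : A) ∣ t ∧ t * e = t' * u := by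
  obtain ⟨c, hc, hc0⟩ : ∃ c : Fin 2 → A, c 0 * e = c 1 * u ∧ c ≠ 0 := by
    let f : (Fin 2 → A) →ₗ[A] (Fin 1 → A) :=
      LinearMap.pi fun _ => Fintype.linearCombination A ![e, -u]
    have hf : ¬ Function.Injective f := fun hf => by simpa using card_le_of_injective A f hf
    rw [← LinearMap.ker_eq_bot, Submodule.eq_bot_iff] at hf
    push Not at hf
    obtain ⟨c, hc, hc0⟩ := hf
    refine ⟨c, ?_, hc0⟩
    simpa [f, Fintype.linearCombination_apply, Fin.sum_univ_two, ← sub_eq_add_neg, sub_eq_zero]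
      using congrFun hc 0
  obtain ⟨m, c', hc', j, hj⟩ := hA.exists_eq_pow_mul hc0
  have hce : c' 0 * e = c' 1 * u := sub_eq_zero.1 (hA.eq_zero_of_pow_mul_eq_zero m (by
    rw [mul_sub, ← mul_assoc, ← mul_assoc, ← hc', ← hc', hc, sub_self]))
  refine ⟨c' 0, c' 1, fun h0 => hj ?_, hce⟩
  have h1 : (p : A) ∣ c' 1 := (hA.dvd_or_dvd _ u (hce ▸ h0.mul_right e)).resolve_right hu
  fin_cases j <;> assumption

end IsWeylLike

section ReductionOfConvolution

variable {R : Type} [CommRing R] {H : Type} [Ring H] [HopfAlgebra R H]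
  {A : Type} [Ring A] [Algebra R A]

lemma commute_of_commute_mul {Q : Type*} [Monoid Q] {a b c : Q} (ha : IsLeftRegular a)
    (hac : Commute a c) (habc : Commute (a * b) c) : Commute b c :=
  ha (show a * (b * c) = a * (c * b) by rw [← mul_assoc, habc.eq, ← mul_assoc, ← hac.eq, mul_assoc])

lemma natCast_dvd_map {F B : Type*} [Ring B] [FunLike F A B] [AddMonoidHomClass F A B] (f : F)
    {N : ℕ} {a : A} (h : (N : A) ∣ a) : (N : B) ∣ f a := by
  obtain ⟨b, rfl⟩ := h
  exact ⟨f b, by rw [← nsmul_eq_mul, map_nsmul, nsmul_eq_mul]⟩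

/-- The elements of `B` whose image under `g` commutes with `κ`. -/
def commutant {B Q : Type*} [Ring B] [Ring Q] (g : B →+* Q) (κ : Q) : Subring B :=
  (Subring.centralizer {κ}).comap g

lemma mem_commutant {B Q : Type*} [Ring B] [Ring Q] {g : B →+* Q} {κ : Q} {x : B} :
    x ∈ commutant g κ ↔ Commute (g x) κ := by
  simp [commutant, Subring.mem_centralizer_iff, commute_iff_eq, eq_comm]

namespace ConvEnd

noncomputable instance : Semiring (ConvEnd R H A) := Ring.toSemiring

variable (R H A) in
/-- The ideal of those `f` in `Hom(H, End A)` all of whose values `f h a` are divisible by `N`. -/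
def dvdIdeal (N : ℕ) : Ideal (ConvEnd R H A) where
  carrier := {f | ∀ h a, (N : A) ∣ f h a}
  zero_mem' _ _ := dvd_zero _
  add_mem' hf hg h a := dvd_add (hf h a) (hg h a)
  smul_mem' f g hg h a := by
    rw [smul_eq_mul, mul_apply]
    exact Finset.dvd_sum fun i _ => natCast_dvd_map _ (hg _ a)

instance (N : ℕ) : (dvdIdeal R H A N).IsTwoSided where
  mul_mem_of_left g hf h a := by
    rw [mul_apply]
    exact Finset.dvd_sum fun i _ => hf _ _

/-- Reduction modulo `N` of the convolution algebra. -/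
noncomputable abbrev red (N : ℕ) : ConvEnd R H A →+* ConvEnd R H A ⧸ dvdIdeal R H A N :=
  Ideal.Quotient.mk _

lemma red_eq_red_iff {N : ℕ} {f g : ConvEnd R H A} :
    red N f = red N g ↔ ∀ h a, (N : A) ∣ f h a - g h a :=
  Ideal.Quotient.eq

lemma commute_red_iff {N : ℕ} {f g : ConvEnd R H A} :
    Commute (red N f) (red N g) ↔ ∀ h a, (N : A) ∣ (f * g) h a - (g * f) h a := by
  rw [← red_eq_red_iff, map_mul, map_mul, commute_iff_eq]

lemma isLeftRegular_red_iff {N : ℕ} {f : ConvEnd R H A} : IsLeftRegular (red N f) ↔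
    ∀ g : ConvEnd R H A, (∀ h a, (N : A) ∣ (f * g) h a) → ∀ h a, (N : A) ∣ g h a := by
  rw [isLeftRegular_iff_right_eq_zero_of_mul, Ideal.Quotient.mk_surjective.forall]
  simp only [← map_mul, Ideal.Quotient.eq_zero_iff_mem]
  rfl

lemma isLeftRegular_red_leftMul {p : ℕ} (hA : IsWeylLike p A) (s : ℕ) {u : A}
    (hu : ¬ (p : A) ∣ u) : IsLeftRegular (red (p ^ s) (leftMul R H u)) :=
  isLeftRegular_red_iff.2 fun g hg h a =>
    hA.pow_dvd_of_pow_dvd_mul s hu (leftMul_mul_apply u g h a ▸ hg h a)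

end ConvEnd

namespace HopfAction

open ConvEnd Coalgebra

variable (ha : HopfAction R H A)

lemma isLeftRegular_red_actLeftMul {p : ℕ} (hA : IsWeylLike p A) (s : ℕ) {u : A}
    (hu : ¬ (p : A) ∣ u) : IsLeftRegular (red (p ^ s) (ha.actLeftMul u)) := by
  have hunit : IsUnit (red (p ^ s) (ha.convUnit : ConvEnd R H A)) := ha.convUnit.isUnit.map _
  have hinv : IsUnit (red (p ^ s) (↑ha.convUnit⁻¹ : ConvEnd R H A)) := ha.convUnit⁻¹.isUnit.map _
  have conj : ha.actLeftMul u = ha.convUnit * leftMul R H u * ↑ha.convUnit⁻¹ := by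
    rw [← actLeftMul_mul_convUnit, Units.mul_inv_cancel_right]
  rw [conj, map_mul, map_mul]
  exact (hunit.isRegular.left.mul (isLeftRegular_red_leftMul hA s hu)).mul hinv.isRegular.left

lemma commute_red_actLeftMul_leftMul_iff {N : ℕ} {w x : A} :
    Commute (red N (ha.actLeftMul w)) (red N (leftMul R H x)) ↔
      ∀ h, (N : A) ∣ ha.act h w * x - x * ha.act h w := by
  simp only [commute_red_iff, mul_leftMul_apply, leftMul_mul_apply, actLeftMul_apply,
    ← mul_assoc, ← sub_mul]
  exact ⟨fun h x => by simpa using h x 1, fun h x a => (h x).mul_right a⟩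

lemma commute_red_actLeftMul_leftMul {N : ℕ} {u : A} (hu : CentralMod N u) (a : A) :
    Commute (red N (ha.actLeftMul a)) (red N (leftMul R H u)) :=
  ha.commute_red_actLeftMul_leftMul_iff.2 fun _ => natCast_dvd_sub_comm.1 (hu _)

lemma commute_red_actLeftMul {N : ℕ} {u : A} (hu : CentralMod N u) (a : A) :
    Commute (red N (ha.actLeftMul u)) (red N (ha.actLeftMul a)) := by
  simp only [commute_red_iff, ← map_mul, actLeftMul_apply, ← sub_mul, ← map_sub]
  exact fun h b => (natCast_dvd_map _ (hu a)).mul_right b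

/-- `a / u` is an invariant of the action modulo `N`. -/
def InvPair (N : ℕ) (u a : A) : Prop := ∀ h, (N : A) ∣ u * ha.act h a - ha.act h u * a

variable {ha} in
lemma InvPair.of_dvd {M N : ℕ} {u a : A} (hua : ha.InvPair N u a) (hMN : M ∣ N) :
    ha.InvPair M u a :=
  fun h => (Nat.cast_dvd_cast hMN).trans (hua h)

variable {ha} in
lemma InvPair.red_mul_eq {N : ℕ} {u a : A} (hua : ha.InvPair N u a) :
    red N (leftMul R H u) * red N (ha.actLeftMul a) =
      red N (ha.actLeftMul u) * red N (leftMul R H a) := by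
  rw [← map_mul, ← map_mul, red_eq_red_iff]
  intro h b
  rw [leftMul_mul_apply, mul_leftMul_apply, actLeftMul_apply, actLeftMul_apply, ← mul_assoc,
    ← mul_assoc, ← sub_mul]
  exact (hua h).mul_right b

lemma act_mul_eq_sum_act_antipode (h : H) (c b : A) : ha.act h c * b = ∑ i ∈ (ℛ R h).index,
    ha.act ((ℛ R h).left i) (c * ha.act (HopfAlgebra.antipode R ((ℛ R h).right i)) b) := by
  have conj : ha.actLeftMul c = ha.convUnit * (leftMul R H c * ↑ha.convUnit⁻¹) := by
    rw [← mul_assoc, ← actLeftMul_mul_convUnit, Units.mul_inv_cancel_right]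
  rw [← actLeftMul_apply, conj, mul_apply]
  simp only [leftMul_mul_apply, convUnit_apply, convUnit_inv_apply]

variable {d : ℕ}

/-- The left `A`-linear relations satisfied by all the families `j ↦ h ⬝ v j`. -/
noncomputable def relations {ι : Type} [Fintype ι] (v : ι → A) : Submodule A (ι → A) :=
  ⨅ h, LinearMap.ker (Fintype.linearCombination A fun j => ha.act h (v j))

lemma mem_relations {ι : Type} [Fintype ι] {v c : ι → A} :
    c ∈ ha.relations v ↔ ∀ h, ∑ j, c j * ha.act h (v j) = 0 := by
  simp [relations, Fintype.linearCombination_apply]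

lemma act_mem_relations {ι : Type} [Fintype ι] {v c : ι → A} (hc : c ∈ ha.relations v) (h : H) :
    (fun j => ha.act h (c j)) ∈ ha.relations v := by
  rw [mem_relations] at hc ⊢
  intro x
  simp only [act_mul_eq_sum_act_antipode, ← ha.mul_act]
  rw [Finset.sum_comm]
  simp only [← map_sum, hc, map_zero, Finset.sum_const_zero]

lemma relations_ne_bot [StrongRankCondition A] {e : Fin d → H}
    (he : Submodule.span R (Set.range e) = ⊤) (v : Fin (d + 1) → A) : ha.relations v ≠ ⊥ := by
  let f : (Fin (d + 1) → A) →ₗ[A] (Fin d → A) :=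
    LinearMap.pi fun i => Fintype.linearCombination A fun j => ha.act (e i) (v j)
  have hf : LinearMap.ker f ≠ ⊥ := fun h => by
    simpa using card_le_of_injective A f (LinearMap.ker_eq_bot.1 h)
  refine ne_bot_of_le_ne_bot hf fun c hc => ?_
  have hzero (i : Fin d) : ∑ j, c j * ha.act (e i) (v j) = 0 := by
    simpa [f, Fintype.linearCombination_apply] using congrFun hc i
  let φ : H →ₗ[R] A := ∑ j, LinearMap.mulLeft R (c j) ∘ₗ ha.act.flip (v j)
  have hφ : φ = 0 := LinearMap.ext_on_range he fun i => by
    simpa [φ, LinearMap.sum_apply] using hzero i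
  exact ha.mem_relations.2 fun h => by simpa [φ, LinearMap.sum_apply] using LinearMap.congr_fun hφ h

end HopfAction

lemma exists_mem_minimal_support {ι B : Type*} [Finite ι] [Zero B] {W : Set (ι → B)}
    (hW : ∃ c ∈ W, c ≠ 0) : ∃ c ∈ W, c ≠ 0 ∧
      ∀ c' ∈ W, Function.support c' ⊂ Function.support c → c' = 0 := by
  have hne : (W \ {0}).Nonempty := hW
  obtain ⟨hcW, hc0⟩ := Function.argminOn_mem Function.support (W \ {0}) hne
  refine ⟨_, hcW, hc0, fun c' hc' hlt => by_contra fun h0 => ?_⟩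
  exact Function.not_lt_argminOn Function.support (W \ {0}) (a := c') ⟨hc', h0⟩ hlt

namespace HopfAction

open ConvEnd

variable (ha : HopfAction R H A) {p d s : ℕ}

lemma exists_mem_relations_minimal_support {ι : Type} [Fintype ι] (hA : IsWeylLike p A) {v : ι → A}
    (hv : ha.relations v ≠ ⊥) : ∃ c ∈ ha.relations v, (∃ j, ¬ (p : A) ∣ c j) ∧
      ∀ c' ∈ ha.relations v, Function.support c' ⊂ Function.support c → c' = 0 := by
  obtain ⟨c, hc, hc0, hmin⟩ :=
    exists_mem_minimal_support (Submodule.exists_mem_ne_zero_of_ne_bot hv)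
  obtain ⟨m, c', hcc', hj⟩ := hA.exists_eq_pow_mul hc0
  have support_eq : Function.support c' = Function.support c := by
    ext j
    simp only [Function.mem_support, hcc', not_iff_not]
    exact ⟨fun h => by rw [h, mul_zero], hA.eq_zero_of_pow_mul_eq_zero m⟩
  refine ⟨c', ha.mem_relations.2 fun h => hA.eq_zero_of_pow_mul_eq_zero m ?_, hj, support_eq ▸ hmin⟩
  simpa only [hcc', mul_assoc, ← Finset.mul_sum] using ha.mem_relations.1 hc h

-- Minimality of the support of `c` makes all the ratios `c j / c j₀` invariant.
lemma exists_invPair_relation [StrongRankCondition A] (hA : IsWeylLike p A) (hs : 1 ≤ s)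
    {e : Fin d → H} (he : Submodule.span R (Set.range e) = ⊤) (v : Fin (d + 1) → A) :
    ∃ c : Fin (d + 1) → A, ∑ j, c j * v j = 0 ∧ ∃ j₀, CentralMod (p ^ s) (c j₀) ∧
      ¬ (p : A) ∣ c j₀ ∧ ∀ j, ha.InvPair (p ^ s) (c j₀) (c j) := by
  obtain ⟨c, hc, ⟨j₀, hj₀⟩, hmin⟩ :=
    ha.exists_mem_relations_minimal_support hA (ha.relations_ne_bot he v)
  obtain ⟨a, hdvd, hcentral⟩ :
      ∃ a : A, ¬ (p : A) ∣ (a • c) j₀ ∧ CentralMod (p ^ s) ((a • c) j₀) :=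
    hA.exists_centralMod_pow_mul hs hj₀
  set b : Fin (d + 1) → A := a • c
  have hb : b ∈ ha.relations v := Submodule.smul_mem _ a hc
  refine ⟨b, by simpa [ha.one_act] using ha.mem_relations.1 hb 1, j₀, hcentral, hdvd, fun j h => ?_⟩
  obtain ⟨z, hz⟩ := hcentral (ha.act h (b j₀))
  obtain ⟨t, t', ht, htz⟩ := hA.exists_left_ore z hdvd
  let w : Fin (d + 1) → A :=
    t • (b j₀ • (fun j => ha.act h (b j)) - ha.act h (b j₀) • b) - ((p ^ s : ℕ) * t') • b
  have hw : w ∈ ha.relations v := by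
    have hact := ha.act_mem_relations hb h
    exact sub_mem (Submodule.smul_mem _ _ (sub_mem (Submodule.smul_mem _ _ hact)
      (Submodule.smul_mem _ _ hb))) (Submodule.smul_mem _ _ hb)
  have hw_apply (j : Fin (d + 1)) : w j =
      t * (b j₀ * ha.act h (b j) - ha.act h (b j₀) * b j) - (p ^ s : ℕ) * (t' * b j) := by
    simp only [w, Pi.sub_apply, Pi.smul_apply, smul_eq_mul, mul_assoc]
  have hw_j₀ : w j₀ = 0 := by
    rw [hw_apply, hz, (Nat.cast_commute (p ^ s) t).symm.left_comm]
    exact sub_eq_zero.2 (congrArg _ htz)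
  have support_ssubset : Function.support w ⊂ Function.support c := by
    refine Set.ssubset_iff_of_subset ?_ |>.2 ⟨j₀, fun h0 => hj₀ (h0 ▸ dvd_zero _), fun h => h hw_j₀⟩
    refine Function.support_subset_iff'.2 fun j hj => ?_
    have hbj : b j = 0 := by simp [b, Function.notMem_support.1 hj]
    simp [hw_apply, hbj]
  have hwj := hw_apply j
  rw [hmin w hw support_ssubset, Pi.zero_apply, eq_comm, sub_eq_zero] at hwj
  exact hA.pow_dvd_of_pow_dvd_mul s ht ⟨_, hwj⟩

lemma eq_top_of_invPair_mem [StrongRankCondition A] (hA : IsWeylLike p A) (hs : 1 ≤ s)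
    {e : Fin d → H} (he : Submodule.span R (Set.range e) = ⊤) (hd : d < p) {E : Subring A}
    (natCast_mul_mem : ∀ a : A, (p : A) * a ∈ E)
    (central_mem : ∀ w : A, CentralMod (p ^ s) w → w ∈ E)
    (mem_of_mul_mem : ∀ u x : A, CentralMod (p ^ s) u → ¬ (p : A) ∣ u → u * x ∈ E → x ∈ E)
    (invPair_mem : ∀ u a : A, CentralMod (p ^ s) u → ¬ (p : A) ∣ u →
      ha.InvPair (p ^ s) u a → a ∈ E) : E = ⊤ :=
  hA.eq_top_of_dependent d hd s hs E natCast_mul_mem central_mem mem_of_mul_mem fun v => by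
    obtain ⟨c, hcv, j₀, hcentral, hdvd, hpair⟩ := ha.exists_invPair_relation hA hs he v
    exact ⟨c, fun j => invPair_mem _ _ hcentral hdvd (hpair j), ⟨j₀, hdvd⟩, hcv⟩

theorem centralMod_act [StrongRankCondition A] (hA : IsWeylLike p A) {e : Fin d → H}
    (he : Submodule.span R (Set.range e) = ⊤) (hd : d < p) {w : A} (hw : CentralMod (p ^ s) w)
    (h : H) : CentralMod (p ^ s) (ha.act h w) := by
  suffices hm : ∀ m ≤ s, ∀ h, CentralMod (p ^ m) (ha.act h w) from hm s le_rfl h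
  intro m
  induction m with
  | zero => exact fun _ h x => by simp
  | succ m ih =>
    intro hms
    have hdvd := pow_dvd_pow p hms
    let E := commutant ((red (p ^ (m + 1))).comp (leftMul R H)) (red _ (ha.actLeftMul w))
    have central_mem (u : A) (hu : CentralMod (p ^ s) u) : u ∈ E :=
      mem_commutant.2 (ha.commute_red_actLeftMul_leftMul (hu.of_dvd hdvd) w).symm
    have hE : E = ⊤ := by
      refine ha.eq_top_of_invPair_mem hA (by lia) he hd (fun a => ?_) central_mem
        (fun u x hu hpu hux => ?_) (fun u a hu hpu hua => ?_)
      · refine mem_commutant.2 (ha.commute_red_actLeftMul_leftMul_iff.2 fun h => ?_).symm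
        obtain ⟨y, hy⟩ := ih (by lia) h a
        refine ⟨y, ?_⟩
        rw [(Nat.cast_commute p _).symm.left_comm, mul_assoc, ← mul_sub, hy, ← mul_assoc,
          ← Nat.cast_mul, pow_succ']
      · exact mem_commutant.2 (commute_of_commute_mul (isLeftRegular_red_leftMul hA _ hpu)
          (mem_commutant.1 (central_mem u hu)) (by simpa using mem_commutant.1 hux))
      · refine mem_commutant.2 (commute_of_commute_mul
          (ha.isLeftRegular_red_actLeftMul hA _ hpu) ?_ ?_)
        · exact (ha.commute_red_actLeftMul (hw.of_dvd hdvd) u).symm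
        · rw [RingHom.comp_apply, ← (hua.of_dvd hdvd).red_mul_eq]
          exact (mem_commutant.1 (central_mem u hu)).mul_left
            (ha.commute_red_actLeftMul (hw.of_dvd hdvd) a).symm
    intro h x
    have hx : x ∈ E := hE ▸ Subring.mem_top x
    exact ha.commute_red_actLeftMul_leftMul_iff.1 (mem_commutant.1 hx).symm h

theorem commute_red_actLeftMul_of_centralMod [StrongRankCondition A] (hA : IsWeylLike p A)
    (hs : 1 ≤ s) {e : Fin d → H} (he : Submodule.span R (Set.range e) = ⊤) (hd : d < p)
    {κ : ConvEnd R H A} (hκ : ∀ a, Commute (leftMul R H a) κ)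
    (hcentral : ∀ w, CentralMod (p ^ s) w → Commute (red p (ha.actLeftMul w)) (red p κ)) (x : A) :
    Commute (red p (ha.actLeftMul x)) (red p κ) := by
  suffices hE : commutant ((red p).comp ha.actLeftMul) (red p κ) = ⊤ from
    (mem_commutant (g := (red p).comp ha.actLeftMul)).1 (hE ▸ Subring.mem_top x)
  refine ha.eq_top_of_invPair_mem hA hs he hd (fun a => ?_)
    (fun w hw => mem_commutant.2 (hcentral w hw)) (fun u x hu hpu hux => ?_)
    (fun u a hu hpu hua => ?_)
  · have hpa : red p (ha.actLeftMul (p * a)) = 0 :=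
      Ideal.Quotient.eq_zero_iff_mem.2 fun h b =>
        (natCast_dvd_map (ha.act h) ⟨a, rfl⟩).mul_right b
    exact mem_commutant.2 (by simp only [RingHom.comp_apply, hpa, Commute.zero_left])
  · have hreg := ha.isLeftRegular_red_actLeftMul hA 1 hpu
    rw [pow_one] at hreg
    exact mem_commutant.2 (commute_of_commute_mul hreg (hcentral u hu)
      (by simpa using mem_commutant.1 hux))
  · have hreg := isLeftRegular_red_leftMul (R := R) (H := H) hA 1 hpu
    rw [pow_one] at hreg
    refine mem_commutant.2 (commute_of_commute_mul hreg ((hκ u).map _) ?_)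
    rw [RingHom.comp_apply, (hua.of_dvd (dvd_pow_self p (by lia))).red_mul_eq]
    exact (hcentral u hu).mul_left ((hκ a).map _)

end HopfAction

end ReductionOfConvolution

/-! ### Degree filtrations, zero divisors and ranks -/

lemma le_of_forall_mul_pow_le_mul_add_pow {a b c t : ℕ}
    (h : ∀ N : ℕ, a * N ^ t ≤ b * (N + c) ^ t) : a ≤ b := by
  have hlim : Filter.Tendsto (fun N : ℕ => (b : ℝ) * (1 + c / N) ^ t) .atTop (nhds b) := by
    simpa using ((tendsto_const_div_atTop_nhds_zero_nat (c : ℝ)).const_add 1).pow t |>.const_mul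
      (b : ℝ)
  have hle : (a : ℝ) ≤ b := by
    refine ge_of_tendsto hlim (Filter.eventually_atTop.2 ⟨1, fun N hN => ?_⟩)
    have hN0 : (0 : ℝ) < N := by exact_mod_cast hN
    have hcast : (a : ℝ) * N ^ t ≤ b * (N + c) ^ t := by exact_mod_cast h N
    rw [one_add_div hN0.ne', div_pow, ← mul_div_assoc, le_div_iff₀ (by positivity)]
    exact hcast
  exact_mod_cast hle

lemma finsupp_nat_induction {σ : Type*} {P : (σ →₀ ℕ) → Prop} (zero : P 0)
    (single_add : ∀ v e, P e → P (Finsupp.single v 1 + e)) (e : σ →₀ ℕ) : P e := by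
  induction e using Finsupp.induction with
  | zero => exact zero
  | single_add v b f _ _ hf =>
    clear * - hf single_add
    induction b with
    | zero => simpa using hf
    | succ b ih => simpa only [add_comm b 1, Finsupp.single_add, add_assoc] using single_add v _ ih

section RestrictSupport

open MvPolynomial Pointwise

variable {S σ : Type*} [CommRing S] {s t : Set (σ →₀ ℕ)} {P : MvPolynomial σ S}

lemma mem_restrictSupport_iff_coeff :
    P ∈ restrictSupport S s ↔ ∀ m ∉ s, MvPolynomial.coeff m P = 0 := by
  simp only [mem_restrictSupport_iff, Set.subset_def, Finset.mem_coe, mem_support_iff]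
  exact forall_congr' fun m => not_imp_comm

lemma monomial_mul_mem_restrictSupport {e : σ →₀ ℕ} {r : S} (hst : ∀ m ∈ s, e + m ∈ t)
    (hP : P ∈ restrictSupport S s) : monomial e r * P ∈ restrictSupport S t := by
  have hsub : ({e} : Set (σ →₀ ℕ)) + s ⊆ t := by simpa [Set.subset_def] using hst
  refine restrictSupport_mono S hsub ?_
  rw [restrictSupport_add]
  exact Submodule.mul_mem_mul (by simp) hP

lemma pderiv_mem_restrictSupport {v : σ} (hst : ∀ m, m + Finsupp.single v 1 ∈ s → m ∈ t)
    (hP : P ∈ restrictSupport S s) : pderiv v P ∈ restrictSupport S t := by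
  rw [mem_restrictSupport_iff_coeff] at hP ⊢
  intro m hm
  rw [coeff_pderiv, hP _ (mt (hst m) hm), zero_mul]

end RestrictSupport

namespace WeylAlgebra

open MvPolynomial (restrictSupport monomial pderiv)

variable {S : Type} [CommRing S] {n : ℕ}

variable (S n) in
/-- The symbols of total degree less than `k`. -/
noncomputable abbrev degreeLT (k : ℕ) : Submodule S (SymbolPoly S n) :=
  restrictSupport S {m | m.degree < k}

variable (S n) in
/-- The symbols all of whose exponents are less than `N`. -/
noncomputable abbrev boxLT (N : ℕ) : Submodule S (SymbolPoly S n) :=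
  restrictSupport S {m | ∀ v, m v < N}

lemma degreeLT_mono {k l : ℕ} (h : k ≤ l) : degreeLT S n k ≤ degreeLT S n l :=
  MvPolynomial.restrictSupport_mono S fun _ hm => lt_of_lt_of_le hm h

lemma monomial_mul_mem_degreeLT {k : ℕ} {P : SymbolPoly S n} (e : (Fin n ⊕ Fin n) →₀ ℕ) (r : S)
    (hP : P ∈ degreeLT S n k) : monomial e r * P ∈ degreeLT S n (e.degree + k) :=
  monomial_mul_mem_restrictSupport (fun m hm => by simpa using hm) hP

lemma X_mul_mem_degreeLT {k : ℕ} {P : SymbolPoly S n} (v : Fin n ⊕ Fin n)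
    (hP : P ∈ degreeLT S n k) : MvPolynomial.X v * P ∈ degreeLT S n (k + 1) := by
  rw [add_comm k, ← Finsupp.degree_single v 1]
  exact monomial_mul_mem_degreeLT (Finsupp.single v 1) 1 hP

lemma pderiv_mem_degreeLT {k : ℕ} {P : SymbolPoly S n} (v : Fin n ⊕ Fin n)
    (hP : P ∈ degreeLT S n (k + 1)) : pderiv v P ∈ degreeLT S n k :=
  pderiv_mem_restrictSupport (fun m hm => by simpa using hm) hP

lemma symbol_normalOrder_monomial_mul_sub_mem (e : (Fin n ⊕ Fin n) →₀ ℕ) {j : ℕ}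
    {b : WeylAlgebra S n} (hb : symbol S n b ∈ degreeLT S n (j + 1)) :
    symbol S n (normalOrder (monomial e 1) * b) - monomial e 1 * symbol S n b ∈
      degreeLT S n (e.degree + j) := by
  induction e using finsupp_nat_induction generalizing j b with
  | zero => simp [MvPolynomial.monomial_zero']
  | single_add v e ih =>
    have hX : (monomial (Finsupp.single v 1 + e) 1 : SymbolPoly S n) =
        MvPolynomial.X v * monomial e 1 := by simp [MvPolynomial.X, MvPolynomial.monomial_mul]
    rw [hX, map_add, Finsupp.degree_single]
    rcases v with i | i
    · rw [normalOrder_x_mul, mul_assoc, symbol_X_mul, mul_assoc, ← mul_sub]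
      exact degreeLT_mono (by lia) (X_mul_mem_degreeLT _ (ih hb))
    · have hpderiv := pderiv_mem_degreeLT (Sum.inl i) hb
      have hYb : symbol S n (Y i * b) ∈ degreeLT S n (j + 1 + 1) := by
        rw [symbol_Y_mul]
        exact add_mem (X_mul_mem_degreeLT _ hb) (degreeLT_mono (by lia) hpderiv)
      have split : symbol S n (normalOrder (monomial e 1) * Y i * b) -
          MvPolynomial.X (Sum.inr i) * monomial e 1 * symbol S n b =
          (symbol S n (normalOrder (monomial e 1) * (Y i * b)) -
            monomial e 1 * symbol S n (Y i * b)) +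
            monomial e 1 * pderiv (Sum.inl i) (symbol S n b) := by
        rw [mul_assoc, symbol_Y_mul]; ring
      rw [normalOrder_y_mul, split]
      exact add_mem (degreeLT_mono (by lia) (ih hYb))
        (degreeLT_mono (by lia) (monomial_mul_mem_degreeLT e 1 hpderiv))

lemma symbol_mul_sub_mem_degreeLT {i j : ℕ} {a b : WeylAlgebra S n}
    (ha : symbol S n a ∈ degreeLT S n (i + 1)) (hb : symbol S n b ∈ degreeLT S n (j + 1)) :
    symbol S n (a * b) - symbol S n a * symbol S n b ∈ degreeLT S n (i + j) := by
  suffices h : ∀ P ∈ degreeLT S n (i + 1),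
      symbol S n (normalOrder P * b) - P * symbol S n b ∈ degreeLT S n (i + j) by
    simpa only [show normalOrder (symbol S n a) = a from (symbol S n).symm_apply_apply a] using
      h _ ha
  intro P hP
  rw [degreeLT, MvPolynomial.restrictSupport_eq_span] at hP
  induction hP using Submodule.span_induction with
  | mem P hP =>
    obtain ⟨e, he : e.degree < i + 1, rfl⟩ := hP
    exact degreeLT_mono (by lia) (symbol_normalOrder_monomial_mul_sub_mem e hb)
  | zero => simp
  | add P Q _ _ hP hQ =>
    convert add_mem hP hQ using 1
    simp only [map_add, add_mul]
    abel
  | smul r P _ hP =>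
    convert Submodule.smul_mem _ r hP using 1
    simp only [map_smul, smul_mul_assoc, smul_sub]

lemma mem_degreeLT_totalDegree_add_one (P : SymbolPoly S n) :
    P ∈ degreeLT S n (P.totalDegree + 1) :=
  mem_restrictSupport_iff_coeff.2 fun _ hm =>
    MvPolynomial.coeff_eq_zero_of_totalDegree_lt (lt_of_lt_of_le (Nat.lt_succ_self _) (not_lt.1 hm))

instance [IsDomain S] : NoZeroDivisors (WeylAlgebra S n) where
  eq_zero_or_eq_zero_of_mul_eq_zero {a b} hab := by
    by_contra! hne
    have ha : symbol S n a ≠ 0 := by simpa using hne.1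
    have hb : symbol S n b ≠ 0 := by simpa using hne.2
    have h := symbol_mul_sub_mem_degreeLT (mem_degreeLT_totalDegree_add_one (symbol S n a))
      (mem_degreeLT_totalDegree_add_one (symbol S n b))
    rw [hab, map_zero, zero_sub, neg_mem_iff, ← MvPolynomial.totalDegree_mul_of_isDomain ha hb] at h
    obtain ⟨m, hm, hdeg⟩ := Finset.exists_mem_eq_sup _
      (MvPolynomial.support_nonempty.2 (mul_ne_zero ha hb)) fun m => m.sum fun _ e => e
    exact ((MvPolynomial.mem_restrictSupport_iff S).1 h hm).ne hdeg.symm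

lemma boxLT_mono {N N' : ℕ} (h : N ≤ N') : boxLT S n N ≤ boxLT S n N' :=
  MvPolynomial.restrictSupport_mono S fun _ hm v => (hm v).trans_le h

lemma X_mul_mem_boxLT {N : ℕ} {P : SymbolPoly S n} (v : Fin n ⊕ Fin n)
    (hP : P ∈ boxLT S n N) : MvPolynomial.X v * P ∈ boxLT S n (N + 1) := by
  classical
  refine monomial_mul_mem_restrictSupport (fun m hm u => ?_) hP
  have hle : Finsupp.single v 1 u ≤ 1 := by rw [Finsupp.single_apply]; split_ifs <;> simp
  have := hm u
  rw [Finsupp.add_apply]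
  lia

lemma pderiv_mem_boxLT {N : ℕ} {P : SymbolPoly S n} (v : Fin n ⊕ Fin n)
    (hP : P ∈ boxLT S n N) : pderiv v P ∈ boxLT S n N := by
  refine pderiv_mem_restrictSupport (fun m hm u => ?_) hP
  exact (Nat.le_add_right (m u) _).trans_lt (hm u)

lemma exists_symbol_mul_mem_boxLT (a : WeylAlgebra S n) : ∃ e, ∀ N b,
    symbol S n b ∈ boxLT S n N → symbol S n (b * a) ∈ boxLT S n (N + e) := by
  induction a using induction_mul_left with
  | one => exact ⟨0, fun N b h => by simpa using h⟩
  | X_mul i a ih =>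
    obtain ⟨e, he⟩ := ih
    refine ⟨1 + e, fun N b hb => ?_⟩
    rw [← mul_assoc, ← add_assoc]
    refine he (N + 1) _ (symbol_mul_X i b ▸ add_mem (X_mul_mem_boxLT _ hb) ?_)
    exact boxLT_mono (Nat.le_succ N) (pderiv_mem_boxLT _ hb)
  | Y_mul i a ih =>
    obtain ⟨e, he⟩ := ih
    refine ⟨1 + e, fun N b hb => ?_⟩
    rw [← mul_assoc, ← add_assoc]
    exact he (N + 1) _ (symbol_mul_Y i b ▸ X_mul_mem_boxLT _ hb)
  | add a a' ih ih' =>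
    obtain ⟨⟨e, he⟩, e', he'⟩ := ih, ih'
    refine ⟨e + e', fun N b hb => ?_⟩
    rw [mul_add, map_add]
    exact add_mem (boxLT_mono (by lia) (he N b hb)) (boxLT_mono (by lia) (he' N b hb))
  | smul r a ih =>
    obtain ⟨e, he⟩ := ih
    refine ⟨e, fun N b hb => ?_⟩
    rw [mul_smul_comm, map_smul]
    exact Submodule.smul_mem _ r (he N b hb)

/-- The exponents of the monomials in `boxLT S n N`, as functions into `Fin N`. -/
noncomputable def boxEquiv (n N : ℕ) :
    {m : (Fin n ⊕ Fin n) →₀ ℕ | ∀ v, m v < N} ≃ (Fin n ⊕ Fin n → Fin N) where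
  toFun m v := ⟨m.1 v, m.2 v⟩
  invFun r := ⟨Finsupp.equivFunOnFinite.symm fun v => r v, fun v => (r v).2⟩
  left_inv m := by ext; rfl
  right_inv r := rfl

variable (S n) in
/-- The elements of the Weyl algebra with symbol in `boxLT S n N`. -/
noncomputable def box (N : ℕ) : Submodule S (WeylAlgebra S n) :=
  (boxLT S n N).comap (symbol S n).toLinearMap

variable (S n) in
/-- The normally ordered monomials with exponents less than `N`. -/
noncomputable def boxBasis (N : ℕ) : Module.Basis (Fin n ⊕ Fin n → Fin N) S (box S n N) :=
  ((MvPolynomial.basisRestrictSupport S _).reindex (boxEquiv n N)).map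
    ((symbol S n).ofSubmodule' _).symm

lemma exists_apply_mem_box {m m' : ℕ}
    (f : (Fin m → WeylAlgebra S n) →ₗ[WeylAlgebra S n] (Fin m' → WeylAlgebra S n)) :
    ∃ e, ∀ N c, (∀ j, c j ∈ box S n N) → ∀ i, f c i ∈ box S n (N + e) := by
  choose e he using exists_symbol_mul_mem_boxLT (S := S) (n := n)
  let E := ∑ j, ∑ i, e (f (Pi.single j 1) i)
  refine ⟨E, fun N c hc i => ?_⟩
  have hle (j : Fin m) : e (f (Pi.single j 1) i) ≤ E :=
    (Finset.single_le_sum (f := fun i => e (f (Pi.single j 1) i)) (by simp)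
      (Finset.mem_univ i)).trans
      (Finset.single_le_sum (f := fun j => ∑ i, e (f (Pi.single j 1) i)) (by simp)
        (Finset.mem_univ j))
  rw [← Finset.univ_sum_single c, map_sum, Finset.sum_apply]
  refine sum_mem fun j _ => boxLT_mono (Nat.add_le_add_left (hle j) N) ?_
  have hsingle : f (Pi.single j (c j)) i = c j * f (Pi.single j 1) i := by
    rw [← smul_eq_mul, ← Pi.smul_apply, ← map_smul, ← Pi.single_smul, smul_eq_mul, mul_one]
  exact hsingle ▸ he _ N (c j) (hc j)

instance [Nontrivial S] : StrongRankCondition (WeylAlgebra S n) where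
  le_of_fin_injective {m m'} f hf := by
    obtain ⟨e, he⟩ := exists_apply_mem_box f
    refine le_of_forall_mul_pow_le_mul_add_pow (c := e) (t := n + n) fun N => ?_
    have hfin (N : ℕ) : Module.Finite S (box S n N) := .of_basis (boxBasis S n N)
    have hfree (N : ℕ) : Module.Free S (box S n N) := .of_basis (boxBasis S n N)
    have hrank (l N : ℕ) : Module.finrank S (Fin l → box S n N) = l * N ^ (n + n) := by
      simp [Module.finrank_pi_fintype, Module.finrank_eq_card_basis (boxBasis S n N)]
    let incl : (Fin m → box S n N) →ₗ[S] (Fin m → WeylAlgebra S n) :=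
      LinearMap.pi fun j => (box S n N).subtype ∘ₗ LinearMap.proj j
    let g : (Fin m → box S n N) →ₗ[S] (Fin m' → box S n (N + e)) :=
      LinearMap.pi fun i => (LinearMap.proj i ∘ₗ f.restrictScalars S ∘ₗ incl).codRestrict _
        fun c => he N _ (fun j => (c j).2) i
    have hg : Function.Injective g := fun c c' h => by
      have hincl : f (incl c) = f (incl c') :=
        funext fun i => congrArg Subtype.val (congrFun h i)
      exact funext fun j => Subtype.ext (congrFun (hf hincl) j)
    simpa only [hrank] using LinearMap.finrank_le_finrank_of_injective hg

end WeylAlgebra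

/-! ### Subalgebras of small index in an algebra finite over its center -/

section SubalgebraIndex

lemma exists_linearIndependent_maximal {Z A : Type*} [CommRing Z] [Ring A] [Algebra Z A]
    (E : Subalgebra Z A) {d : ℕ} (hdep : ∀ v : Fin (d + 1) → A, ¬ LinearIndependent E v) :
    ∃ m ≠ 0, m ≤ d ∧ (∃ b : Fin m → A, LinearIndependent E b) ∧
      ∀ v : Fin (m + 1) → A, ¬ LinearIndependent E v := by
  obtain ⟨m, hm, hmax⟩ := Nat.exists_not_and_succ_of_not_zero_of_exists
    (p := fun m => ∀ v : Fin m → A, ¬ LinearIndependent E v)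
    (fun h => h 0 linearIndependent_empty_type) ⟨d + 1, hdep⟩
  push Not at hm
  obtain ⟨b, hb⟩ := hm
  refine ⟨m, ?_, ?_, ⟨b, hb⟩, hmax⟩
  · rintro rfl
    refine hmax 1 (Fintype.linearIndependent_iff.2 fun e he i => ?_)
    fin_cases i
    simpa [Subalgebra.smul_def] using he
  · by_contra! hlt
    exact hdep _ (hb.comp _ (Fin.castLE_injective hlt))

variable {Z A : Type*} [CommRing Z] [IsDomain Z] [Ring A] [Algebra Z A]

lemma finrank_fin_fun (M : Type*) [AddCommGroup M] [Module Z M] [Module.Finite Z M] (m : ℕ) :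
    Module.finrank Z (Fin m → M) = m * Module.finrank Z M := by
  induction m with
  | zero => rw [zero_mul, Module.finrank_zero_of_subsingleton]
  | succ m ih =>
    have hsurj : Function.Surjective (LinearMap.fst Z M (Fin m → M)) := LinearMap.fst_surjective
    rw [← (Fin.consLinearEquiv Z fun _ : Fin (m + 1) => M).finrank_eq,
      ← (LinearMap.ker (LinearMap.fst Z M (Fin m → M))).finrank_quotient_add_finrank,
      ((LinearMap.fst Z M (Fin m → M)).quotKerEquivOfSurjective hsurj).finrank_eq,
      LinearMap.ker_fst, LinearMap.finrank_range_of_inj LinearMap.inr_injective, ih]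
    ring

variable [Module.Finite Z A] (E : Subalgebra Z A)

lemma card_mul_finrank_eq_of_linearIndependent {m : ℕ} {b : Fin m → A}
    [IsNoetherianRing Z] (hb : LinearIndependent E b)
    (hspan : ∀ x : A, ∃ z : Z, z ≠ 0 ∧ z • x ∈ Submodule.span E (Set.range b)) :
    m * Module.finrank Z E = Module.finrank Z A := by
  have : Module.Finite Z E := .of_injective E.val.toLinearMap Subtype.val_injective
  let comb : (Fin m → E) →ₗ[Z] A := (Fintype.linearCombination E b).restrictScalars Z
  have hinj : Function.Injective comb := hb.fintypeLinearCombination_injective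
  have htorsion : Module.finrank Z (A ⧸ LinearMap.range comb) = 0 := by
    rw [Module.finrank_eq_zero_iff_isTorsion]
    intro x
    obtain ⟨x, rfl⟩ := Submodule.mkQ_surjective _ x
    obtain ⟨z, hz, hzx⟩ := hspan x
    rw [← Fintype.range_linearCombination] at hzx
    exact ⟨⟨z, mem_nonZeroDivisors_of_ne_zero hz⟩,
      (Submodule.Quotient.mk_eq_zero (LinearMap.range comb)).2 hzx⟩
  rw [← (LinearMap.range comb).finrank_quotient_add_finrank, htorsion, zero_add,
    LinearMap.finrank_range_of_inj hinj, finrank_fin_fun]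

variable [NoZeroDivisors A]

lemma exists_mul_eq_algebraMap {b : A} (hb : b ∈ E) (hb0 : b ≠ 0) :
    ∃ a ∈ E, ∃ z : Z, z ≠ 0 ∧ a * b = algebraMap Z A z := by
  have : Nontrivial A := ⟨b, 0, hb0⟩
  have : IsDomain A := NoZeroDivisors.to_isDomain A
  obtain ⟨a, ha, z, hz, haz⟩ := (IsIntegral.of_finite Z b).isAlgebraic.exists_nonzero_eq_adjoin_mul
    (mem_nonZeroDivisors_of_ne_zero hb0)
  have hcomm : a * b = b * a :=
    mul_left_cancel₀ hb0 (by rw [← mul_assoc, haz, Algebra.commutes])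
  exact ⟨a, Algebra.adjoin_le (by simpa using hb) ha, z, hz, hcomm ▸ haz⟩

lemma exists_smul_mem_span_of_maximal {m : ℕ} {b : Fin m → A} (hb : LinearIndependent E b)
    (hmax : ∀ v : Fin (m + 1) → A, ¬ LinearIndependent E v) (x : A) :
    ∃ z : Z, z ≠ 0 ∧ z • x ∈ Submodule.span E (Set.range b) := by
  obtain ⟨e, hsum, i, hi⟩ := Fintype.not_linearIndependent_iff.1 (hmax (Fin.cons x b))
  rw [Fin.sum_univ_succ] at hsum
  simp only [Fin.cons_zero, Fin.cons_succ] at hsum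
  have h0 : (e 0 : A) ≠ 0 := fun h0 => hi <| by
    rw [ZeroMemClass.coe_eq_zero] at h0
    rw [h0, zero_smul, zero_add] at hsum
    exact Fin.cases h0 (Fintype.linearIndependent_iff.1 hb _ hsum) i
  obtain ⟨a, ha, z, hz, haz⟩ := exists_mul_eq_algebraMap E (e 0).2 h0
  refine ⟨z, hz, ?_⟩
  have hzx : z • x = (⟨a, ha⟩ : E) • e 0 • x := by
    rw [Algebra.smul_def, ← haz, mul_assoc]; rfl
  rw [hzx, eq_neg_of_add_eq_zero_left hsum]
  exact Submodule.smul_mem _ _ (neg_mem (sum_mem fun j _ =>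
    Submodule.smul_mem _ _ (Submodule.subset_span ⟨j, rfl⟩)))

lemma exists_smul_mem_of_forall_not_linearIndependent [IsNoetherianRing Z] [FaithfulSMul Z A]
    {d : ℕ} (hd : ∀ q : ℕ, q.Prime → q ∣ Module.finrank Z A → d < q)
    (hdep : ∀ v : Fin (d + 1) → A, ¬ LinearIndependent E v) (x : A) :
    ∃ z : Z, z ≠ 0 ∧ z • x ∈ E := by
  have : Nontrivial A := (FaithfulSMul.algebraMap_injective Z A).nontrivial
  obtain ⟨m, hm0, hmd, ⟨b, hb⟩, hmax⟩ := exists_linearIndependent_maximal E hdep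
  have hspan := exists_smul_mem_span_of_maximal E hb hmax
  obtain rfl : m = 1 := by
    by_contra hm1
    have hdvd : m ∣ Module.finrank Z A :=
      ⟨_, (card_mul_finrank_eq_of_linearIndependent E hb hspan).symm⟩
    have hlt := hd _ (Nat.minFac_prime hm1) ((Nat.minFac_dvd m).trans hdvd)
    have hle := Nat.minFac_le (Nat.pos_of_ne_zero hm0)
    lia
  simp only [Set.range_unique, Submodule.mem_span_singleton, Subalgebra.smul_def, smul_eq_mul]
    at hspan
  obtain ⟨⟨z, hz, e, hzx⟩, z', hz', e', hz'1⟩ := hspan x, hspan 1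
  have he' : (e' : A) ≠ 0 := fun h => by
    rw [h, zero_mul, Algebra.smul_def, mul_one] at hz'1
    exact hz' (FaithfulSMul.algebraMap_injective Z A (by rw [← hz'1, map_zero]))
  obtain ⟨a, ha, w, hw, haw⟩ := exists_mul_eq_algebraMap E e'.2 he'
  refine ⟨w * z, mul_ne_zero hw hz, ?_⟩
  have heq : (w * z) • x = z' • (e * a : A) :=
    calc (w * z) • x = e * (algebraMap Z A w * b default) := by
          rw [mul_smul, ← hzx, Algebra.smul_def, Algebra.left_comm]
      _ = e * (a * (z' • 1)) := by rw [← haw, mul_assoc, hz'1]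
      _ = z' • (e * a : A) := by rw [mul_smul_comm, mul_one, mul_smul_comm]
  rw [heq]
  exact E.smul_mem (E.mul_mem e.2 ha) z'

end SubalgebraIndex

/-! ### The central subalgebra generated by the `q`-th powers of the generators -/

lemma mem_range_expand_iff {σ R : Type*} [Finite σ] [CommRing R] {q : ℕ} {P : MvPolynomial σ R} :
    P ∈ (MvPolynomial.expand q : MvPolynomial σ R →ₐ[R] _).range ↔
      ∀ m v, ¬ q ∣ m v → MvPolynomial.coeff m P = 0 := by
  refine ⟨?_, fun h => ?_⟩
  · rintro ⟨Q, rfl⟩ m v hv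
    exact MvPolynomial.coeff_expand_of_not_dvd _ hv
  rw [P.as_sum]
  refine sum_mem fun m hm => ?_
  have hdvd (v : σ) : q ∣ m v := by
    by_contra hv
    exact MvPolynomial.mem_support_iff.1 hm (h m v hv)
  choose e he using hdvd
  refine ⟨MvPolynomial.monomial (Finsupp.equivFunOnFinite.symm e) (MvPolynomial.coeff m P), ?_⟩
  change MvPolynomial.expand q _ = _
  rw [MvPolynomial.expand_monomial]
  exact congrArg (MvPolynomial.monomial · _) (Finsupp.ext fun v => by simp [he v])

lemma coeff_expand_mul_monomial {σ R : Type*} [CommRing R] {q : ℕ} (P : MvPolynomial σ R)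
    (m : σ →₀ ℕ) {r r' : σ →₀ ℕ} (hr : ∀ v, r v < q) (hr' : ∀ v, r' v < q) (hne : r ≠ r')
    (c : R) :
    MvPolynomial.coeff (q • m + r) (MvPolynomial.expand q P * MvPolynomial.monomial r' c) = 0 := by
  rw [MvPolynomial.coeff_mul_monomial']
  split_ifs with hle
  · obtain ⟨v, hv⟩ := Finsupp.ne_iff.1 hne
    rw [MvPolynomial.coeff_expand_of_not_dvd P (i := v), zero_mul]
    intro hdvd
    have hmod : (q • m + r) v ≡ r' v [MOD q] := ((Nat.modEq_iff_dvd' (hle v)).2 hdvd).symm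
    rw [Finsupp.add_apply, Finsupp.smul_apply, smul_eq_mul, Nat.ModEq, Nat.mul_add_mod,
      Nat.mod_eq_of_lt (hr v), Nat.mod_eq_of_lt (hr' v)] at hmod
    exact hv hmod
  · rfl

namespace WeylAlgebra

open MvPolynomial (expand monomial pderiv)

variable {S : Type} [CommRing S] {n q : ℕ}

lemma symbol_X_pow_mul (i : Fin n) (k : ℕ) (a : WeylAlgebra S n) :
    symbol S n (X i ^ k * a) = MvPolynomial.X (Sum.inl i) ^ k * symbol S n a := by
  induction k with
  | zero => simp
  | succ k ih => rw [pow_succ', mul_assoc, symbol_X_mul, ih, pow_succ', mul_assoc]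

lemma symbol_mul_Y_pow (i : Fin n) (k : ℕ) (a : WeylAlgebra S n) :
    symbol S n (a * Y i ^ k) = MvPolynomial.X (Sum.inr i) ^ k * symbol S n a := by
  induction k with
  | zero => simp
  | succ k ih => rw [pow_succ, ← mul_assoc, symbol_mul_Y, ih, pow_succ', mul_assoc]

lemma symbol_gen_pow (v : Fin n ⊕ Fin n) (k : ℕ) :
    symbol S n (gen v ^ k) = MvPolynomial.X v ^ k := by
  rcases v with i | i
  · simpa [gen] using symbol_X_pow_mul i k (1 : WeylAlgebra S n)
  · simpa [gen] using symbol_mul_Y_pow i k (1 : WeylAlgebra S n)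

lemma commute_gen_pow (hq : (q : S) = 0) (v : Fin n ⊕ Fin n) (a : WeylAlgebra S n) :
    Commute a (gen v ^ q) := by
  have hpderiv (u : Fin n ⊕ Fin n) : pderiv u (symbol S n (gen v ^ q)) = 0 := by
    have hq' : (q : SymbolPoly S n) = 0 := by
      rw [← map_natCast (MvPolynomial.C : S →+* SymbolPoly S n), hq, map_zero]
    rw [symbol_gen_pow, Derivation.leibniz_pow, nsmul_eq_mul, hq', zero_mul]
  refine commute_of_commute_gen (fun i => ?_) (fun i => ?_) a
  · exact (symbol S n).injective (by rw [symbol_X_mul, symbol_mul_X, hpderiv, add_zero])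
  · exact (symbol S n).injective (by rw [symbol_Y_mul, symbol_mul_Y, hpderiv, add_zero])

/-- If `q = 0` in `S`, the `q`-th powers of the generators are central; this is the homomorphism
from the polynomial ring onto the central subalgebra they generate. -/
noncomputable def powCenter (hq : (q : S) = 0) : SymbolPoly S n →ₐ[S] WeylAlgebra S n :=
  (Subalgebra.center S (WeylAlgebra S n)).val.comp (MvPolynomial.aeval fun v =>
    ⟨gen v ^ q, Subalgebra.mem_center_iff.2 (commute_gen_pow hq v)⟩)

lemma powCenter_X (hq : (q : S) = 0) (v : Fin n ⊕ Fin n) :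
    powCenter hq (MvPolynomial.X v) = gen v ^ q := by
  simp [powCenter]

lemma powCenter_mul_comm (hq : (q : S) = 0) (P : SymbolPoly S n) (a : WeylAlgebra S n) :
    powCenter hq P * a = a * powCenter hq P :=
  (Subalgebra.mem_center_iff.1 (Subtype.property _) a).symm

lemma symbol_powCenter_mul (hq : (q : S) = 0) (P : SymbolPoly S n) (a : WeylAlgebra S n) :
    symbol S n (powCenter hq P * a) = expand q P * symbol S n a := by
  induction P using MvPolynomial.induction_on generalizing a with
  | C c =>
    rw [MvPolynomial.expand_C, ← MvPolynomial.smul_eq_C_mul, ← map_smul, Algebra.smul_def,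
      ← (powCenter hq).commutes]
    rfl
  | add P Q hP hQ => simp only [map_add, add_mul, hP, hQ]
  | mul_X P v hP =>
    rw [map_mul (powCenter hq), mul_assoc, hP, map_mul (expand q), MvPolynomial.expand_X,
      powCenter_X, mul_assoc]
    congr 1
    rcases v with i | i
    · exact symbol_X_pow_mul i _ a
    · rw [← (commute_gen_pow hq _ a).eq]
      exact symbol_mul_Y_pow i _ a

lemma symbol_powCenter (hq : (q : S) = 0) (P : SymbolPoly S n) :
    symbol S n (powCenter hq P) = expand q P := by
  simpa using symbol_powCenter_mul hq P 1

lemma powCenter_injective (hq : (q : S) = 0) (hq0 : q ≠ 0) :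
    Function.Injective (powCenter hq : SymbolPoly S n → WeylAlgebra S n) := fun P Q h =>
  MvPolynomial.expand_injective (Nat.pos_of_ne_zero hq0) <| by
    rw [← symbol_powCenter hq, h, symbol_powCenter]

/-- The Weyl algebra as an algebra over the polynomial ring acting through `powCenter`. -/
noncomputable abbrev powCenterAlgebra (hq : (q : S) = 0) :
    Algebra (SymbolPoly S n) (WeylAlgebra S n) :=
  (powCenter hq).toRingHom.toAlgebra' (powCenter_mul_comm hq)

section PowCenterBasis

variable (hq : (q : S) = 0)

/-- The normally ordered monomial with exponents `r v < q`. -/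
noncomputable def boxMonomial (r : Fin n ⊕ Fin n → Fin q) : WeylAlgebra S n :=
  normalOrder (monomial ((boxEquiv n q).symm r) 1)

lemma symbol_boxMonomial (r : Fin n ⊕ Fin n → Fin q) :
    symbol S n (boxMonomial r) = monomial ((boxEquiv n q).symm r : (Fin n ⊕ Fin n) →₀ ℕ) 1 :=
  (symbol S n).apply_symm_apply _

lemma linearIndependent_boxMonomial (hq0 : q ≠ 0) :
    letI := powCenterAlgebra (n := n) hq
    LinearIndependent (SymbolPoly S n) (boxMonomial (S := S) (n := n) (q := q)) := by
  let := powCenterAlgebra (n := n) hq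
  rw [Fintype.linearIndependent_iff]
  intro g hg r
  ext m
  let e (r : Fin n ⊕ Fin n → Fin q) : (Fin n ⊕ Fin n) →₀ ℕ := (boxEquiv n q).symm r
  have hcoeff : ∑ r', MvPolynomial.coeff (q • m + e r) (expand q (g r') * monomial (e r') 1) = 0 :=
    calc _ = MvPolynomial.coeff (q • m + e r) (symbol S n (∑ r', g r' • boxMonomial r')) := by
          simp only [map_sum, Algebra.smul_def, MvPolynomial.coeff_sum]
          exact Finset.sum_congr rfl fun r' _ => by
            rw [← symbol_boxMonomial, ← symbol_powCenter_mul hq]; rfl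
      _ = 0 := by rw [hg, map_zero, MvPolynomial.coeff_zero]
  have heinj {r r'} (h : e r = e r') : r = r' := (boxEquiv n q).symm.injective (Subtype.ext h)
  rw [Finset.sum_eq_single r (fun r' _ hne => coeff_expand_mul_monomial _ _
    ((boxEquiv n q).symm r).2 ((boxEquiv n q).symm r').2 (fun h => hne (heinj h).symm) _)
    (by simp), MvPolynomial.coeff_mul_monomial, mul_one,
    MvPolynomial.coeff_expand_smul _ hq0] at hcoeff
  exact hcoeff

lemma span_range_boxMonomial (hq0 : q ≠ 0) :
    letI := powCenterAlgebra (n := n) hq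
    Submodule.span (SymbolPoly S n) (Set.range (boxMonomial (S := S) (n := n) (q := q))) = ⊤ := by
  let := powCenterAlgebra (n := n) hq
  rw [eq_top_iff]
  rintro a -
  obtain ⟨P, rfl⟩ := (symbol S n).symm.surjective a
  induction P using MvPolynomial.induction_on' with
  | add P Q hP hQ => exact map_add (symbol S n).symm P Q ▸ add_mem hP hQ
  | monomial m c =>
    let r (v : Fin n ⊕ Fin n) : Fin q := ⟨m v % q, Nat.mod_lt _ (Nat.pos_of_ne_zero hq0)⟩
    let Q : (Fin n ⊕ Fin n) →₀ ℕ := Finsupp.equivFunOnFinite.symm fun v => m v / q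
    have hsmul : (symbol S n).symm (monomial m c) =
        (monomial Q c : SymbolPoly S n) • boxMonomial r := by
      rw [LinearEquiv.symm_apply_eq, Algebra.smul_def]
      refine .trans ?_ (symbol_powCenter_mul hq _ _).symm
      rw [symbol_boxMonomial, MvPolynomial.expand_monomial, MvPolynomial.monomial_mul, mul_one]
      exact congrArg (monomial · c) (Finsupp.ext fun v => (Nat.div_add_mod (m v) q).symm)
    exact hsmul ▸ Submodule.smul_mem _ _ (Submodule.subset_span ⟨r, rfl⟩)

/-- The Weyl algebra is free over the central subalgebra of `q`-th powers. -/
noncomputable def powCenterBasis (hq0 : q ≠ 0) :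
    letI := powCenterAlgebra (n := n) hq
    Module.Basis (Fin n ⊕ Fin n → Fin q) (SymbolPoly S n) (WeylAlgebra S n) :=
  letI := powCenterAlgebra (n := n) hq
  .mk (linearIndependent_boxMonomial hq hq0) (span_range_boxMonomial hq hq0).ge

end PowCenterBasis

end WeylAlgebra

/-! ### The Weyl algebra over an unramified discrete valuation ring -/

lemma natCast_dvd_of_pow_dvd_natCast_mul {S : Type*} [CommRing S] [IsDomain S] {p s a : ℕ}
    (hp : p.Prime) (hp0 : (p : S) ≠ 0) (ha : ¬ p ^ s ∣ a) {c : S}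
    (h : ((p ^ s : ℕ) : S) ∣ a * c) : (p : S) ∣ c := by
  obtain ⟨t, u, hu, rfl⟩ :=
    Nat.exists_eq_pow_mul_and_not_dvd (n := a) (by rintro rfl; simp at ha) p hp.ne_one
  have hts : t < s := by
    by_contra! hst
    exact ha ((pow_dvd_pow p hst).mul_right u)
  obtain ⟨r, rfl⟩ := Nat.exists_eq_add_of_lt hts
  have hcop : IsCoprime (p : S) u := ((hp.coprime_iff_not_dvd).2 hu).cast
  refine hcop.dvd_of_dvd_mul_left ((Dvd.intro_left (p ^ r : S) rfl).trans
    ((mul_dvd_mul_iff_left (pow_ne_zero t hp0)).1 ?_))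
  convert h using 1 <;> push_cast <;> ring

namespace WeylAlgebra

open MvPolynomial (expand pderiv)
open IsLocalRing (ResidueField)

section CentralMod

variable {S : Type} [CommRing S] {n N : ℕ}

lemma natCast_dvd_iff_C_dvd_symbol {a : WeylAlgebra S n} :
    (N : WeylAlgebra S n) ∣ a ↔ MvPolynomial.C (N : S) ∣ symbol S n a := by
  refine ⟨?_, ?_⟩
  · rintro ⟨b, rfl⟩
    exact ⟨symbol S n b, by rw [← nsmul_eq_mul, map_nsmul, nsmul_eq_mul, map_natCast]⟩
  · rintro ⟨Q, hQ⟩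
    refine ⟨(symbol S n).symm Q, (symbol S n).injective ?_⟩
    rw [← nsmul_eq_mul, map_nsmul, LinearEquiv.apply_symm_apply, hQ, nsmul_eq_mul, map_natCast]

lemma natCast_dvd_iff_dvd_coeff {a : WeylAlgebra S n} :
    (N : WeylAlgebra S n) ∣ a ↔ ∀ m, (N : S) ∣ coeff m a := by
  rw [natCast_dvd_iff_C_dvd_symbol, MvPolynomial.C_dvd_iff_dvd_coeff]
  rfl

lemma symbol_commutator_X (i : Fin n) (w : WeylAlgebra S n) :
    symbol S n (w * X i - X i * w) = pderiv (Sum.inr i) (symbol S n w) := by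
  rw [map_sub, symbol_X_mul, symbol_mul_X, add_sub_cancel_left]

lemma symbol_commutator_Y (i : Fin n) (w : WeylAlgebra S n) :
    symbol S n (w * Y i - Y i * w) = -pderiv (Sum.inl i) (symbol S n w) := by
  rw [map_sub, symbol_Y_mul, symbol_mul_Y, sub_add_cancel_left]

lemma centralMod_of_gen {w : WeylAlgebra S n}
    (hX : ∀ i, (N : WeylAlgebra S n) ∣ w * X i - X i * w)
    (hY : ∀ i, (N : WeylAlgebra S n) ∣ w * Y i - Y i * w) : CentralMod N w := by
  have hmul {a b : WeylAlgebra S n} (ha : (N : WeylAlgebra S n) ∣ w * a - a * w)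
      (hb : (N : WeylAlgebra S n) ∣ w * b - b * w) :
      (N : WeylAlgebra S n) ∣ w * (a * b) - a * b * w := by
    have : w * (a * b) - a * b * w = (w * a - a * w) * b + a * (w * b - b * w) := by noncomm_ring
    exact this ▸ dvd_add (ha.mul_right b) (natCast_dvd_mul_left hb a)
  intro x
  induction x using induction_mul_left with
  | one => simp
  | X_mul i a ha => exact hmul (hX i) ha
  | Y_mul i a ha => exact hmul (hY i) ha
  | add a b ha hb =>
    have : w * (a + b) - (a + b) * w = w * a - a * w + (w * b - b * w) := by noncomm_ring
    exact this ▸ dvd_add ha hb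
  | smul r a ha =>
    rw [mul_smul_comm, smul_mul_assoc, ← smul_sub, Algebra.smul_def]
    exact natCast_dvd_mul_left ha _

lemma centralMod_iff_C_dvd_pderiv {w : WeylAlgebra S n} :
    CentralMod N w ↔ ∀ v, MvPolynomial.C (N : S) ∣ pderiv v (symbol S n w) := by
  refine ⟨fun h => ?_, fun h => centralMod_of_gen (fun i => ?_) (fun i => ?_)⟩
  · rintro (i | i)
    · rw [← dvd_neg, ← symbol_commutator_Y, ← natCast_dvd_iff_C_dvd_symbol]
      exact h (Y i)
    · rw [← symbol_commutator_X, ← natCast_dvd_iff_C_dvd_symbol]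
      exact h (X i)
  · rw [natCast_dvd_iff_C_dvd_symbol, symbol_commutator_X]
    exact h _
  · rw [natCast_dvd_iff_C_dvd_symbol, symbol_commutator_Y, dvd_neg]
    exact h _

lemma centralMod_iff_dvd_mul_coeff {w : WeylAlgebra S n} :
    CentralMod N w ↔ ∀ m v, (N : S) ∣ (m v : S) * coeff m w := by
  simp only [centralMod_iff_C_dvd_pderiv, MvPolynomial.C_dvd_iff_dvd_coeff,
    MvPolynomial.coeff_pderiv]
  refine ⟨fun h m v => ?_, fun h v m => ?_⟩
  · rcases Nat.eq_zero_or_pos (m v) with hm | hm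
    · simp [hm]
    · have hle : Finsupp.single v 1 ≤ m := Finsupp.single_le_iff.2 hm
      have := h v (m - Finsupp.single v 1)
      rwa [tsub_add_cancel_of_le hle, Finsupp.tsub_apply, Finsupp.single_eq_same,
        Nat.cast_sub hm, Nat.cast_one, sub_add_cancel, mul_comm] at this
  · have := h (m + Finsupp.single v 1) v
    rwa [Finsupp.add_apply, Finsupp.single_eq_same, Nat.cast_add, Nat.cast_one, mul_comm] at this

end CentralMod

variable {S : Type} [CommRing S] [IsDomain S] [IsDiscreteValuationRing S] {p : ℕ} {n : ℕ}

lemma residue_eq_zero_iff_dvd (hS : Irreducible (p : S)) (c : S) :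
    algebraMap S (ResidueField S) c = 0 ↔ (p : S) ∣ c := by
  rw [IsLocalRing.ResidueField.algebraMap_eq, IsLocalRing.residue_eq_zero_iff, hS.maximalIdeal_eq,
    Ideal.mem_span_singleton]

lemma baseChange_residue_eq_zero_iff (hS : Irreducible (p : S)) (a : WeylAlgebra S n) :
    baseChange S (ResidueField S) n a = 0 ↔ (p : WeylAlgebra S n) ∣ a := by
  rw [natCast_dvd_iff_dvd_coeff]
  refine ⟨fun h m => ?_, fun h => ext_coeff fun m => ?_⟩
  · rw [← residue_eq_zero_iff_dvd hS, ← coeff_baseChange, h, map_zero]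
  · rw [coeff_baseChange, (residue_eq_zero_iff_dvd hS _).2 (h m), map_zero]

variable (S n) in
lemma baseChange_residue_surjective :
    Function.Surjective (baseChange S (ResidueField S) n) := fun b => by
  obtain ⟨P, hP⟩ := MvPolynomial.map_surjective _ IsLocalRing.residue_surjective
    (symbol (ResidueField S) n b)
  refine ⟨(symbol S n).symm P, (symbol (ResidueField S) n).injective ?_⟩
  rw [symbol_baseChange, LinearEquiv.apply_symm_apply]
  exact hP

lemma natCast_pow_residue (hS : Irreducible (p : S)) {s : ℕ} (hs : 1 ≤ s) :
    ((p ^ s : ℕ) : ResidueField S) = 0 := by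
  have hp : (p : ResidueField S) = 0 := by
    rw [← map_natCast (algebraMap S (ResidueField S)), residue_eq_zero_iff_dvd hS]
  rw [Nat.cast_pow, hp, zero_pow (by lia)]

lemma exists_powCenter_eq_baseChange_residue (hp : p.Prime) (hS : Irreducible (p : S)) {s : ℕ}
    (hs : 1 ≤ s) {w : WeylAlgebra S n} (hw : CentralMod (p ^ s) w) :
    ∃ P, powCenter (natCast_pow_residue hS hs) P = baseChange S (ResidueField S) n w := by
  obtain ⟨P, hP⟩ := (mem_range_expand_iff (q := p ^ s)
    (P := symbol _ n (baseChange S (ResidueField S) n w))).2 fun m v hmv => by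
      rw [← coeff_apply, coeff_baseChange, residue_eq_zero_iff_dvd hS]
      exact natCast_dvd_of_pow_dvd_natCast_mul hp hS.ne_zero hmv
        (centralMod_iff_dvd_mul_coeff.1 hw m v)
  exact ⟨P, (symbol _ n).injective ((symbol_powCenter _ P).trans hP)⟩

lemma exists_centralMod_baseChange_residue_eq (hS : Irreducible (p : S)) {s : ℕ} (hs : 1 ≤ s)
    (P : SymbolPoly (ResidueField S) n) : ∃ w : WeylAlgebra S n, CentralMod (p ^ s) w ∧
      baseChange S (ResidueField S) n w = powCenter (natCast_pow_residue hS hs) P := by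
  obtain ⟨Q, hQ⟩ := MvPolynomial.map_surjective _ IsLocalRing.residue_surjective P
  refine ⟨(symbol S n).symm (expand (p ^ s) Q), centralMod_iff_dvd_mul_coeff.2 fun m v => ?_,
    (symbol _ n).injective ?_⟩
  · rw [coeff_apply, LinearEquiv.apply_symm_apply]
    by_cases h : p ^ s ∣ m v
    · exact (Nat.cast_dvd_cast h).mul_right _
    · rw [MvPolynomial.coeff_expand_of_not_dvd _ h, mul_zero]
      exact dvd_zero _
  · rw [symbol_baseChange, LinearEquiv.apply_symm_apply, MvPolynomial.map_expand, symbol_powCenter]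
    exact congrArg _ hQ

lemma exists_powCenter_mul_mem (hp : p.Prime) {F : Type} [Field F] {s : ℕ}
    (hq : ((p ^ s : ℕ) : F) = 0) {d : ℕ} (hd : d < p) (E : Subring (WeylAlgebra F n))
    (hcenter : ∀ P, powCenter hq P ∈ E)
    (hdep : ∀ v : Fin (d + 1) → WeylAlgebra F n, ∃ c : Fin (d + 1) → WeylAlgebra F n,
      (∀ j, c j ∈ E) ∧ c ≠ 0 ∧ ∑ j, c j * v j = 0) (x : WeylAlgebra F n) :
    ∃ P : SymbolPoly F n, P ≠ 0 ∧ powCenter hq P * x ∈ E := by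
  let := powCenterAlgebra (n := n) hq
  have hq0 : p ^ s ≠ 0 := pow_ne_zero s hp.ne_zero
  have : Module.Finite (SymbolPoly F n) (WeylAlgebra F n) := .of_basis (powCenterBasis hq hq0)
  have : FaithfulSMul (SymbolPoly F n) (WeylAlgebra F n) :=
    (faithfulSMul_iff_algebraMap_injective _ _).2 (powCenter_injective hq hq0)
  let E' : Subalgebra (SymbolPoly F n) (WeylAlgebra F n) :=
    { E with algebraMap_mem' := hcenter }
  have hrank (q : ℕ) (hqp : q.Prime)
      (hdvd : q ∣ Module.finrank (SymbolPoly F n) (WeylAlgebra F n)) : d < q := by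
    rw [Module.finrank_eq_card_basis (powCenterBasis hq hq0)] at hdvd
    simp only [Fintype.card_fun, Fintype.card_fin] at hdvd
    exact ((Nat.prime_dvd_prime_iff_eq hqp hp).1
      (hqp.dvd_of_dvd_pow (hqp.dvd_of_dvd_pow hdvd))).symm ▸ hd
  refine exists_smul_mem_of_forall_not_linearIndependent E' hrank (fun v hv => ?_) x
  obtain ⟨c, hcE, hc, hsum⟩ := hdep v
  exact hc (funext fun j => congrArg Subtype.val
    (Fintype.linearIndependent_iff.1 hv (fun j => ⟨c j, hcE j⟩) hsum j))

lemma exists_not_pow_dvd (hS : Irreducible (p : S)) {a : WeylAlgebra S n} (ha : a ≠ 0) :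
    ∃ m : ℕ, ¬ ((p ^ m : ℕ) : WeylAlgebra S n) ∣ a := by
  obtain ⟨m, hm⟩ : ∃ m, coeff m a ≠ 0 := by
    by_contra! h
    exact ha (ext_coeff fun m => by rw [h, map_zero])
  obtain ⟨e, he⟩ := FiniteMultiplicity.of_not_isUnit hS.not_isUnit hm
  refine ⟨e + 1, fun h => he ?_⟩
  rw [← Nat.cast_pow]
  exact natCast_dvd_iff_dvd_coeff.1 h m

lemma exists_centralMod_mul (hp : p.Prime) (hS : Irreducible (p : S)) {b : WeylAlgebra S n}
    (hb : ¬ (p : WeylAlgebra S n) ∣ b) :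
    ∃ a, ¬ (p : WeylAlgebra S n) ∣ a * b ∧ CentralMod p (a * b) := by
  have hq := natCast_pow_residue hS le_rfl
  have hq0 : p ^ 1 ≠ 0 := pow_ne_zero 1 hp.ne_zero
  let := powCenterAlgebra (n := n) hq
  have : Module.Finite (SymbolPoly (ResidueField S) n) (WeylAlgebra (ResidueField S) n) :=
    .of_basis (powCenterBasis hq hq0)
  have : FaithfulSMul (SymbolPoly (ResidueField S) n) (WeylAlgebra (ResidueField S) n) :=
    (faithfulSMul_iff_algebraMap_injective _ _).2 (powCenter_injective hq hq0)
  rw [← baseChange_residue_eq_zero_iff hS] at hb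
  obtain ⟨a, -, P, hP, hab⟩ :=
    exists_mul_eq_algebraMap (Z := SymbolPoly (ResidueField S) n) ⊤ trivial hb
  obtain ⟨a, rfl⟩ := baseChange_residue_surjective S n a
  rw [← map_mul] at hab
  refine ⟨a, fun h => hP ?_, fun x => ?_⟩
  · rw [← baseChange_residue_eq_zero_iff hS, hab] at h
    exact powCenter_injective hq hq0 (h.trans (map_zero _).symm)
  · rw [← baseChange_residue_eq_zero_iff hS, map_sub, map_mul _ (a * b), map_mul _ x, hab,
      sub_eq_zero]
    exact powCenter_mul_comm hq P _

lemma eq_top_of_dependent (hp : p.Prime) (hS : Irreducible (p : S)) {d : ℕ} (hd : d < p) {s : ℕ}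
    (hs : 1 ≤ s) (E : Subring (WeylAlgebra S n)) (hpE : ∀ a, (p : WeylAlgebra S n) * a ∈ E)
    (hcenter : ∀ w, CentralMod (p ^ s) w → w ∈ E)
    (hsat : ∀ u x, CentralMod (p ^ s) u → ¬ (p : WeylAlgebra S n) ∣ u → u * x ∈ E → x ∈ E)
    (hdep : ∀ v : Fin (d + 1) → WeylAlgebra S n, ∃ c : Fin (d + 1) → WeylAlgebra S n,
      (∀ j, c j ∈ E) ∧ (∃ j, ¬ (p : WeylAlgebra S n) ∣ c j) ∧ ∑ j, c j * v j = 0) : E = ⊤ := by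
  let π := baseChange S (ResidueField S) n
  have hmem {a : WeylAlgebra S n} (ha : π a ∈ E.map (π : WeylAlgebra S n →+* _)) : a ∈ E := by
    obtain ⟨b, hb, hba⟩ := ha
    have hsub : π (a - b) = 0 := by rw [map_sub, sub_eq_zero]; exact hba.symm
    obtain ⟨c, hc⟩ := (baseChange_residue_eq_zero_iff hS _).1 hsub
    exact sub_add_cancel a b ▸ E.add_mem (hc ▸ hpE c) hb
  have hcenter' (P : SymbolPoly (ResidueField S) n) :
      powCenter (natCast_pow_residue hS hs) P ∈ E.map (π : WeylAlgebra S n →+* _) := by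
    obtain ⟨w, hw, hwP⟩ := exists_centralMod_baseChange_residue_eq hS hs P
    exact ⟨w, hcenter w hw, hwP⟩
  refine eq_top_iff.2 fun x _ => ?_
  obtain ⟨P, hP, hPx⟩ := exists_powCenter_mul_mem hp _ hd _ hcenter' (fun v => by
    choose v' hv' using fun j => baseChange_residue_surjective S n (v j)
    obtain ⟨c, hcE, ⟨j, hj⟩, hsum⟩ := hdep v'
    refine ⟨fun j => π (c j), fun j => ⟨c j, hcE j, rfl⟩,
      fun h => hj ((baseChange_residue_eq_zero_iff hS _).1 (congrFun h j)), ?_⟩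
    simp_rw [← hv', π, ← map_mul, ← map_sum, hsum, map_zero]) (π x)
  obtain ⟨u, hu, huP⟩ := exists_centralMod_baseChange_residue_eq hS hs P
  rw [← huP, ← map_mul] at hPx
  refine hsat u x hu (fun h => hP ?_) (hmem hPx)
  rw [← baseChange_residue_eq_zero_iff hS, huP] at h
  exact powCenter_injective _ (pow_ne_zero s hp.ne_zero) (h.trans (map_zero _).symm)

theorem isWeylLike (hp : p.Prime) (hS : Irreducible (p : S)) :
    IsWeylLike p (WeylAlgebra S n) where
  eq_zero_of_mul_eq_zero a ha := ext_coeff fun m => by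
    rw [← nsmul_eq_mul] at ha
    have := congrArg (coeff m) ha
    rw [map_nsmul, nsmul_eq_mul, map_zero] at this
    rw [(mul_eq_zero.1 this).resolve_left hS.ne_zero, map_zero]
  dvd_or_dvd a b h := by
    simp only [← baseChange_residue_eq_zero_iff hS, map_mul, mul_eq_zero] at h ⊢
    exact h
  not_dvd_one h := by
    have : Nontrivial (WeylAlgebra (ResidueField S) n) :=
      (symbol (ResidueField S) n).toEquiv.nontrivial
    rw [← baseChange_residue_eq_zero_iff hS, map_one] at h
    exact one_ne_zero h
  exists_not_pow_dvd _ ha := exists_not_pow_dvd hS ha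
  exists_centralMod_mul _ hb := exists_centralMod_mul hp hS hb
  eq_top_of_dependent _ hd _ hs E hpE hcenter hsat hdep :=
    eq_top_of_dependent hp hS hd hs E hpE hcenter hsat hdep

end WeylAlgebra

/-! ### Matrix coefficients of an action modulo `p` -/

lemma coeff_expand_mul_of_mem_restrictSupport {σ R : Type*} [CommRing R] {q : ℕ} (hq0 : q ≠ 0)
    (P : MvPolynomial σ R) {Q : MvPolynomial σ R}
    (hQ : Q ∈ MvPolynomial.restrictSupport R {m | ∀ v, m v < q}) (m : σ →₀ ℕ) {r : σ →₀ ℕ}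
    (hr : ∀ v, r v < q) : MvPolynomial.coeff (q • m + r) (MvPolynomial.expand q P * Q) =
      MvPolynomial.coeff m P * MvPolynomial.coeff r Q := by
  classical
  have hterm (r' : σ →₀ ℕ) (hr' : r' ∈ Q.support) :
      MvPolynomial.coeff (q • m + r) (MvPolynomial.expand q P *
        MvPolynomial.monomial r' (MvPolynomial.coeff r' Q)) =
      if r = r' then MvPolynomial.coeff m P * MvPolynomial.coeff r' Q else 0 := by
    split_ifs with h
    · rw [h, MvPolynomial.coeff_mul_monomial, MvPolynomial.coeff_expand_smul _ hq0]
    · exact coeff_expand_mul_monomial P m hr ((MvPolynomial.mem_restrictSupport_iff R).1 hQ hr') h _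
  conv_lhs => rw [MvPolynomial.as_sum Q, Finset.mul_sum, MvPolynomial.coeff_sum,
    Finset.sum_congr rfl hterm, Finset.sum_ite_eq]
  split_ifs with h
  · rfl
  · rw [MvPolynomial.notMem_support_iff.1 h, mul_zero]

namespace WeylAlgebra

section PowCenter

variable {S : Type} [CommRing S] {n q : ℕ} (hq : (q : S) = 0)

lemma coeff_powCenter_of_not_dvd (P : SymbolPoly S n) {m : (Fin n ⊕ Fin n) →₀ ℕ}
    {v : Fin n ⊕ Fin n} (hv : ¬ q ∣ m v) : coeff m (powCenter hq P) = 0 := by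
  rw [coeff_apply, symbol_powCenter, MvPolynomial.coeff_expand_of_not_dvd _ hv]

lemma coeff_powCenter_mul (hq0 : q ≠ 0) (P : SymbolPoly S n) {b : WeylAlgebra S n}
    (hb : symbol S n b ∈ boxLT S n q) (m : (Fin n ⊕ Fin n) →₀ ℕ) {r : (Fin n ⊕ Fin n) →₀ ℕ}
    (hr : ∀ v, r v < q) :
    coeff (q • m + r) (powCenter hq P * b) = coeff (q • m) (powCenter hq P) * coeff r b := by
  simp only [coeff_apply, symbol_powCenter_mul, symbol_powCenter,
    MvPolynomial.coeff_expand_smul _ hq0, coeff_expand_mul_of_mem_restrictSupport hq0 P hb m hr]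

-- The elements with symbol in the box form a complement over the center, so `coeff r` of the box
-- factors can be read off the products.
lemma sum_coeff_smul_eq_of_sum_mul_eq (hq0 : q ≠ 0) {ι κ : Type*} {s : Finset ι} {t : Finset κ}
    {z b : ι → WeylAlgebra S n} {z' b' : κ → WeylAlgebra S n}
    (hz : ∀ i, z i ∈ (powCenter hq).range) (hb : ∀ i, symbol S n (b i) ∈ boxLT S n q)
    (hz' : ∀ i, z' i ∈ (powCenter hq).range) (hb' : ∀ i, symbol S n (b' i) ∈ boxLT S n q)
    (h : ∑ i ∈ s, z i * b i = ∑ i ∈ t, z' i * b' i) (r : (Fin n ⊕ Fin n) →₀ ℕ) :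
    ∑ i ∈ s, coeff r (b i) • z i = ∑ i ∈ t, coeff r (b' i) • z' i := by
  choose P hP using hz
  choose P' hP' using hz'
  obtain rfl : z = fun i => powCenter hq (P i) := funext fun i => (hP i).symm
  obtain rfl : z' = fun i => powCenter hq (P' i) := funext fun i => (hP' i).symm
  by_cases hr : ∀ v, r v < q
  · refine ext_coeff fun m => ?_
    simp only [map_sum, map_smul, smul_eq_mul]
    by_cases hm : ∀ v, q ∣ m v
    · choose e he using hm
      obtain rfl : m = q • Finsupp.equivFunOnFinite.symm e := Finsupp.ext fun v => by simp [he v]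
      have hcoeff := congrArg (coeff (q • Finsupp.equivFunOnFinite.symm e + r)) h
      simpa only [map_sum, coeff_powCenter_mul hq hq0 _ (hb _) _ hr,
        coeff_powCenter_mul hq hq0 _ (hb' _) _ hr, mul_comm] using hcoeff
    · obtain ⟨v, hv⟩ := not_forall.1 hm
      simp only [coeff_powCenter_of_not_dvd hq _ hv, mul_zero, Finset.sum_const_zero]
  · have hzero {c : WeylAlgebra S n} (hc : symbol S n c ∈ boxLT S n q) : coeff r c = 0 :=
      mem_restrictSupport_iff_coeff.1 hc r hr
    simp only [hzero (hb _), hzero (hb' _), zero_smul, Finset.sum_const_zero]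

end PowCenter

lemma exists_symbol_mem_boxLT {S : Type} [CommRing S] {n : ℕ} (a : WeylAlgebra S n) :
    ∃ N, symbol S n a ∈ boxLT S n N := by
  obtain ⟨e, he⟩ := exists_symbol_mul_mem_boxLT a
  refine ⟨1 + e, one_mul a ▸ he 1 1 ?_⟩
  rw [symbol_one]
  refine mem_restrictSupport_iff_coeff.2 fun m hm => ?_
  rw [MvPolynomial.coeff_one, if_neg]
  rintro rfl
  simp at hm

end WeylAlgebra

namespace HopfAction

open Coalgebra WithConv ConvEnd WeylAlgebra

section MatrixCoeff

variable {R : Type} [CommRing R] {H : Type} [Ring H] [Bialgebra R H]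

/-- The matrix coefficient `h ↦ l (h • a)` of an action, an element of the convolution algebra of
`B`-valued functionals on `H`. -/
noncomputable def matrixCoeff {A B : Type} [Ring A] [Algebra R A] [CommRing B] [Algebra R B]
    (ha : HopfAction R H A) (l : A →ₗ[R] B) (a : A) : WithConv (H →ₗ[R] B) :=
  toConv (l ∘ₗ ha.act.flip a)

lemma matrixCoeff_apply {A B : Type} [Ring A] [Algebra R A] [CommRing B] [Algebra R B]
    (ha : HopfAction R H A) (l : A →ₗ[R] B) (a : A) (h : H) :
    ha.matrixCoeff l a h = l (ha.act h a) := rfl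

end MatrixCoeff

variable {R : Type} [CommRing R] {H : Type} [Ring H] [HopfAlgebra R H]
  {S : Type} [CommRing S] [Algebra R S] {n : ℕ} (ha : HopfAction R H (WeylAlgebra S n))

lemma exists_forall_symbol_act_mem_boxLT [Module.Finite R H] (f : WeylAlgebra S n) :
    ∃ N, ∀ h, symbol S n (ha.act h f) ∈ boxLT S n N := by
  obtain ⟨d, e, he⟩ := Module.Finite.exists_fin (R := R) (M := H)
  choose N hN using fun i => exists_symbol_mem_boxLT (ha.act (e i) f)
  let T : H →ₗ[R] SymbolPoly S n := (symbol S n).toLinearMap.restrictScalars R ∘ₗ ha.act.flip f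
  have hle : (⊤ : Submodule R H) ≤
      ((boxLT S n (∑ i, N i)).restrictScalars R).comap T := by
    rw [← he, Submodule.span_le]
    rintro _ ⟨i, rfl⟩
    exact boxLT_mono (Finset.single_le_sum (fun _ _ => Nat.zero_le _) (Finset.mem_univ i)) (hN i)
  exact ⟨_, fun h => hle (Submodule.mem_top (x := h))⟩

/-- The convolution endomorphism `h ↦ (a ↦ β h • a)` attached to a scalar valued functional. -/
noncomputable def scalarConv (β : H →ₗ[R] S) : ConvEnd R H (WeylAlgebra S n) :=
  toConv ((Algebra.lsmul R R (WeylAlgebra S n)).toLinearMap ∘ₗ β)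

lemma scalarConv_apply (β : H →ₗ[R] S) (h : H) (a : WeylAlgebra S n) :
    scalarConv β h a = β h • a := rfl

lemma commute_leftMul_scalarConv (β : H →ₗ[R] S) (a : WeylAlgebra S n) :
    Commute (leftMul R H a) (scalarConv β) := ConvEnd.ext fun h b => by
  rw [leftMul_mul_apply, mul_leftMul_apply, scalarConv_apply, scalarConv_apply, mul_smul_comm]

variable [IsDomain S] [IsDiscreteValuationRing S] {p : ℕ} {d s : ℕ} {e : Fin d → H}

variable {ha} in
lemma sum_baseChange_residue_act_mul_act (hp : p.Prime) (hS : Irreducible (p : S)) (hs : 1 ≤ s)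
    (he : Submodule.span R (Set.range e) = ⊤) (hd : d < p) {w : WeylAlgebra S n}
    (hw : CentralMod (p ^ s) w) (f : WeylAlgebra S n) (h : H) :
    let π := baseChange S (IsLocalRing.ResidueField S) n
    ∑ i ∈ (ℛ R h).index, π (ha.act ((ℛ R h).left i) w) * π (ha.act ((ℛ R h).right i) f) =
      ∑ i ∈ (ℛ R h).index, π (ha.act ((ℛ R h).right i) w) * π (ha.act ((ℛ R h).left i) f) := by
  intro π
  have hcomm : π (ha.act h (w * f)) = π (ha.act h (f * w)) := by
    rw [← sub_eq_zero, ← map_sub, ← map_sub, baseChange_residue_eq_zero_iff hS]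
    exact natCast_dvd_map _ (hw.of_dvd (dvd_pow_self p (by lia)) f)
  have hcentral (x : H) (b : WeylAlgebra S n) : π b * π (ha.act x w) = π (ha.act x w) * π b := by
    rw [← sub_eq_zero, ← map_mul, ← map_mul, ← map_sub, baseChange_residue_eq_zero_iff hS]
    exact natCast_dvd_sub_comm.1 ((ha.centralMod_act (isWeylLike hp hS) he hd hw x).of_dvd
      (dvd_pow_self p (by lia)) b)
  simpa only [act_mul_eq_sum, map_sum, map_mul, hcentral] using hcomm

lemma commute_red_actLeftMul_matrixCoeff (hp : p.Prime) (hS : Irreducible (p : S)) (hs : 1 ≤ s)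
    (he : Submodule.span R (Set.range e) = ⊤) (hd : d < p) {f : WeylAlgebra S n}
    (hf : ∀ h, symbol S n (ha.act h f) ∈ boxLT S n (p ^ s)) (r : (Fin n ⊕ Fin n) →₀ ℕ)
    {w : WeylAlgebra S n} (hw : CentralMod (p ^ s) w) :
    Commute (red p (ha.actLeftMul w))
      (red p (scalarConv (ha.matrixCoeff ((coeff r).restrictScalars R) f).ofConv)) := by
  let π := baseChange S (IsLocalRing.ResidueField S) n
  have hrange (x : H) : π (ha.act x w) ∈ (powCenter (natCast_pow_residue hS hs)).range :=
    exists_powCenter_eq_baseChange_residue hp hS hs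
      (ha.centralMod_act (isWeylLike hp hS) he hd hw x)
  have hbox (x : H) : symbol _ n (π (ha.act x f)) ∈ boxLT _ n (p ^ s) := by
    rw [mem_restrictSupport_iff_coeff]
    intro m hm
    rw [← coeff_apply, coeff_baseChange, coeff_apply, mem_restrictSupport_iff_coeff.1 (hf x) m hm,
      map_zero]
  have hsum (h : H) := sum_coeff_smul_eq_of_sum_mul_eq _ (pow_ne_zero s hp.ne_zero)
    (fun _ => hrange _) (fun _ => hbox _) (fun _ => hrange _) (fun _ => hbox _)
    (sum_baseChange_residue_act_mul_act (ha := ha) hp hS hs he hd hw f h) r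
  refine commute_red_iff.2 fun h a => ?_
  simp only [ConvEnd.mul_apply, actLeftMul_apply, scalarConv_apply, matrixCoeff_apply,
    mul_smul_comm, ← smul_mul_assoc, ← Finset.sum_mul, ← sub_mul]
  refine Dvd.dvd.mul_right ?_ a
  rw [← baseChange_residue_eq_zero_iff hS, map_sub, sub_eq_zero]
  simpa only [π, map_sum, coeff_baseChange, map_smul, algebraMap_smul,
    LinearMap.coe_restrictScalars] using hsum h

theorem natCast_dvd_commutator_matrixCoeff (hp : p.Prime) (hS : Irreducible (p : S))
    (he : Submodule.span R (Set.range e) = ⊤) (hd : d < p) (a b : WeylAlgebra S n)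
    (m r : (Fin n ⊕ Fin n) →₀ ℕ) (h : H) :
    let α := ha.matrixCoeff ((coeff m).restrictScalars R) a
    let β := ha.matrixCoeff ((coeff r).restrictScalars R) b
    (p : S) ∣ (α * β) h - (β * α) h := by
  intro α β
  have : Module.Finite R H := .of_surjective (Fintype.linearCombination R e)
    (LinearMap.range_eq_top.1 ((Fintype.range_linearCombination R e).trans he))
  obtain ⟨N, hN⟩ := ha.exists_forall_symbol_act_mem_boxLT b
  have hbox (x : H) : symbol S n (ha.act x b) ∈ boxLT S n (p ^ (N + 1)) :=
    boxLT_mono ((Nat.le_succ N).trans (Nat.lt_pow_self hp.one_lt).le) (hN x)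
  have hcomm := ha.commute_red_actLeftMul_of_centralMod (isWeylLike hp hS) (by lia) he hd
    (commute_leftMul_scalarConv β.ofConv)
    (fun w hw => ha.commute_red_actLeftMul_matrixCoeff hp hS (by lia) he hd hbox r hw) a
  have hdvd := natCast_dvd_iff_dvd_coeff.1 (commute_red_iff.1 hcomm h 1) m
  simp only [ConvEnd.mul_apply, actLeftMul_apply, scalarConv_apply, mul_smul_comm, mul_one, map_sub,
    map_sum, map_smul, smul_eq_mul] at hdvd
  rw [(ℛ R h).convMul_apply, (ℛ R h).convMul_apply]
  simp only [mul_comm (α _)]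
  exact hdvd

end HopfAction

/-! ### Specialisation to unramified discrete valuation rings -/

section Arithmetic

open NumberField

theorem exists_prime_gt_not_dvd {a : ℤ} (ha : a ≠ 0) (d : ℕ) :
    ∃ p : ℕ, p.Prime ∧ d < p ∧ ¬ (p : ℤ) ∣ a := by
  obtain ⟨p, hdp, hp⟩ := Nat.exists_infinite_primes (d + 1 + a.natAbs)
  refine ⟨p, hp, by lia, fun h => ?_⟩
  have := Nat.le_of_dvd (Int.natAbs_pos.2 ha) (Int.natCast_dvd.1 h)
  lia

theorem exists_numberField_ringHom (B : Type) [CommRing B] [CharZero B]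
    [Algebra.FiniteType ℤ B] :
    ∃ (L : Type) (_ : Field L) (_ : NumberField L), Nonempty (B →+* L) := by
  have : Nontrivial (ℚ ⊗[ℤ] B) :=
    (Algebra.TensorProduct.includeLeft_injective (S := ℤ)
      (RingHom.injective_int (algebraMap ℤ B))).nontrivial
  obtain ⟨m, hm⟩ := Ideal.exists_maximal (ℚ ⊗[ℤ] B)
  let : Field (ℚ ⊗[ℤ] B ⧸ m) := Ideal.Quotient.field m
  have hfin : Module.Finite ℚ (ℚ ⊗[ℤ] B ⧸ m) := finite_of_finite_type_of_isJacobsonRing ℚ _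
  have : CharZero (ℚ ⊗[ℤ] B ⧸ m) := algebraRat.charZero _
  refine ⟨ℚ ⊗[ℤ] B ⧸ m, inferInstance, NumberField.mk (to_finiteDimensional := ?_),
    ⟨(Ideal.Quotient.mk m).comp Algebra.TensorProduct.includeRight.toRingHom⟩⟩
  convert hfin
  exact Subsingleton.elim _ _

variable {L : Type} [Field L] [NumberField L] {p : ℕ}

theorem exists_isMaximal_liesOver (hp : p.Prime) :
    ∃ P : Ideal (𝓞 L), P.IsMaximal ∧ P ≠ ⊥ ∧ P.LiesOver (Ideal.span {(p : ℤ)}) := by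
  have hpz : Prime (p : ℤ) := Nat.prime_iff_prime_int.1 hp
  have hprime : (Ideal.span {(p : ℤ)}).IsPrime := (Ideal.span_singleton_prime hpz.ne_zero).2 hpz
  have hne : Ideal.span {(p : ℤ)} ≠ ⊥ := by simpa using hp.ne_zero
  have := hprime.isMaximal hne
  obtain ⟨P, hP, hlies⟩ := Ideal.exists_maximal_ideal_liesOver_of_isIntegral (S := 𝓞 L)
    (Ideal.span {(p : ℤ)})
  exact ⟨P, hP, Ideal.ne_bot_of_liesOver_of_ne_bot hne P, hlies⟩

theorem irreducible_natCast_localization (hp : p.Prime) (hdiscr : ¬ (p : ℤ) ∣ discr L)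
    (P : Ideal (𝓞 L)) [P.IsMaximal] (hP : P ≠ ⊥) [P.LiesOver (Ideal.span {(p : ℤ)})] :
    Irreducible (p : Localization.AtPrime P) := by
  have hpz : Prime (p : ℤ) := Nat.prime_iff_prime_int.1 hp
  have := (Ideal.span_singleton_prime hpz.ne_zero).2 hpz
  have := IsLocalization.AtPrime.isDiscreteValuationRing_of_dedekind_domain (𝓞 L) hP
    (Localization.AtPrime P)
  have hunram := (not_dvd_discr_iff_forall_liesOver L (𝓞 L) hpz).1 hdiscr P ‹_› ‹_›
  let := Localization.AtPrime.algebraOfLiesOver (Ideal.span {(p : ℤ)}) P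
  have hmax := ((Algebra.isUnramifiedAt_iff_map_eq ℤ (Ideal.span {(p : ℤ)}) P).1 hunram).2
  rw [IsDiscreteValuationRing.irreducible_iff_uniformizer, ← hmax, Ideal.map_span,
    Set.image_singleton, eq_intCast, Int.cast_natCast]

theorem exists_dvr_subring (hp : p.Prime) (hdiscr : ¬ (p : ℤ) ∣ discr L) :
    ∃ S : Subring L, IsDiscreteValuationRing S ∧ Irreducible (p : S) ∧
      ∀ (y : ℤ) (x : L), ¬ (p : ℤ) ∣ y → IsIntegral ℤ (y • x) → x ∈ S := by
  obtain ⟨P, hPmax, hP, hlies⟩ := exists_isMaximal_liesOver (L := L) hp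
  let S := Localization.subalgebra.ofField L P.primeCompl P.primeCompl_le_nonZeroDivisors
  have : IsLocalization.AtPrime S P := Localization.subalgebra.isLocalization_ofField L _ _
  refine ⟨S.toSubring, IsLocalization.AtPrime.isDiscreteValuationRing_of_dedekind_domain
    (𝓞 L) hP S, ?_, fun y x hy hx => ?_⟩
  · let e := IsLocalization.algEquiv P.primeCompl (Localization.AtPrime P) S
    have := (MulEquiv.irreducible_iff e).2 (irreducible_natCast_localization hp hdiscr P hP)
    rwa [map_natCast] at this
  · have hyP : (y : 𝓞 L) ∈ P.primeCompl := fun h => hy <| by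
      rwa [← Ideal.mem_span_singleton, Ideal.mem_of_liesOver P]
    have hy0 : (y : L) ≠ 0 := by
      rintro h
      exact hy (by simp [Int.cast_eq_zero.1 h])
    refine ⟨⟨y • x, hx⟩, y, hyP, ?_⟩
    rw [eq_mul_inv_iff_mul_eq₀ (by simpa using hy0)]
    simp [mul_comm]

theorem exists_dvr_ringHom (B : Type) [CommRing B] [CharZero B]
    [Algebra.FiniteType ℤ B] (d : ℕ) :
    ∃ p : ℕ, p.Prime ∧ d < p ∧ ∃ (S : Type) (_ : CommRing S) (_ : IsDomain S)
      (_ : IsDiscreteValuationRing S), Irreducible (p : S) ∧ Nonempty (B →+* S) := by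
  classical
  obtain ⟨L, _, _, ⟨f⟩⟩ := exists_numberField_ringHom B
  obtain ⟨s, hs⟩ := (inferInstance : Algebra.FiniteType ℤ B).out
  obtain ⟨y, hy, hint⟩ := exists_integral_multiples ℤ ℚ (s.image f)
  obtain ⟨p, hp, hdp, hpdvd⟩ := exists_prime_gt_not_dvd (mul_ne_zero hy (discr_ne_zero L)) d
  obtain ⟨S, hdvr, hirr, hmem⟩ := exists_dvr_subring (L := L) hp fun h => hpdvd (h.mul_left _)
  have hle : (⊤ : Subalgebra ℤ B) ≤ (subalgebraOfSubring S).comap f.toIntAlgHom := by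
    rw [← hs, Algebra.adjoin_le_iff]
    exact fun x hx => hmem y _ (fun h => hpdvd (h.mul_right _))
      (hint _ (Finset.mem_image_of_mem f hx))
  exact ⟨p, hp, hdp, S, inferInstance, inferInstance, hdvr, hirr,
    ⟨f.codRestrict S fun b => hle (Algebra.mem_top (x := b))⟩⟩

lemma exists_dvr_ringHom_isUnit {B : Type} [CommRing B] [IsDomain B] [CharZero B]
    [Algebra.FiniteType ℤ B] {c : B} (hc : c ≠ 0) (d : ℕ) :
    ∃ p, p.Prime ∧ d < p ∧ ∃ (S : Type) (_ : CommRing S) (_ : IsDomain S)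
      (_ : IsDiscreteValuationRing S), Irreducible (p : S) ∧ ∃ φ : B →+* S, IsUnit (φ c) := by
  have hfin {L : Type} [CommRing L] [Algebra B L] [IsLocalization.Away c L] :
      Algebra.FiniteType ℤ L :=
    .trans (S := B) inferInstance (IsLocalization.finiteType_of_monoid_fg (.powers c) _)
  have := hfin (L := Localization.Away c)
  have : CharZero (Localization.Away c) := charZero_of_injective_algebraMap
    (IsLocalization.injective _ (powers_le_nonZeroDivisors_of_noZeroDivisors hc))
  obtain ⟨p, hp, hdp, S, _, _, _, hS, ⟨φ⟩⟩ := exists_dvr_ringHom (Localization.Away c) d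
  exact ⟨p, hp, hdp, S, _, ‹_›, ‹_›, hS, φ.comp (algebraMap B _),
    (IsLocalization.Away.algebraMap_isUnit c).map φ⟩

end Arithmetic

/-! ### Commutativity of matrix coefficients -/

/-- `ι` exhibits the `R`-coalgebra `M` as an order of the `k`-coalgebra `H`: it identifies
`k ⊗[R] M` with `H`, compatibly with the comultiplications and the counits. -/
structure IsCoalgebraOrder {R k H M : Type} [CommRing R] [CommRing k] [Algebra R k]
    [AddCommGroup H] [Module k H] [Module R H] [IsScalarTower R k H] [Coalgebra k H]
    [AddCommGroup M] [Module R M] [Coalgebra R M] (ι : M →ₗ[R] H) : Prop where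
  isBaseChange : IsBaseChange k ι
  comul_apply (x : M) : comul (R := k) (ι x) = ordTensor R k H M ι (comul (R := R) x)
  counit_apply (x : M) : counit (R := k) (ι x) = algebraMap R k (counit (R := R) x)

namespace IsCoalgebraOrder

variable {R k H M : Type} [CommRing R] [CommRing k] [Algebra R k]
  [AddCommGroup H] [Module k H] [Module R H] [IsScalarTower R k H] [Coalgebra k H]
  [AddCommGroup M] [Module R M] [Coalgebra R M] {ι : M →ₗ[R] H}

lemma comul_apply_eq_sum (hι : IsCoalgebraOrder (k := k) ι) (x : M) :
    comul (R := k) (ι x) = ∑ i ∈ (ℛ R x).index, ι ((ℛ R x).left i) ⊗ₜ[k] ι ((ℛ R x).right i) := by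
  rw [hι.comul_apply, ← (ℛ R x).eq, map_sum]
  rfl

lemma convMul_apply (hι : IsCoalgebraOrder (k := k) ι) (α β : WithConv (H →ₗ[k] k))
    (x : M) :
    (α * β) (ι x) = ∑ i ∈ (ℛ R x).index, α (ι ((ℛ R x).left i)) * β (ι ((ℛ R x).right i)) := by
  rw [LinearMap.convMul_apply, hι.comul_apply_eq_sum]
  simp

lemma conv_ext (hι : IsCoalgebraOrder (k := k) ι) {α β : WithConv (H →ₗ[k] k)}
    (h : ∀ x, α (ι x) = β (ι x)) : α = β :=
  ofConv_injective (hι.isBaseChange.algHom_ext _ _ h)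

/-- The extension of scalars of functionals from an order to the coalgebra. -/
noncomputable def dualExtend (hι : IsCoalgebraOrder (k := k) ι) :
    WithConv (M →ₗ[R] R) →ₐ[R] WithConv (H →ₗ[k] k) where
  toFun α := toConv (hι.isBaseChange.lift (Algebra.linearMap R k ∘ₗ α.ofConv))
  map_one' := hι.conv_ext fun x => by
    rw [LinearMap.convOne_apply, hι.counit_apply]
    exact hι.isBaseChange.lift_eq _ x
  map_mul' α β := hι.conv_ext fun x => by
    rw [hι.convMul_apply]
    simp [hι.isBaseChange.lift_eq, (ℛ R x).convMul_apply]
  map_zero' := hι.conv_ext fun x => by simp [hι.isBaseChange.lift_eq]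
  map_add' α β := hι.conv_ext fun x => by simp [hι.isBaseChange.lift_eq]
  commutes' r := hι.conv_ext fun x => by
    simp [hι.isBaseChange.lift_eq, hι.counit_apply, LinearMap.convAlgebraMap_apply,
      Algebra.smul_def]

lemma dualExtend_apply (hι : IsCoalgebraOrder (k := k) ι) (α : WithConv (M →ₗ[R] R)) (x : M) :
    hι.dualExtend α (ι x) = algebraMap R k (α x) :=
  hι.isBaseChange.lift_eq _ x

end IsCoalgebraOrder

lemma tensorProduct_repr_eq_mul'_map {R M N I J : Type*} [CommRing R] [AddCommGroup M] [Module R M]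
    [AddCommGroup N] [Module R N] (e : Module.Basis I R M) (f : Module.Basis J R N) (i : I) (j : J)
    (z : M ⊗[R] N) : (e.tensorProduct f).repr z (i, j) =
      LinearMap.mul' R R (TensorProduct.map (e.coord i) (f.coord j) z) := by
  induction z with
  | zero => simp
  | tmul x y => simp [mul_comm]
  | add x y hx hy => simp [hx, hy]

namespace HopfAction

section Bilinear

variable {R : Type} [CommRing R] {H : Type} [Ring H] [Bialgebra R H] {A : Type} [Ring A]
  [Algebra R A] (ha : HopfAction R H A)

lemma matrixCoeff_zero (l : A →ₗ[R] R) : ha.matrixCoeff l 0 = 0 := by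
  simp [matrixCoeff]

lemma matrixCoeff_add (l : A →ₗ[R] R) (a b : A) :
    ha.matrixCoeff l (a + b) = ha.matrixCoeff l a + ha.matrixCoeff l b := by
  simp [matrixCoeff, LinearMap.comp_add]

lemma matrixCoeff_smul (l : A →ₗ[R] R) (r : R) (a : A) :
    ha.matrixCoeff l (r • a) = r • ha.matrixCoeff l a := by
  simp [matrixCoeff, LinearMap.comp_smul]

lemma matrixCoeff_mul_matrixCoeff_apply (l l' : A →ₗ[R] R) (a b : A) (h : H) :
    (ha.matrixCoeff l a * ha.matrixCoeff l' b) h = LinearMap.mul' R R (TensorProduct.map l l'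
      (TensorProduct.map (ha.act.flip a) (ha.act.flip b) (comul (R := R) h))) := by
  rw [LinearMap.convMul_apply, ← LinearMap.comp_apply (TensorProduct.map l l'),
    ← TensorProduct.map_comp]
  rfl

-- Commutation for all pairs of functionals is an identity in `A ⊗ A`, which can be checked in
-- coordinates.
lemma commute_matrixCoeff_of_basis {I : Type*} (e : Module.Basis I R A) {a b : A}
    (h : ∀ i j, Commute (ha.matrixCoeff (e.coord i) a) (ha.matrixCoeff (e.coord j) b))
    (l l' : A →ₗ[R] R) : Commute (ha.matrixCoeff l a) (ha.matrixCoeff l' b) := by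
  have hswap (l l' : A →ₗ[R] R) (z : A ⊗[R] A) :
      LinearMap.mul' R R (TensorProduct.map l l' (TensorProduct.comm R A A z)) =
        LinearMap.mul' R R (TensorProduct.map l' l z) := by
    rw [TensorProduct.map_comm, LinearMap.mul'_comm]
  have hcomm (x : H) : TensorProduct.map (ha.act.flip a) (ha.act.flip b) (comul (R := R) x) =
      TensorProduct.comm R A A
        (TensorProduct.map (ha.act.flip b) (ha.act.flip a) (comul (R := R) x)) := by
    refine (e.tensorProduct e).ext_elem fun ⟨i, j⟩ => ?_
    rw [tensorProduct_repr_eq_mul'_map, tensorProduct_repr_eq_mul'_map, hswap,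
      ← matrixCoeff_mul_matrixCoeff_apply, (h i j).eq, matrixCoeff_mul_matrixCoeff_apply]
  refine ofConv_injective (LinearMap.ext fun x => ?_)
  rw [matrixCoeff_mul_matrixCoeff_apply, hcomm, hswap, ← matrixCoeff_mul_matrixCoeff_apply]

end Bilinear

open WeylAlgebra

theorem commute_matrixCoeff_coeff {R : Type} [CommRing R] [IsDomain R] [CharZero R]
    [Algebra.FiniteType ℤ R] {H : Type} [Ring H] [HopfAlgebra R H] [Module.Finite R H] {n : ℕ}
    (ha : HopfAction R H (WeylAlgebra R n)) (a b : WeylAlgebra R n) (m r : (Fin n ⊕ Fin n) →₀ ℕ) :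
    Commute (ha.matrixCoeff (coeff m) a) (ha.matrixCoeff (coeff r) b) := by
  by_contra hne
  obtain ⟨h, hh⟩ : ∃ h, (ha.matrixCoeff (coeff m) a * ha.matrixCoeff (coeff r) b) h -
      (ha.matrixCoeff (coeff r) b * ha.matrixCoeff (coeff m) a) h ≠ 0 := by
    contrapose! hne
    exact ofConv_injective (LinearMap.ext fun h => sub_eq_zero.1 (hne h))
  obtain ⟨d, e, he⟩ := Module.Finite.exists_fin (R := R) (M := H)
  obtain ⟨p, hp, hdp, S, _, _, _, hS, φ, hunit⟩ := exists_dvr_ringHom_isUnit hh d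
  let := φ.toAlgebra
  have hdvd := (ha.extend (isBaseChange_baseChange R S n)).natCast_dvd_commutator_matrixCoeff
    hp hS he hdp (baseChange R S n a) (baseChange R S n b) m r h
  refine hS.not_isUnit (isUnit_of_dvd_unit ?_ hunit)
  simpa [(ℛ R h).convMul_apply, matrixCoeff_apply, extend_act_map, coeff_baseChange,
    RingHom.algebraMap_toAlgebra] using hdvd

variable {R k H M : Type} [CommRing R] [CommRing k] [Algebra R k] [Ring H] [HopfAlgebra k H]
  [Module R H] [IsScalarTower R k H] [Ring M] [HopfAlgebra R M] {ι : M →ₗ[R] H} {n : ℕ}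
  {ha : HopfAction k H (WeylAlgebra k n)} {haR : HopfAction R M (WeylAlgebra R n)}

lemma dualExtend_matrixCoeff_coeff (hι : IsCoalgebraOrder (k := k) ι)
    (hact : ∀ x a, ha.act (ι x) (baseChange R k n a) = baseChange R k n (haR.act x a))
    (m : (Fin n ⊕ Fin n) →₀ ℕ) (a : WeylAlgebra R n) :
    hι.dualExtend (haR.matrixCoeff (coeff m) a) =
      ha.matrixCoeff (coeff m) (baseChange R k n a) := hι.conv_ext fun x => by
  rw [hι.dualExtend_apply, matrixCoeff_apply, matrixCoeff_apply, hact, coeff_baseChange]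

theorem commute_matrixCoeff [IsDomain R] [CharZero R] [Algebra.FiniteType ℤ R] [Module.Finite R M]
    (hι : IsCoalgebraOrder (k := k) ι)
    (hact : ∀ x a, ha.act (ι x) (baseChange R k n a) = baseChange R k n (haR.act x a))
    (l l' : WeylAlgebra k n →ₗ[k] k) (a b : WeylAlgebra k n) :
    Commute (ha.matrixCoeff l a) (ha.matrixCoeff l' b) := by
  refine ha.commute_matrixCoeff_of_basis (monomialBasis k n) (fun m r => ?_) l l'
  rw [monomialBasis_coord, monomialBasis_coord]
  induction a using (isBaseChange_baseChange R k n).inductionOn with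
  | zero => rw [matrixCoeff_zero]; exact .zero_left _
  | add x y hx hy => rw [matrixCoeff_add]; exact hx.add_left hy
  | smul c x hx => rw [matrixCoeff_smul]; exact hx.smul_left c
  | tmul a =>
    induction b using (isBaseChange_baseChange R k n).inductionOn with
    | zero => rw [matrixCoeff_zero]; exact .zero_right _
    | add x y hx hy => rw [matrixCoeff_add]; exact hx.add_right hy
    | smul c x hx => rw [matrixCoeff_smul]; exact hx.smul_right c
    | tmul b =>
      simpa only [AlgHom.toLinearMap_apply, dualExtend_matrixCoeff_coeff hι hact] using
        (haR.commute_matrixCoeff_coeff a b m r).map hι.dualExtend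

end HopfAction

/-! ### Finite-dimensional Hopf algebras with commutative dual -/

section Primitive

variable {k H : Type*} [Field k] [Ring H] [Bialgebra k H] {η : H}

lemma counit_eq_zero_of_comul_eq_tmul_one_add (hη : comul (R := k) η = η ⊗ₜ 1 + 1 ⊗ₜ η) :
    counit (R := k) η = 0 := by
  have h := congrArg (LinearMap.mul' k k ∘ₗ TensorProduct.map counit counit) hη
  have hcounit : (LinearMap.mul' k k ∘ₗ TensorProduct.map counit counit)
      (comul (R := k) η) = counit (R := k) η := by
    conv_rhs => rw [← Coalgebra.sum_counit_smul (ℛ k η)]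
    conv_lhs => rw [← (ℛ k η).eq]
    simp
  simpa [hcounit] using h

lemma comul_pow_of_comul_eq_tmul_one_add (hη : comul (R := k) η = η ⊗ₜ 1 + 1 ⊗ₜ η) (m : ℕ) :
    comul (R := k) (η ^ m) =
      ∑ j ∈ Finset.range (m + 1), (m.choose j : k) • ((η ^ j) ⊗ₜ[k] (η ^ (m - j))) := by
  have hcomm : Commute (η ⊗ₜ[k] (1 : H)) ((1 : H) ⊗ₜ[k] η) := by simp [Commute, SemiconjBy]
  rw [Bialgebra.comul_pow, hη, hcomm.add_pow]
  refine Finset.sum_congr rfl fun j _ => ?_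
  rw [← nsmul_eq_mul', Nat.cast_smul_eq_nsmul, Algebra.TensorProduct.tmul_pow,
    Algebra.TensorProduct.tmul_pow, Algebra.TensorProduct.tmul_mul_tmul, one_pow, one_pow, one_mul,
    mul_one]

lemma exists_dual_pow_eq_ite (x : H) {i : ℕ} (hi : i < (minpoly k x).natDegree) :
    ∃ l : H →ₗ[k] k, ∀ j < (minpoly k x).natDegree, l (x ^ j) = if j = i then 1 else 0 := by
  have hpow := linearIndependent_pow (K := k) x
  obtain ⟨l, hl⟩ := LinearMap.exists_extend ((Finsupp.lapply ⟨i, hi⟩).comp hpow.repr)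
  refine ⟨l, fun j hj => ?_⟩
  have hmem : x ^ j ∈ Submodule.span k (Set.range fun m : Fin (minpoly k x).natDegree => x ^ m.1) :=
    Submodule.subset_span ⟨⟨j, hj⟩, rfl⟩
  have hrepr := LinearMap.congr_fun hl ⟨x ^ j, hmem⟩
  rw [LinearMap.comp_apply, LinearMap.comp_apply,
    hpow.repr_eq_single ⟨j, hj⟩ _ rfl] at hrepr
  simpa [Finsupp.single_apply] using hrepr

lemma pow_natDegree_minpoly_mem_span [FiniteDimensional k H] (x : H) :
    x ^ (minpoly k x).natDegree ∈
      Submodule.span k ((fun j => x ^ j) '' Set.Iio (minpoly k x).natDegree) := by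
  have h := minpoly.aeval k x
  rw [Polynomial.aeval_eq_sum_range, Finset.sum_range_succ,
    (minpoly.monic (Algebra.IsIntegral.isIntegral x)).coeff_natDegree, one_smul, add_comm,
    ← eq_neg_iff_add_eq_zero] at h
  rw [h]
  exact neg_mem (sum_mem fun j hj => Submodule.smul_mem _ _
    (Submodule.subset_span ⟨j, Finset.mem_range.1 hj, rfl⟩))

-- If `η ^ d` is the first power which depends linearly on the smaller ones and `1 < d`, then the
-- coefficient of `η ^ (d - 1) ⊗ η` in `comul (η ^ j)` is `d` for `j = d` and `0` for `j < d`.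
lemma natDegree_minpoly_le_one_of_comul_eq_tmul_one_add [CharZero k] [FiniteDimensional k H]
    (hη : comul (R := k) η = η ⊗ₜ 1 + 1 ⊗ₜ η) : (minpoly k η).natDegree ≤ 1 := by
  by_contra! hd
  have hspan := pow_natDegree_minpoly_mem_span (k := k) η
  obtain ⟨l, hl⟩ := exists_dual_pow_eq_ite η
    (Nat.sub_lt (zero_lt_one.trans hd) one_pos)
  obtain ⟨l', hl'⟩ := exists_dual_pow_eq_ite η hd
  set d := (minpoly k η).natDegree
  let L : H →ₗ[k] k := LinearMap.mul' k k ∘ₗ TensorProduct.map l l' ∘ₗ comul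
  have hL (m : ℕ) : L (η ^ m) =
      ∑ j ∈ Finset.range (m + 1), m.choose j * (l (η ^ j) * l' (η ^ (m - j))) := by
    simp [L, comul_pow_of_comul_eq_tmul_one_add hη]
  have hL_lt (m : ℕ) (hm : m < d) : L (η ^ m) = 0 := by
    refine (hL m).trans (Finset.sum_eq_zero fun j hj => ?_)
    have hjm : j ≤ m := Nat.lt_succ_iff.1 (Finset.mem_range.1 hj)
    rw [hl j (hjm.trans_lt hm), hl' (m - j) (by omega)]
    split_ifs <;> first | omega | simp
  have hL_top : L (η ^ d) = d := by
    rw [hL, Finset.sum_eq_single (d - 1), hl (d - 1) (by omega), hl' _ (by omega)]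
    · simp [show d - (d - 1) = 1 by omega, Nat.choose_symm hd.le]
    · intro j hj hjd
      rcases (Nat.lt_succ_iff.1 (Finset.mem_range.1 hj)).lt_or_eq with hlt | rfl
      · simp [hl j hlt, hjd]
      · have : l' 1 = 0 := by simpa using hl' 0 (by omega)
        simp [this]
    · exact fun h => absurd (Finset.mem_range.2 (by omega)) h
  have hker : η ^ d ∈ LinearMap.ker L :=
    (Submodule.span_le (p := L.ker)).2 (Set.image_subset_iff.2 hL_lt) hspan
  have : (d : k) = 0 := hL_top.symm.trans hker
  have := Nat.cast_eq_zero.1 this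
  omega

theorem eq_zero_of_comul_eq_tmul_one_add [CharZero k] [FiniteDimensional k H]
    (hη : comul (R := k) η = η ⊗ₜ 1 + 1 ⊗ₜ η) : η = 0 := by
  nontriviality H
  have hpos := minpoly.natDegree_pos (Algebra.IsIntegral.isIntegral (R := k) η)
  obtain ⟨c, rfl⟩ := minpoly.natDegree_eq_one_iff.1
    ((natDegree_minpoly_le_one_of_comul_eq_tmul_one_add hη).antisymm hpos)
  have hc := counit_eq_zero_of_comul_eq_tmul_one_add hη
  rw [Bialgebra.counit_algebraMap] at hc
  rw [hc, map_zero]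

end Primitive

section PointDerivations

variable {k B : Type*} [Field k] [IsAlgClosed k] [CommRing B] [Algebra k B]
  [FiniteDimensional k B]

lemma exists_algHom_eq_zero_iff_mem (m : Ideal B) [m.IsMaximal] :
    ∃ χ : B →ₐ[k] k, ∀ x, χ x = 0 ↔ x ∈ m := by
  let : Field (B ⧸ m) := Ideal.Quotient.field m
  let e := AlgEquiv.ofBijective (Algebra.ofId k (B ⧸ m))
    IsAlgClosed.algebraMap_bijective_of_isIntegral
  refine ⟨e.symm.toAlgHom.comp (Ideal.Quotient.mkₐ k m), fun x => ?_⟩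
  change e.symm (Ideal.Quotient.mk m x) = 0 ↔ _
  rw [EmbeddingLike.map_eq_zero_iff, Ideal.Quotient.eq_zero_iff_mem]

-- A functional vanishing on `m ^ 2` differs from a point derivation by a multiple of the character
-- with kernel `m`.
lemma isIdempotentElem_of_forall_pointDerivation_eq_zero
    (hder : ∀ (χ : B →ₐ[k] k) (δ : B →ₗ[k] k),
      (∀ a b, δ (a * b) = χ a * δ b + δ a * χ b) → δ = 0)
    (m : Ideal B) [m.IsMaximal] : IsIdempotentElem m := by
  obtain ⟨χ, hχ⟩ := exists_algHom_eq_zero_iff_mem (k := k) m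
  refine le_antisymm Ideal.mul_le_left fun x hx => ?_
  by_contra hxm
  obtain ⟨f, hfx, hf⟩ :=
    Submodule.exists_le_ker_of_notMem (p := (m * m).restrictScalars k) (v := x) hxm
  have hδ : f - f 1 • χ.toLinearMap = 0 := by
    refine hder χ _ fun a b => ?_
    have hsub (a : B) : a - algebraMap k B (χ a) ∈ m := by
      rw [← hχ, map_sub, AlgHom.commutes]
      simp
    have hmul : f ((a - algebraMap k B (χ a)) * (b - algebraMap k B (χ b))) = 0 :=
      hf (Ideal.mul_mem_mul (hsub a) (hsub b))
    have hexpand : (a - algebraMap k B (χ a)) * (b - algebraMap k B (χ b)) =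
        a * b - χ a • b - χ b • a + (χ a * χ b) • 1 := by
      simp only [Algebra.smul_def, map_mul]
      ring
    simp only [hexpand, map_add, map_sub, map_smul, smul_eq_mul] at hmul
    simp only [LinearMap.sub_apply, LinearMap.smul_apply, AlgHom.toLinearMap_apply, map_mul,
      smul_eq_mul]
    linear_combination hmul
  have hx' := LinearMap.congr_fun hδ x
  simp only [LinearMap.sub_apply, LinearMap.smul_apply, AlgHom.toLinearMap_apply, (hχ x).2 hx,
    smul_zero, sub_zero, LinearMap.zero_apply] at hx'
  exact hfx hx'

theorem eq_zero_of_forall_algHom_apply_eq_zero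
    (hder : ∀ (χ : B →ₐ[k] k) (δ : B →ₗ[k] k),
      (∀ a b, δ (a * b) = χ a * δ b + δ a * χ b) → δ = 0)
    {b : B} (hb : ∀ χ : B →ₐ[k] k, χ b = 0) : b = 0 := by
  have : IsNoetherianRing B := IsNoetherianRing.of_finite k B
  by_contra hne
  obtain ⟨m, hm, hle⟩ := Ideal.exists_le_maximal (Ideal.span {b}).annihilator (by
    rwa [Ne, Submodule.annihilator_eq_top_iff, Ideal.span_singleton_eq_bot])
  obtain ⟨e, he, hme⟩ := (Ideal.isIdempotentElem_iff_of_fg m (IsNoetherian.noetherian m)).1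
    (isIdempotentElem_of_forall_pointDerivation_eq_zero hder m)
  obtain ⟨χ, hχ⟩ := exists_algHom_eq_zero_iff_mem (k := k) m
  obtain ⟨c, rfl⟩ := Ideal.mem_span_singleton'.1 (hme ▸ (hχ b).1 (hb χ))
  have hann : 1 - e ∈ (Ideal.span {c * e}).annihilator := by
    rw [Submodule.mem_annihilator_span_singleton, smul_eq_mul]
    linear_combination -c * he.eq
  refine hm.ne_top ((Ideal.eq_top_iff_one m).2 ?_)
  simpa using m.add_mem (hle hann) (hme.ge (Ideal.mem_span_singleton_self e))

end PointDerivations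

lemma tensorProduct_ext_mul'_map {R M N : Type*} [CommRing R] [AddCommGroup M] [Module R M]
    [Module.Free R M] [AddCommGroup N] [Module R N] [Module.Free R N] {x y : M ⊗[R] N}
    (h : ∀ (f : M →ₗ[R] R) (g : N →ₗ[R] R), LinearMap.mul' R R (TensorProduct.map f g x) =
      LinearMap.mul' R R (TensorProduct.map f g y)) : x = y := by
  let b := Module.Free.chooseBasis R M
  let c := Module.Free.chooseBasis R N
  refine (b.tensorProduct c).ext_elem fun ⟨i, j⟩ => ?_
  rw [tensorProduct_repr_eq_mul'_map, tensorProduct_repr_eq_mul'_map, h]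

section DualAlgebra

variable {k H : Type*} [Field k] [AddCommGroup H] [Module k H] [FiniteDimensional k H]

lemma exists_forall_apply_eq_eval (L : WithConv (H →ₗ[k] k) →ₗ[k] k) :
    ∃ x : H, ∀ f : WithConv (H →ₗ[k] k), L f = f x := by
  let L' : Module.Dual k (Module.Dual k H) :=
    L ∘ₗ (WithConv.linearEquiv k (H →ₗ[k] k)).symm.toLinearMap
  exact ⟨(Module.evalEquiv k H).symm L', fun f =>
    (Module.apply_evalEquiv_symm_apply (R := k) (M := H) f.ofConv L').symm⟩

variable [Coalgebra k H]

lemma exists_isGroupLikeElem_forall_apply_eq_eval (χ : WithConv (H →ₗ[k] k) →ₐ[k] k) :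
    ∃ g : H, IsGroupLikeElem k g ∧ ∀ f : WithConv (H →ₗ[k] k), χ f = f g := by
  obtain ⟨g, hg⟩ := exists_forall_apply_eq_eval χ.toLinearMap
  refine ⟨g, ⟨?_, tensorProduct_ext_mul'_map fun f f' => ?_⟩, hg⟩
  · have h := hg 1
    rw [AlgHom.toLinearMap_apply, map_one] at h
    simpa using h.symm
  · have h := hg (toConv f * toConv f')
    rw [AlgHom.toLinearMap_apply, map_mul] at h
    rw [TensorProduct.map_tmul, LinearMap.mul'_apply]
    exact h.symm.trans (congrArg₂ _ (hg (toConv f)) (hg (toConv f')))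

lemma exists_comul_eq_add_of_pointDerivation {g : H} {δ : WithConv (H →ₗ[k] k) →ₗ[k] k}
    (hδ : ∀ f f' : WithConv (H →ₗ[k] k), δ (f * f') = f g * δ f' + δ f * f' g) :
    ∃ ξ : H, (∀ f : WithConv (H →ₗ[k] k), δ f = f ξ) ∧
      comul (R := k) ξ = g ⊗ₜ ξ + ξ ⊗ₜ g := by
  obtain ⟨ξ, hξ⟩ := exists_forall_apply_eq_eval δ
  refine ⟨ξ, hξ, tensorProduct_ext_mul'_map fun f f' => ?_⟩
  have h := hδ (toConv f) (toConv f')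
  simp only [hξ] at h
  simpa using h

end DualAlgebra

section GroupLike

variable {k H : Type*} [Field k] [CharZero k] [Ring H] [HopfAlgebra k H] [FiniteDimensional k H]

lemma eq_zero_of_comul_eq_of_isGroupLikeElem {g ξ : H} (hg : IsGroupLikeElem k g)
    (hξ : comul (R := k) ξ = g ⊗ₜ ξ + ξ ⊗ₜ g) : ξ = 0 := by
  have hprim : HopfAlgebra.antipode k g * ξ = 0 := eq_zero_of_comul_eq_tmul_one_add (k := k) (by
    rw [Bialgebra.comul_mul, hg.antipode.comul_eq_tmul_self, hξ, mul_add,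
      Algebra.TensorProduct.tmul_mul_tmul, Algebra.TensorProduct.tmul_mul_tmul,
      hg.antipode_mul_cancel, add_comm])
  rw [← one_mul ξ, ← hg.mul_antipode_cancel, mul_assoc, hprim, mul_zero]

-- The characters of the dual algebra are the grouplike elements and its point derivations are the
-- skew-primitive elements, which vanish: the dual is therefore a product of copies of `k`.
theorem span_isGroupLikeElem_eq_top [IsAlgClosed k]
    (hcomm : ∀ f f' : WithConv (H →ₗ[k] k), Commute f f') :
    Submodule.span k {g : H | IsGroupLikeElem k g} = ⊤ := by
  let : CommRing (WithConv (H →ₗ[k] k)) :=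
    { (inferInstance : Ring (WithConv (H →ₗ[k] k))) with mul_comm := hcomm }
  have : FiniteDimensional k (WithConv (H →ₗ[k] k)) :=
    Module.Finite.equiv (WithConv.linearEquiv k (H →ₗ[k] k)).symm
  by_contra hne
  obtain ⟨b, hb0, hb⟩ := Submodule.exists_le_ker_of_lt_top _ (lt_top_iff_ne_top.2 hne)
  suffices h0 : (toConv b : WithConv (H →ₗ[k] k)) = 0 from hb0 (congrArg ofConv h0)
  refine eq_zero_of_forall_algHom_apply_eq_zero (k := k) (fun χ δ hδ => ?_) fun χ => ?_
  · obtain ⟨g, hg, hχ⟩ := exists_isGroupLikeElem_forall_apply_eq_eval χ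
    simp only [hχ] at hδ
    obtain ⟨ξ, hξ, hcomul⟩ := exists_comul_eq_add_of_pointDerivation hδ
    ext f
    rw [hξ, eq_zero_of_comul_eq_of_isGroupLikeElem hg hcomul, map_zero, LinearMap.zero_apply]
  · obtain ⟨g, hg, hχ⟩ := exists_isGroupLikeElem_forall_apply_eq_eval χ
    rw [hχ]
    exact hb (Submodule.subset_span hg)

end GroupLike

section Translate

variable {k H : Type*} [Field k] [Ring H] [Bialgebra k H]

/-- The two-sided translate `h ↦ f (x * h * y)` of a functional `f` on a bialgebra. -/
noncomputable def biTranslate (x y : H) (f : WithConv (H →ₗ[k] k)) : WithConv (H →ₗ[k] k) :=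
  toConv (f.ofConv ∘ₗ LinearMap.mulRight k y ∘ₗ LinearMap.mulLeft k x)

lemma biTranslate_apply (x y h : H) (f : WithConv (H →ₗ[k] k)) :
    biTranslate x y f h = f (x * h * y) := rfl

lemma biTranslate_algebraMap (x y : H) (c : k) :
    biTranslate x y (algebraMap k (WithConv (H →ₗ[k] k)) c) =
      algebraMap k _ (c * (counit (R := k) x * counit (R := k) y)) := by
  apply ofConv_injective
  ext h
  change c • counit (R := k) (x * h * y) = (c * (counit x * counit y)) • counit (R := k) h
  simp only [Bialgebra.counit_mul, smul_eq_mul]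
  ring

lemma biTranslate_mul (x y : H) (f f' : WithConv (H →ₗ[k] k)) :
    biTranslate x y (f * f') = ∑ i ∈ (ℛ k x).index, ∑ j ∈ (ℛ k y).index,
      biTranslate ((ℛ k x).left i) ((ℛ k y).left j) f *
        biTranslate ((ℛ k x).right i) ((ℛ k y).right j) f' := by
  apply ofConv_injective
  ext h
  simp only [ofConv_sum, LinearMap.sum_apply]
  change LinearMap.mul' k k (TensorProduct.map f.ofConv f'.ofConv (comul (x * h * y))) =
    ∑ i ∈ (ℛ k x).index, ∑ j ∈ (ℛ k y).index,
      LinearMap.mul' k k (TensorProduct.map _ _ (comul (R := k) h))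
  rw [Bialgebra.comul_mul, Bialgebra.comul_mul]
  conv_lhs => rw [← (ℛ k x).eq, ← (ℛ k y).eq]
  simp only [Finset.sum_mul, Finset.mul_sum, map_sum]
  rw [Finset.sum_comm]
  refine Finset.sum_congr rfl fun i _ => Finset.sum_congr rfl fun j _ => ?_
  induction comul (R := k) h using TensorProduct.induction_on with
  | zero => simp
  | add z w hz hw => simp only [map_add, mul_add, add_mul, hz, hw]
  | tmul a b => simp [biTranslate]

end Translate

section Biideal

variable {k H : Type} [Field k] [Ring H]

lemma mem_tensorIdeal_of_map_mkQ_eq_zero [Module k H] {I : Submodule k H} {z : H ⊗[k] H}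
    (hz : TensorProduct.map I.mkQ I.mkQ z = 0) : z ∈ tensorIdeal k H I := by
  have hexact : Function.Exact I.subtype I.mkQ := by
    rw [LinearMap.exact_iff, Submodule.ker_mkQ, Submodule.range_subtype]
  have hker := TensorProduct.map_ker hexact I.mkQ_surjective hexact I.mkQ_surjective
  refine (hker.le.trans (sup_le ?_ ?_)) hz <;> rintro _ ⟨w, rfl⟩ <;>
    induction w using TensorProduct.induction_on with
    | zero => simp
    | add a b ha hb => simpa only [map_add] using add_mem ha hb
    | tmul a b => first
      | exact Submodule.subset_span (Or.inr ⟨a, b, b.2, rfl⟩)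
      | exact Submodule.subset_span (Or.inl ⟨a, a.2, b, rfl⟩)

lemma antipode_convMul_id [HopfAlgebra k H] :
    toConv (HopfAlgebra.antipode k) * toConv (LinearMap.id (R := k) (M := H)) = 1 := by
  apply ofConv_injective
  ext x
  exact ((ℛ k x).convMul_apply _ _).trans
    ((HopfAlgebra.sum_antipode_mul_eq_algebraMap_counit (ℛ k x)).trans
      (LinearMap.convOne_apply x).symm)

/-- The algebra, for the convolution product, of the endomorphisms of a bialgebra which map a
biideal `I` into itself. -/
def biidealEndSubalgebra [Bialgebra k H] {I : Submodule k H}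
    (hmul : ∀ x ∈ I, ∀ h : H, h * x ∈ I ∧ x * h ∈ I)
    (hcomul : ∀ x ∈ I, comul (R := k) x ∈ tensorIdeal k H I)
    (hcounit : ∀ x ∈ I, counit (R := k) x = 0) : Subalgebra k (WithConv (H →ₗ[k] H)) where
  carrier := {u | ∀ x ∈ I, u x ∈ I}
  add_mem' hu hv x hx := I.add_mem (hu x hx) (hv x hx)
  mul_mem' {u v} hu hv x hx := by
    have hle : tensorIdeal k H I ≤
        I.comap (LinearMap.mul' k H ∘ₗ TensorProduct.map u.ofConv v.ofConv) := by
      rw [tensorIdeal, Submodule.span_le]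
      rintro z (⟨a, ha, b, rfl⟩ | ⟨a, b, hb, rfl⟩)
      · exact (hmul _ (hu a ha) _).2
      · exact (hmul _ (hv b hb) _).1
    exact hle (hcomul x hx)
  algebraMap_mem' c x hx := by
    change c • algebraMap k H (counit (R := k) x) ∈ I
    simp [hcounit x hx]

-- In the finite-dimensional convolution algebra of endomorphisms preserving `I`, the identity is
-- left cancellable and hence has a right inverse, which is the antipode.
theorem antipode_mem_of_biideal [HopfAlgebra k H] [FiniteDimensional k H] {I : Submodule k H}
    (hmul : ∀ x ∈ I, ∀ h : H, h * x ∈ I ∧ x * h ∈ I)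
    (hcomul : ∀ x ∈ I, comul (R := k) x ∈ tensorIdeal k H I)
    (hcounit : ∀ x ∈ I, counit (R := k) x = 0) {x : H} (hx : x ∈ I) :
    HopfAlgebra.antipode k x ∈ I := by
  have : FiniteDimensional k (WithConv (H →ₗ[k] H)) :=
    Module.Finite.equiv (WithConv.linearEquiv k (H →ₗ[k] H)).symm
  let U := biidealEndSubalgebra hmul hcomul hcounit
  let i : U := ⟨toConv LinearMap.id, fun _ hx => hx⟩
  have hinj : Function.Injective (LinearMap.mulLeft k i) := fun u v huv => by
    have h := congrArg (toConv (HopfAlgebra.antipode k) * ·) (congrArg Subtype.val huv)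
    simp only [LinearMap.mulLeft_apply, MulMemClass.coe_mul, ← mul_assoc, i, antipode_convMul_id,
      one_mul] at h
    exact Subtype.ext h
  obtain ⟨u, hu⟩ := LinearMap.injective_iff_surjective.1 hinj 1
  have hright : i.1 * u.1 = 1 := congrArg Subtype.val hu
  have := u.2 x hx
  rwa [← left_inv_eq_right_inv antipode_convMul_id hright] at this

lemma isHopfIdeal_of_biideal [HopfAlgebra k H] [FiniteDimensional k H] {I : Submodule k H}
    (hmul : ∀ x ∈ I, ∀ h : H, h * x ∈ I ∧ x * h ∈ I)
    (hcomul : ∀ x ∈ I, comul (R := k) x ∈ tensorIdeal k H I)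
    (hcounit : ∀ x ∈ I, counit (R := k) x = 0) : IsHopfIdeal k H I :=
  ⟨hmul, hcomul, hcounit, fun _ hx => antipode_mem_of_biideal hmul hcomul hcounit hx⟩

end Biideal

section Coannihilator

variable {k H : Type} [Field k] [Ring H] [Bialgebra k H]

/-- The subspace of a coalgebra on which every functional in a given subalgebra of the dual
algebra vanishes. -/
def coannihilator (B : Subalgebra k (WithConv (H →ₗ[k] k))) : Submodule k H where
  carrier := {x | ∀ f ∈ B, f x = 0}
  add_mem' hx hy f hf := by rw [map_add, hx f hf, hy f hf, add_zero]
  zero_mem' f _ := map_zero _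
  smul_mem' c x hx f hf := by rw [map_smul, hx f hf, smul_zero]

variable {B : Subalgebra k (WithConv (H →ₗ[k] k))}

lemma mem_of_forall_mem_coannihilator [FiniteDimensional k H] {f : WithConv (H →ₗ[k] k)}
    (hf : ∀ x ∈ coannihilator B, f x = 0) : f ∈ B := by
  by_contra hfB
  obtain ⟨L, hLf, hL⟩ := Submodule.exists_le_ker_of_notMem (p := Subalgebra.toSubmodule B) hfB
  obtain ⟨x, hx⟩ := exists_forall_apply_eq_eval L
  exact hLf ((hx f).trans (hf x fun g hg => (hx g).symm.trans (hL hg)))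

lemma counit_eq_zero_of_mem_coannihilator {x : H} (hx : x ∈ coannihilator B) :
    counit (R := k) x = 0 :=
  hx 1 B.one_mem

lemma mul_mem_coannihilator_of_biTranslate_mem (hB : ∀ f ∈ B, ∀ x y, biTranslate x y f ∈ B) {x : H}
    (hx : x ∈ coannihilator B) (h : H) :
    h * x ∈ coannihilator B ∧ x * h ∈ coannihilator B := by
  refine ⟨fun f hf => ?_, fun f hf => ?_⟩
  · simpa only [biTranslate_apply, mul_one] using hx _ (hB f hf h 1)
  · simpa only [biTranslate_apply, one_mul] using hx _ (hB f hf 1 h)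

lemma comul_mem_tensorIdeal_coannihilator [FiniteDimensional k H] {x : H}
    (hx : x ∈ coannihilator B) : comul (R := k) x ∈ tensorIdeal k H (coannihilator B) := by
  refine mem_tensorIdeal_of_map_mkQ_eq_zero (tensorProduct_ext_mul'_map (R := k) fun f g => ?_)
  have hmem (f : H ⧸ coannihilator B →ₗ[k] k) : toConv (f ∘ₗ (coannihilator B).mkQ) ∈ B :=
    mem_of_forall_mem_coannihilator fun x hx => by
      simp [(Submodule.Quotient.mk_eq_zero _).2 hx]
  rw [map_zero, map_zero, ← LinearMap.comp_apply (TensorProduct.map f g), ← TensorProduct.map_comp]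
  exact hx _ (B.mul_mem (hmem f) (hmem g))

end Coannihilator

namespace HopfAction

/-- The subalgebra of the dual algebra generated by the matrix coefficients of an action. -/
noncomputable def matrixCoeffAlgebra {R H A : Type} [CommRing R] [Ring H] [Bialgebra R H] [Ring A]
    [Algebra R A] (ha : HopfAction R H A) : Subalgebra R (WithConv (H →ₗ[R] R)) :=
  Algebra.adjoin R {f | ∃ l a, f = ha.matrixCoeff l a}

variable {k H A : Type} [Field k] [Ring H] [Ring A] [Algebra k A]

lemma biTranslate_mem_matrixCoeffAlgebra [Bialgebra k H] (ha : HopfAction k H A)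
    {f : WithConv (H →ₗ[k] k)} (hf : f ∈ ha.matrixCoeffAlgebra) (x y : H) :
    biTranslate x y f ∈ ha.matrixCoeffAlgebra := by
  induction hf using Algebra.adjoin_induction generalizing x y with
  | mem f h =>
    obtain ⟨l, a, rfl⟩ := h
    refine Algebra.subset_adjoin ⟨l ∘ₗ ha.act x, ha.act y a, ?_⟩
    apply ofConv_injective
    ext h
    change l (ha.act (x * h * y) a) = l (ha.act x (ha.act h (ha.act y a)))
    rw [ha.mul_act, ha.mul_act]
  | algebraMap r =>
    rw [biTranslate_algebraMap]
    exact Subalgebra.algebraMap_mem _ _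
  | add f f' _ _ hf hf' => exact add_mem (hf x y) (hf' x y)
  | mul f f' _ _ hf hf' =>
    rw [biTranslate_mul]
    exact sum_mem fun i _ => sum_mem fun j _ => mul_mem (hf _ _) (hf' _ _)

variable [HopfAlgebra k H] [FiniteDimensional k H] {ha : HopfAction k H A}

theorem InnerFaithful.matrixCoeffAlgebra_eq_top (hif : ha.InnerFaithful) :
    ha.matrixCoeffAlgebra = ⊤ := by
  have hbot : coannihilator ha.matrixCoeffAlgebra = ⊥ := by
    refine hif _ (isHopfIdeal_of_biideal
      (fun x hx => mul_mem_coannihilator_of_biTranslate_mem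
        (fun f hf => ha.biTranslate_mem_matrixCoeffAlgebra hf) hx)
      (fun x hx => comul_mem_tensorIdeal_coannihilator hx)
      (fun x hx => counit_eq_zero_of_mem_coannihilator hx)) fun x hx a => ?_
    exact (Module.forall_dual_apply_eq_zero_iff k _).1 fun l =>
      hx _ (Algebra.subset_adjoin ⟨l, a, rfl⟩)
  refine eq_top_iff.2 fun f _ => mem_of_forall_mem_coannihilator fun x hx => ?_
  rw [hbot, Submodule.mem_bot] at hx
  rw [hx, map_zero]

theorem InnerFaithful.commute_of_commute_matrixCoeff (hif : ha.InnerFaithful)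
    (hcomm : ∀ (l l' : A →ₗ[k] k) (a a' : A),
      Commute (ha.matrixCoeff l a) (ha.matrixCoeff l' a'))
    (f f' : WithConv (H →ₗ[k] k)) : Commute f f' := by
  have hmem (f : WithConv (H →ₗ[k] k)) : f ∈ ha.matrixCoeffAlgebra :=
    hif.matrixCoeffAlgebra_eq_top ▸ Algebra.mem_top
  refine Algebra.commute_of_mem_adjoin_of_forall_mem_commute (hmem f') ?_
  rintro _ ⟨l', a', rfl⟩
  refine (Algebra.commute_of_mem_adjoin_of_forall_mem_commute (hmem f) ?_).symm
  rintro _ ⟨l, a, rfl⟩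
  exact hcomm l' l a' a

end HopfAction

open WeylAlgebra in
theorem HopfAction.InnerFaithful.span_isGroupLikeElem_eq_top {R k H M : Type} [CommRing R]
    [IsDomain R] [CharZero R] [Algebra.FiniteType ℤ R] [Field k] [IsAlgClosed k] [CharZero k]
    [Algebra R k] [Ring H] [HopfAlgebra k H] [Module R H] [IsScalarTower R k H]
    [FiniteDimensional k H] [Ring M] [HopfAlgebra R M] [Module.Finite R M] {n : ℕ}
    {ha : HopfAction k H (WeylAlgebra k n)} (hif : ha.InnerFaithful)
    {haR : HopfAction R M (WeylAlgebra R n)} {ι : M →ₗ[R] H} (hι : IsCoalgebraOrder (k := k) ι)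
    (hact : ∀ x a, ha.act (ι x) (baseChange R k n a) = baseChange R k n (haR.act x a)) :
    Submodule.span k {g : H | IsGroupLikeElem k g} = ⊤ :=
  _root_.span_isGroupLikeElem_eq_top
    (hif.commute_of_commute_matrixCoeff (commute_matrixCoeff hι hact))

/-! ### Group-like elements and reduction at a valuation -/

section FiniteOrder

variable {k M I Γ₀ : Type*} [Field k] [AddCommGroup M] [Module k M]
  [LinearOrderedCommGroupWithZero Γ₀] {v : Valuation k Γ₀} (e : Module.Basis I k M)

lemma apply_mem_of_repr_mul_mem {N : AddSubmonoid k} (f : M →ₗ[k] k) {a : M}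
    (h : ∀ i, e.repr a i * f (e i) ∈ N) : f a ∈ N := by
  rw [← e.linearCombination_repr a, Finsupp.linearCombination_apply, map_finsuppSum]
  exact sum_mem fun i _ => by simpa using h i

lemma valuation_apply_lt_one {f : M →ₗ[k] k} (hf : ∀ i, v (f (e i)) < 1) {a : M}
    (ha : ∀ i, v (e.repr a i) ≤ 1) : v (f a) < 1 :=
  apply_mem_of_repr_mul_mem (N := (v.ltAddSubgroup 1).toAddSubmonoid) e f fun i => by
    simpa using mul_lt_one_of_nonneg_of_lt_one_right (ha i) zero_le (hf i)

lemma valuation_apply_lt_one_of_repr_lt_one {f : M →ₗ[k] k} (hf : ∀ i, v (f (e i)) ≤ 1) {a : M}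
    (ha : ∀ i, v (e.repr a i) < 1) : v (f a) < 1 :=
  apply_mem_of_repr_mul_mem (N := (v.ltAddSubgroup 1).toAddSubmonoid) e f fun i => by
    simpa using mul_lt_one_of_nonneg_of_lt_one_left zero_le (ha i) (hf i)

variable (v) in
lemma exists_smul_repr_le_one_and_eq_one {b : M} (hb : b ≠ 0) :
    ∃ c : k, (∀ i, v (e.repr (c • b) i) ≤ 1) ∧ ∃ i, e.repr (c • b) i = 1 := by
  have hne : (e.repr b).support.Nonempty := by simpa using hb
  obtain ⟨i₀, hi₀, hmax⟩ := (e.repr b).support.exists_max_image (fun i => v (e.repr b i)) hne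
  rw [Finsupp.mem_support_iff] at hi₀
  refine ⟨(e.repr b i₀)⁻¹, fun i => ?_, i₀, by simp [hi₀]⟩
  have hle : v (e.repr b i) ≤ v (e.repr b i₀) := by
    by_cases hi : e.repr b i = 0
    · simp [hi]
    · exact hmax i (Finsupp.mem_support_iff.2 hi)
  simpa [mul_comm, ← div_eq_mul_inv] using div_le_one_of_le₀ hle zero_le

variable {e} {T : Module.End k M}

lemma valuation_repr_sub_lt_one (hT : ∀ i j, v (e.repr (T (e i) - e i) j) < 1) {a : M}
    (ha : ∀ i, v (e.repr a i) ≤ 1) (j : I) : v (e.repr (T a - a) j) < 1 :=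
  valuation_apply_lt_one e (f := e.coord j ∘ₗ (T - 1)) (fun i => hT i j) ha

lemma valuation_repr_apply_le_one (hT : ∀ i j, v (e.repr (T (e i) - e i) j) < 1) {a : M}
    (ha : ∀ i, v (e.repr a i) ≤ 1) (j : I) : v (e.repr (T a) j) ≤ 1 := by
  rw [← sub_add_cancel (T a) a, map_add, Finsupp.add_apply]
  exact v.map_add_le (valuation_repr_sub_lt_one hT ha j).le (ha j)

lemma valuation_repr_pow_sub_lt_one (hT : ∀ i j, v (e.repr (T (e i) - e i) j) < 1) (n : ℕ) {a : M}
    (ha : ∀ i, v (e.repr a i) ≤ 1) (j : I) : v (e.repr ((T ^ n) a - a) j) < 1 := by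
  induction n generalizing a with
  | zero => simp
  | succ n ih =>
    have hsplit : (T ^ (n + 1)) a - a = ((T ^ n) (T a) - T a) + (T a - a) := by
      rw [pow_succ, Module.End.mul_apply, sub_add_sub_cancel]
    rw [hsplit, map_add, Finsupp.add_apply]
    exact v.map_add_lt (ih (valuation_repr_apply_le_one hT ha)) (valuation_repr_sub_lt_one hT ha j)

-- If `T ≠ 1`, then the telescoping sum `∑ Tⁱ b` vanishes on a suitably normalised `b` in the range
-- of `T - 1`; modulo the maximal ideal it is also `r b ≠ 0`.
theorem eq_one_of_pow_eq_one_of_valuation_lt_one {r : ℕ} (hr : v (r : k) = 1) (hTr : T ^ r = 1)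
    (hT : ∀ i j, v (e.repr (T (e i) - e i) j) < 1) : T = 1 := by
  refine e.ext fun i => sub_eq_zero.1 ?_
  by_contra hb
  obtain ⟨c, hc, j, hj⟩ := exists_smul_repr_le_one_and_eq_one v e hb
  set b := c • (T (e i) - (1 : Module.End k M) (e i)) with hbdef
  have hsum : ∑ i ∈ Finset.range r, (T ^ i) b = 0 := by
    have hgeom := LinearMap.congr_fun (geom_sum_mul T r) (e i)
    rw [hTr, sub_self, Module.End.mul_apply, LinearMap.zero_apply, LinearMap.sum_apply] at hgeom
    simp only [hbdef, map_smul, ← Finset.smul_sum, ← LinearMap.sub_apply, hgeom, smul_zero]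
  have hrsum : (r : k) = -∑ i ∈ Finset.range r, e.repr ((T ^ i) b - b) j := by
    have := congrArg (e.coord j) hsum
    simp only [map_sum, map_zero, Module.Basis.coord_apply] at this
    simp [map_sub, Finset.sum_sub_distrib, this, hj]
  refine hr.not_lt ?_
  rw [hrsum, v.map_neg]
  exact v.map_sum_lt one_ne_zero fun i _ => valuation_repr_pow_sub_lt_one hT i hc j

end FiniteOrder

/-- Evaluation at a group-like element, as a character of the dual algebra. -/
def evalGroupLike {k H : Type} [CommRing k] [AddCommGroup H] [Module k H] [Coalgebra k H]
    (g : GroupLike k H) : WithConv (H →ₗ[k] k) →ₐ[k] k where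
  toFun f := f g
  map_one' := by simp [LinearMap.convOne_apply, g.isGroupLikeElem_val.counit_eq_one]
  map_mul' f f' := by simp [LinearMap.convMul_apply, g.isGroupLikeElem_val.comul_eq_tmul_self]
  map_zero' := rfl
  map_add' _ _ := rfl
  commutes' c := by
    simp [LinearMap.convAlgebraMap_apply, g.isGroupLikeElem_val.counit_eq_one]

lemma card_groupLike_eq_finrank {k H : Type} [Field k] [AddCommGroup H] [Module k H]
    [Coalgebra k H] (hspan : Submodule.span k {g : H | IsGroupLikeElem k g} = ⊤) :
    Nat.card (GroupLike k H) = Module.finrank k H := by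
  have hrange : Set.range (GroupLike.val (R := k) (A := H)) = {g | IsGroupLikeElem k g} :=
    Set.ext fun g => ⟨fun ⟨u, hu⟩ => hu ▸ u.isGroupLikeElem_val, fun hg => ⟨⟨g, hg⟩, rfl⟩⟩
  exact (Module.finrank_eq_nat_card_basis
    (.mk linearIndep_groupLikeVal (hrange ▸ hspan.ge))).symm

namespace HopfAction

variable {k H A : Type} [Field k] [Ring H] [HopfAlgebra k H] [Ring A] [Algebra k A]

/-- The representation of the group of group-like elements underlying an action. -/
def groupLikeRep (ha : HopfAction k H A) : GroupLike k H →* Module.End k A where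
  toFun g := ha.act g
  map_one' := LinearMap.ext ha.one_act
  map_mul' g h := LinearMap.ext (ha.mul_act g h)

variable [FiniteDimensional k H] {ha : HopfAction k H A}

-- Group-like elements are characters of the dual algebra, which matrix coefficients generate.
theorem InnerFaithful.groupLikeRep_injective (hif : ha.InnerFaithful) :
    Function.Injective ha.groupLikeRep := fun g h hgh => by
  have heval : evalGroupLike g = evalGroupLike h := by
    refine AlgHom.ext_of_adjoin_eq_top hif.matrixCoeffAlgebra_eq_top ?_
    rintro _ ⟨l, a, rfl⟩
    exact congrArg l (LinearMap.congr_fun hgh a)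
  refine GroupLike.val_injective (sub_eq_zero.1 ?_)
  refine (Module.forall_dual_apply_eq_zero_iff k _).1 fun f => ?_
  rw [map_sub, sub_eq_zero]
  exact DFunLike.congr_fun heval (toConv f)

theorem InnerFaithful.groupLike_eq_of_valuation_sub_lt_one {I Γ₀ : Type*}
    [LinearOrderedCommGroupWithZero Γ₀] {v : Valuation k Γ₀} (hif : ha.InnerFaithful)
    (hcard : v (Nat.card (GroupLike k H) : k) = 1) (e : Module.Basis I k A)
    (hint : ∀ (g : GroupLike k H) i j, v (e.repr (ha.act g (e i)) j) ≤ 1) {g h : GroupLike k H}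
    (hgh : ∀ i j, v (e.repr (ha.act g (e i)) j - e.repr (ha.act h (e i)) j) < 1) : g = h := by
  refine (inv_mul_eq_one.1 (hif.groupLikeRep_injective ?_)).symm
  rw [map_one]
  refine eq_one_of_pow_eq_one_of_valuation_lt_one (e := e) hcard ?_ fun i j => ?_
  · rw [← map_pow, pow_card_eq_one', map_one]
  · have hsub : ha.groupLikeRep (h⁻¹ * g) (e i) - e i =
        ha.groupLikeRep h⁻¹ (ha.act g (e i) - ha.act h (e i)) := by
      have hinv := LinearMap.congr_fun (map_one ha.groupLikeRep) (e i)
      rw [← inv_mul_cancel h, map_mul] at hinv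
      rw [map_mul, map_sub]
      exact congrArg _ hinv.symm
    rw [hsub]
    refine valuation_apply_lt_one_of_repr_lt_one e
      (f := e.coord j ∘ₗ ha.groupLikeRep h⁻¹) (fun i => hint _ i j) fun i' => ?_
    simpa using hgh i i'

end HopfAction

/-! ### Characters of an order at a prime of the base ring -/

section Fields

variable {R : Type*} [CommRing R]

lemma exists_valuationSubring_lt_one_iff_mem (P : Ideal R) [P.IsPrime] (k : Type*) [Field k]
    [Algebra R k] [FaithfulSMul R k] : ∃ V : ValuationSubring k, (∀ r : R, algebraMap R k r ∈ V) ∧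
      ∀ r : R, V.valuation (algebraMap R k r) < 1 ↔ r ∈ P := by
  have hunit (t : P.primeCompl) : IsUnit (algebraMap R k t) := by
    refine IsUnit.mk0 _ fun h => t.2 ?_
    rw [FaithfulSMul.algebraMap_injective R k (h.trans (map_zero _).symm)]
    exact P.zero_mem
  let f : Localization.AtPrime P →+* k := IsLocalization.lift hunit
  have hf (r : R) : f (algebraMap R _ r) = algebraMap R k r := IsLocalization.lift_eq _ r
  obtain ⟨V, hV, hlocal⟩ := IsLocalRing.exists_factor_valuationRing f
  refine ⟨V, fun r => hf r ▸ hV _, fun r => ?_⟩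
  calc V.valuation (algebraMap R k r) < 1
      ↔ f.codRestrict V.toSubring hV (algebraMap R _ r) ∈ IsLocalRing.maximalIdeal V := by
        rw [← hf]
        exact (V.valuation_lt_one_iff ⟨_, hV _⟩).symm
    _ ↔ ¬IsUnit (algebraMap R (Localization.AtPrime P) r) :=
        not_congr (isUnit_map_iff (f.codRestrict V.toSubring hV) _)
    _ ↔ r ∈ P := by
        rw [IsLocalization.AtPrime.isUnit_to_map_iff _ P]
        exact not_not

lemma mem_valuationSubring_of_isIntegral {k : Type*} [Field k] [Algebra R k]
    {V : ValuationSubring k} (hV : ∀ r : R, algebraMap R k r ∈ V) {x : k} (hx : IsIntegral R x) :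
    x ∈ V := by
  have hxV : IsIntegral V x :=
    hx.map_of_comp_eq ((algebraMap R k).codRestrict V.toSubring hV) (RingHom.id k) rfl
  obtain ⟨y, rfl⟩ := IsIntegrallyClosed.isIntegral_iff.1 hxV
  exact y.2

lemma exists_field_amalgam {L K : Type} [Field L] [Field K] (f : R →+* L) (g : R →+* K)
    (h : RingHom.ker f = RingHom.ker g) :
    ∃ (F : Type) (_ : Field F) (u : L →+* F) (v : K →+* F), u.comp f = v.comp g := by
  let P := RingHom.ker f
  have hP : P.IsPrime := RingHom.ker_isPrime f
  let f' := Ideal.ResidueField.lift P f le_rfl fun r hr => IsUnit.mk0 _ hr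
  let g' := Ideal.ResidueField.lift P g h.le fun r hr => IsUnit.mk0 _ fun hg => hr (h.ge hg)
  have hf' (r : R) : f' (algebraMap R _ r) = f r := Ideal.ResidueField.lift_algebraMap ..
  have hg' (r : R) : g' (algebraMap R _ r) = g r := Ideal.ResidueField.lift_algebraMap ..
  let := f'.toAlgebra
  let := g'.toAlgebra
  obtain ⟨m, hm⟩ := Ideal.exists_maximal (L ⊗[P.ResidueField] K)
  refine ⟨_, Ideal.Quotient.field m, (Ideal.Quotient.mk m).comp (algebraMap L _),
    (Ideal.Quotient.mk m).comp Algebra.TensorProduct.includeRight.toRingHom,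
    RingHom.ext fun r => congrArg (Ideal.Quotient.mk m) ?_⟩
  calc f r ⊗ₜ[P.ResidueField] (1 : K) = f' (algebraMap R _ r) ⊗ₜ 1 := by rw [hf']
    _ = 1 ⊗ₜ g' (algebraMap R _ r) := Algebra.TensorProduct.tmul_one_eq_one_tmul _
    _ = 1 ⊗ₜ g r := by rw [hg']

lemma exists_place (k K : Type) [Field k] [Algebra R k] [FaithfulSMul R k] [Field K]
    [Algebra R K] :
    ∃ (V : ValuationSubring k) (hV : ∀ r : R, algebraMap R k r ∈ V) (F : Type) (_ : Field F)
      (_ : Algebra R F) (_ : Algebra K F) (_ : IsScalarTower R K F) (ρ : V →+* F),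
      (∀ r : R, ρ ⟨algebraMap R k r, hV r⟩ = algebraMap R F r) ∧
        ∀ x, ρ x = 0 ↔ V.valuation x < 1 := by
  have : (RingHom.ker (algebraMap R K)).IsPrime := RingHom.ker_isPrime _
  obtain ⟨V, hV, hVP⟩ := exists_valuationSubring_lt_one_iff_mem (RingHom.ker (algebraMap R K)) k
  let f := (IsLocalRing.residue V).comp ((algebraMap R k).codRestrict V.toSubring hV)
  have hf : RingHom.ker f = RingHom.ker (algebraMap R K) := Ideal.ext fun r =>
    (IsLocalRing.residue_eq_zero_iff _).trans ((V.valuation_lt_one_iff _).trans (hVP r))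
  obtain ⟨F, _, u, v, huv⟩ := exists_field_amalgam f (algebraMap R K) hf
  let := (v.comp (algebraMap R K)).toAlgebra
  let := v.toAlgebra
  refine ⟨V, hV, F, _, _, _, .of_algebraMap_eq' rfl, u.comp (IsLocalRing.residue V),
    DFunLike.congr_fun huv, fun x => ?_⟩
  rw [← V.valuation_lt_one_iff, ← IsLocalRing.residue_eq_zero_iff]
  exact map_eq_zero u

lemma finite_of_isBaseChange {S M N : Type*} [CommRing S] [Algebra R S] [AddCommGroup M]
    [Module R M] [Module.Finite R M] [AddCommGroup N] [Module R N] [Module S N]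
    [IsScalarTower R S N] {ι : M →ₗ[R] N} (hι : IsBaseChange S ι) : Module.Finite S N :=
  .of_surjective hι.equiv.toLinearMap hι.equiv.surjective

variable {M : Type*} [AddCommGroup M] [Module R M] [Module.Finite R M] [Module.Projective R M]

lemma finrank_eq_rankAtStalk_of_isBaseChange {F N : Type*} [Field F] [Algebra R F]
    [AddCommGroup N] [Module R N] [Module F N] [IsScalarTower R F N] {ι : M →ₗ[R] N}
    (hι : IsBaseChange F ι) :
    Module.finrank F N = Module.rankAtStalk M (PrimeSpectrum.comap (algebraMap R F) ⊥) := by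
  have := finite_of_isBaseChange hι
  rw [← Module.rankAtStalk_isBaseChange hι, Module.rankAtStalk_eq_finrank_of_free]
  rfl

lemma finrank_eq_finrank_of_isBaseChange [IsDomain R] {F F' N N' : Type*} [Field F] [Algebra R F]
    [AddCommGroup N] [Module R N] [Module F N] [IsScalarTower R F N] {ι : M →ₗ[R] N}
    [Field F'] [Algebra R F'] [AddCommGroup N'] [Module R N'] [Module F' N']
    [IsScalarTower R F' N'] {ι' : M →ₗ[R] N'} (hι : IsBaseChange F ι) (hι' : IsBaseChange F' ι') :
    Module.finrank F N = Module.finrank F' N' := by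
  rw [finrank_eq_rankAtStalk_of_isBaseChange hι, finrank_eq_rankAtStalk_of_isBaseChange hι',
    ← Module.rankAtStalk_eq_of_le_of_finite_of_flat M bot_le]
  exact Module.rankAtStalk_eq_of_le_of_finite_of_flat M bot_le

end Fields

namespace IsCoalgebraOrder

variable {R k H M : Type} [CommRing R] [Field k] [Algebra R k]
  [AddCommGroup H] [Module k H] [Module R H] [IsScalarTower R k H] [Coalgebra k H]
  [AddCommGroup M] [Module R M] [Coalgebra R M] {ι : M →ₗ[R] H}

/-- The character of the dual of an order given by evaluation at a grouplike element. -/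
noncomputable def character (hι : IsCoalgebraOrder (k := k) ι) (g : GroupLike k H) :
    WithConv (M →ₗ[R] R) →ₐ[R] k :=
  { (evalGroupLike g : WithConv (H →ₗ[k] k) →+* k).comp (hι.dualExtend : _ →+* _) with
    commutes' := fun r => by
      change hι.dualExtend (algebraMap R _ r) g = _
      rw [AlgHom.commutes, LinearMap.convAlgebraMap_apply, g.isGroupLikeElem_val.counit_eq_one,
        map_one, ← Algebra.algebraMap_eq_smul_one] }

lemma character_mem_valuationSubring [Module.Finite R M] [Module.Projective R M]
    (hι : IsCoalgebraOrder (k := k) ι) {V : ValuationSubring k}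
    (hV : ∀ r : R, algebraMap R k r ∈ V) (g : GroupLike k H) (α : WithConv (M →ₗ[R] R)) :
    hι.character g α ∈ V := by
  have : Module.Finite R (M →ₗ[R] R) := inferInstanceAs (Module.Finite R (Module.Dual R M))
  have : Module.Finite R (WithConv (M →ₗ[R] R)) :=
    .equiv (WithConv.linearEquiv R (M →ₗ[R] R)).symm
  exact mem_valuationSubring_of_isIntegral hV ((IsIntegral.of_finite R α).map (hι.character g))

section Residue

variable [Module.Finite R M] [Module.Projective R M] {V : ValuationSubring k} {F : Type} [Field F]
  [Algebra R F]

/-- The reduction of the character of a grouplike element along a ring homomorphism `ρ : V → F`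
that restricts to the structure map of `F` on the base ring. -/
noncomputable def residueCharacter (hι : IsCoalgebraOrder (k := k) ι)
    (hV : ∀ r : R, algebraMap R k r ∈ V) (ρ : V →+* F)
    (hρ : ∀ r : R, ρ ⟨algebraMap R k r, hV r⟩ = algebraMap R F r) (g : GroupLike k H) :
    WithConv (M →ₗ[R] R) →ₐ[R] F :=
  { ρ.comp ((hι.character g : _ →+* k).codRestrict V.toSubring
      (hι.character_mem_valuationSubring hV g)) with
    commutes' := fun r => (congrArg ρ (Subtype.ext ((hι.character g).commutes r))).trans (hρ r) }

lemma residueCharacter_eq_iff (hι : IsCoalgebraOrder (k := k) ι)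
    (hV : ∀ r : R, algebraMap R k r ∈ V) {ρ : V →+* F}
    (hρ : ∀ r : R, ρ ⟨algebraMap R k r, hV r⟩ = algebraMap R F r)
    (hker : ∀ x, ρ x = 0 ↔ V.valuation x < 1) (g h : GroupLike k H) (α : WithConv (M →ₗ[R] R)) :
    hι.residueCharacter hV ρ hρ g α = hι.residueCharacter hV ρ hρ h α ↔
      V.valuation (hι.character g α - hι.character h α) < 1 := by
  have hmem (g) := hι.character_mem_valuationSubring hV g α
  change ρ ⟨_, hmem g⟩ = ρ ⟨_, hmem h⟩ ↔ _
  rw [← sub_eq_zero, ← map_sub, hker]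
  rfl

end Residue

lemma exists_forall_dualExtend_eq [Module.Finite R M] [Module.Projective R M]
    (hι : IsCoalgebraOrder (k := k) ι) (χ : WithConv (M →ₗ[R] R) →ₗ[R] k) :
    ∃ x : H, ∀ α, hι.dualExtend α x = χ α := by
  obtain ⟨d, f, g, -, -, hfg⟩ := Module.Finite.exists_comp_eq_id_of_projective R M
  let β (i : Fin d) : WithConv (M →ₗ[R] R) := toConv (LinearMap.proj i ∘ₗ g)
  let y (i : Fin d) : M := f (Pi.single i 1)
  have hα (α : WithConv (M →ₗ[R] R)) : α = ∑ i, α (y i) • β i := by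
    refine ofConv_injective (LinearMap.ext fun m => ?_)
    have hm : ∑ i, g m i • y i = m := by
      simp only [y, ← map_smul, ← map_sum]
      rw [← pi_eq_sum_univ']
      exact LinearMap.congr_fun hfg m
    conv_lhs => rw [← hm]
    simp [β, mul_comm]
  refine ⟨∑ i, χ (β i) • ι (y i), fun α => ?_⟩
  calc hι.dualExtend α (∑ i, χ (β i) • ι (y i))
      = ∑ i, α (y i) • χ (β i) := by simp [hι.dualExtend_apply, Algebra.smul_def, mul_comm]
    _ = χ (∑ i, α (y i) • β i) := by simp only [map_sum, map_smul]
    _ = χ α := by rw [← hα]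

variable (R M) in
lemma mk_one (K : Type) [Field K] [Algebra R K] :
    IsCoalgebraOrder (k := K) (TensorProduct.mk R K M 1) where
  isBaseChange := TensorProduct.isBaseChange R M K
  comul_apply x := by
    change AlgebraTensorModule.tensorTensorTensorComm R K R K K K M M
      ((1 ⊗ₜ[K] 1) ⊗ₜ[R] comul (R := R) x) = _
    induction comul (R := R) x with
    | zero => simp
    | tmul y z => rfl
    | add y z hy hz => rw [tmul_add, map_add, map_add, hy, hz]
  counit_apply x := by simp [Algebra.smul_def]

end IsCoalgebraOrder

/-! ### Separating the points of the reduction -/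

namespace IsCoalgebraOrder

variable {R M : Type} [CommRing R] [AddCommGroup M] [Module R M] [Coalgebra R M]

-- By Dedekind's independence of characters, the points representing the characters form a basis.
lemma eq_zero_of_forall_dualExtend_eq_zero_of_characters [Module.Finite R M]
    [Module.Projective R M] {F N : Type} [Field F]
    [Algebra R F] [AddCommGroup N] [Module F N] [Module R N] [IsScalarTower R F N] [Coalgebra F N]
    {ι : M →ₗ[R] N} (hι : IsCoalgebraOrder (k := F) ι) (C : Subalgebra R (WithConv (M →ₗ[R] R)))
    {I : Type*} (χ : I → WithConv (M →ₗ[R] R) →ₐ[R] F)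
    (hχ : Function.Injective fun i => (χ i).comp C.val) [FiniteDimensional F N]
    (hcard : Nat.card I = Module.finrank F N) {x : N}
    (hx : ∀ α ∈ C, hι.dualExtend α x = 0) : x = 0 := by
  let evalC : N →ₗ[F] C → F := LinearMap.pi fun α => (hι.dualExtend α).ofConv
  choose pt hpt using fun i => hι.exists_forall_dualExtend_eq (χ i).toLinearMap
  have hχ_indep : LinearIndependent F (evalC ∘ pt) := by
    have hinj : Function.Injective fun i => ((χ i).comp C.val : C →* F) := fun i j hij =>
      hχ (AlgHom.ext fun α => DFunLike.congr_fun hij α)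
    have hcoe : evalC ∘ pt = fun i => ((χ i).comp C.val : C → F) :=
      funext fun i => funext fun α => hpt i α
    exact hcoe ▸ (linearIndependent_monoidHom C F).comp _ hinj
  have hpt_indep : LinearIndependent F pt := hχ_indep.of_comp
  have := hpt_indep.finite
  have := Fintype.ofFinite I
  have hspan : Submodule.span F (Set.range pt) = ⊤ :=
    hpt_indep.span_eq_top_of_card_eq_finrank' (by rw [← hcard, Nat.card_eq_fintype_card])
  obtain ⟨c, rfl⟩ := (Submodule.mem_span_range_iff_exists_fun F).1
    (hspan ▸ Submodule.mem_top (x := x))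
  have hc : ∑ i, c i • (evalC ∘ pt) i = 0 := by
    rw [← (funext fun α => hx α α.2 : evalC (∑ i, c i • pt i) = 0), map_sum]
    simp only [map_smul, Function.comp_apply]
  simp [Fintype.linearIndependent_iff.1 hχ_indep c hc]

lemma dualExtend_rTensor {K F : Type} [Field K] [Algebra R K] [Field F] [Algebra R F] [Algebra K F]
    [IsScalarTower R K F] (α : WithConv (M →ₗ[R] R)) (x : K ⊗[R] M) :
    (mk_one R M F).dualExtend α (LinearMap.rTensor M (IsScalarTower.toAlgHom R K F).toLinearMap x) =
      algebraMap K F ((mk_one R M K).dualExtend α x) := by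
  induction x with
  | zero => simp
  | add x y hx hy => simp only [map_add, hx, hy]
  | tmul c m =>
    have h (E : Type) [Field E] [Algebra R E] (c : E) :
        (mk_one R M E).dualExtend α (c ⊗ₜ m) = c * algebraMap R E (α m) := by
      rw [← mul_one c, ← smul_eq_mul, ← smul_tmul', map_smul, smul_eq_mul, smul_eq_mul, mul_one]
      exact congrArg _ ((mk_one R M E).dualExtend_apply α m)
    simp [h, ← IsScalarTower.algebraMap_apply]

end IsCoalgebraOrder

namespace HopfAction

open WeylAlgebra

section Separation

variable {R k H M : Type} [CommRing R] [Field k] [Algebra R k] [Ring H] [HopfAlgebra k H]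
  [Module R H] [IsScalarTower R k H] [Ring M] [HopfAlgebra R M] {ι : M →ₗ[R] H} {n : ℕ}
  {ha : HopfAction k H (WeylAlgebra k n)} {haR : HopfAction R M (WeylAlgebra R n)}

lemma repr_act_monomialBasis (hι : IsCoalgebraOrder (k := k) ι)
    (hact : ∀ x a, ha.act (ι x) (baseChange R k n a) = baseChange R k n (haR.act x a))
    (g : GroupLike k H) (m r : (Fin n ⊕ Fin n) →₀ ℕ) :
    (monomialBasis k n).repr (ha.act g (monomialBasis k n m)) r =
      hι.character g (haR.matrixCoeff (coeff r) (monomialBasis R n m)) := by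
  have hm : baseChange R k n (monomialBasis R n m) = monomialBasis k n m := by
    refine ext_coeff fun r => ?_
    rw [coeff_baseChange, ← monomialBasis_coord, ← monomialBasis_coord]
    simp [Finsupp.single_apply, apply_ite (algebraMap R k)]
  change _ = hι.dualExtend _ g
  rw [dualExtend_matrixCoeff_coeff hι hact, hm, matrixCoeff_apply]
  rfl

lemma InnerFaithful.groupLike_eq_of_character_sub_lt_one
    [Module.Finite R M] [Module.Projective R M] (hif : ha.InnerFaithful)
    (hι : IsCoalgebraOrder (k := k) ι)
    (hact : ∀ x a, ha.act (ι x) (baseChange R k n a) = baseChange R k n (haR.act x a))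
    {V : ValuationSubring k} (hV : ∀ r : R, algebraMap R k r ∈ V)
    (hcard : V.valuation (Nat.card (GroupLike k H) : k) = 1) {g h : GroupLike k H}
    (hgh : ∀ α ∈ haR.matrixCoeffAlgebra, V.valuation (hι.character g α - hι.character h α) < 1) :
    g = h := by
  have := finite_of_isBaseChange hι.isBaseChange
  refine hif.groupLike_eq_of_valuation_sub_lt_one hcard (monomialBasis k n) (fun g m r => ?_)
    fun m r => ?_
  · rw [repr_act_monomialBasis hι hact]
    exact (V.valuation_le_one_iff _).2 (hι.character_mem_valuationSubring hV g _)
  · rw [repr_act_monomialBasis hι hact, repr_act_monomialBasis hι hact]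
    exact hgh _ (Algebra.subset_adjoin ⟨_, _, rfl⟩)

theorem InnerFaithful.eq_zero_of_forall_dualExtend_eq_zero [IsAlgClosed k] [CharZero k]
    [FaithfulSMul R k] [Algebra.FiniteType ℤ R] [Module.Finite R M] [Module.Projective R M]
    (hif : ha.InnerFaithful) (hι : IsCoalgebraOrder (k := k) ι)
    (hact : ∀ x a, ha.act (ι x) (baseChange R k n a) = baseChange R k n (haR.act x a))
    {K : Type} [Field K] [Algebra R K] (hK : (Module.finrank k H : K) ≠ 0) {x : K ⊗[R] M}
    (hx : ∀ α ∈ haR.matrixCoeffAlgebra, (IsCoalgebraOrder.mk_one R M K).dualExtend α x = 0) :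
    x = 0 := by
  have : IsDomain R := (FaithfulSMul.algebraMap_injective R k).isDomain
  have : CharZero R := (algebraMap R k).charZero
  have := finite_of_isBaseChange hι.isBaseChange
  have hcard := card_groupLike_eq_finrank (hif.span_isGroupLikeElem_eq_top hι hact)
  obtain ⟨V, hV, F, _, _, _, _, ρ, hρ, hρ0⟩ := exists_place (R := R) k K
  let χ := hι.residueCharacter hV ρ hρ
  have hdim : V.valuation (Nat.card (GroupLike k H) : k) = 1 := by
    rw [hcard]
    refine eq_of_le_of_not_lt (V.valuation_le_one (Module.finrank k H : V)) fun hlt => ?_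
    have h0 := (hρ0 (Module.finrank k H : V)).2 hlt
    rw [map_natCast, ← map_natCast (algebraMap K F)] at h0
    exact hK ((map_eq_zero _).1 h0)
  have hχ : Function.Injective fun g => (χ g).comp haR.matrixCoeffAlgebra.val := by
    refine fun g h hgh => hif.groupLike_eq_of_character_sub_lt_one hι hact hV hdim fun α hα => ?_
    have hα_eq : χ g α = χ h α := AlgHom.congr_fun hgh ⟨α, hα⟩
    exact (hι.residueCharacter_eq_iff hV hρ hρ0 g h α).1 hα_eq
  have hflat := Module.Flat.rTensor_preserves_injective_linearMap (M := M)
    (IsScalarTower.toAlgHom R K F).toLinearMap (algebraMap K F).injective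
  have hdimF : Nat.card (GroupLike k H) = Module.finrank F (F ⊗[R] M) :=
    hcard.trans (finrank_eq_finrank_of_isBaseChange hι.isBaseChange
      (IsCoalgebraOrder.mk_one R M F).isBaseChange)
  refine hflat (Eq.trans ?_ (map_zero _).symm)
  refine (IsCoalgebraOrder.mk_one R M F).eq_zero_of_forall_dualExtend_eq_zero_of_characters
    haR.matrixCoeffAlgebra χ hχ hdimF fun α hα => ?_
  rw [IsCoalgebraOrder.dualExtend_rTensor, hx α hα, map_zero]

end Separation

end HopfAction

/-! ### Inner faithfulness of the reduction -/

section BaseChangeCoalgebra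

variable (R K M : Type) [CommRing R] [Field K] [Algebra R K] [AddCommGroup M] [Module R M]
  [Coalgebra R M]

lemma bcComul_eq_comul : bcComul R K M (comul (R := R)) = comul (R := K) := by
  refine (IsCoalgebraOrder.mk_one R M K).isBaseChange.algHom_ext _ _ fun x => ?_
  rw [(IsCoalgebraOrder.mk_one R M K).comul_apply]
  change AlgebraTensorModule.distribBaseChange R K M M (1 ⊗ₜ comul (R := R) x) = _
  induction comul (R := R) x with
  | zero => simp
  | tmul y z => simp [ordTensor]
  | add y z hy hz => rw [tmul_add, map_add, map_add, hy, hz]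

lemma bcCounit_eq_counit : bcCounit R K M (counit (R := R)) = counit (R := K) := by
  refine (IsCoalgebraOrder.mk_one R M K).isBaseChange.algHom_ext _ _ fun x => ?_
  simp [bcCounit]

end BaseChangeCoalgebra

lemma convMul_apply_eq_zero_of_comul_mem_tensorIdeal {K N : Type} [CommRing K] [Ring N]
    [Module K N] [Coalgebra K N] {I : Submodule K N} {α β : WithConv (N →ₗ[K] K)}
    (hα : ∀ x ∈ I, α x = 0) (hβ : ∀ x ∈ I, β x = 0) {x : N}
    (hx : comul (R := K) x ∈ tensorIdeal K N I) : (α * β) x = 0 := by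
  rw [LinearMap.convMul_apply]
  generalize comul (R := K) x = t at hx
  induction hx using Submodule.span_induction with
  | zero => simp
  | add u v _ _ hu hv => rw [map_add, map_add, hu, hv, add_zero]
  | smul c u _ hu => rw [map_smul, map_smul, hu, smul_zero]
  | mem u hu =>
    rcases hu with ⟨a, ha, b, rfl⟩ | ⟨a, b, hb, rfl⟩
    · simp [hα a ha]
    · simp [hβ b hb]

namespace HopfAction

open WeylAlgebra

variable {R K M N : Type} [CommRing R] [CommRing K] [Algebra R K] [Ring M] [HopfAlgebra R M]
  [Ring N] [Module K N] [Module R N] [IsScalarTower R K N] [Coalgebra K N]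
  {ι : M →ₗ[R] N} {n : ℕ} {haR : HopfAction R M (WeylAlgebra R n)}
  {act : N →ₗ[K] WeylAlgebra K n →ₗ[K] WeylAlgebra K n}

lemma dualExtend_matrixCoeff_apply (hι : IsCoalgebraOrder (k := K) ι)
    (hact : ∀ x a, act (ι x) (baseChange R K n a) = baseChange R K n (haR.act x a))
    (l : WeylAlgebra R n →ₗ[R] R) (a : WeylAlgebra R n) (x : N) :
    hι.dualExtend (haR.matrixCoeff l a) x =
      (isBaseChange_baseChange R K n).lift (Algebra.linearMap R K ∘ₗ l)
        (act x (baseChange R K n a)) := by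
  let lK := (isBaseChange_baseChange R K n).lift (Algebra.linearMap R K ∘ₗ l)
  have hlK (y : M) : hι.dualExtend (haR.matrixCoeff l a) (ι y) =
      (lK ∘ₗ act.flip (baseChange R K n a)) (ι y) := by
    rw [hι.dualExtend_apply, LinearMap.comp_apply, LinearMap.flip_apply, hact]
    exact ((isBaseChange_baseChange R K n).lift_eq (Algebra.linearMap R K ∘ₗ l) _).symm
  exact LinearMap.congr_fun (hι.isBaseChange.algHom_ext _ _ hlK) x

lemma dualExtend_apply_eq_zero_of_mem_biideal (hι : IsCoalgebraOrder (k := K) ι)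
    (hact : ∀ x a, act (ι x) (baseChange R K n a) = baseChange R K n (haR.act x a))
    {I : Submodule K N} (hcomul : ∀ x ∈ I, comul (R := K) x ∈ tensorIdeal K N I)
    (hcounit : ∀ x ∈ I, counit (R := K) x = 0) (hI : ∀ x ∈ I, ∀ a, act x a = 0)
    {α : WithConv (M →ₗ[R] R)} (hα : α ∈ haR.matrixCoeffAlgebra) :
    ∀ x ∈ I, hι.dualExtend α x = 0 := by
  induction hα using Algebra.adjoin_induction with
  | mem α h =>
    obtain ⟨l, a, rfl⟩ := h
    intro x hx
    rw [dualExtend_matrixCoeff_apply hι hact, hI x hx, map_zero]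
  | algebraMap r =>
    intro x hx
    rw [AlgHom.commutes, LinearMap.convAlgebraMap_apply, hcounit x hx, map_zero, smul_zero]
  | add α β _ _ hα hβ =>
    intro x hx
    rw [map_add]
    simp [hα x hx, hβ x hx]
  | mul α β _ _ hα hβ =>
    intro x hx
    rw [map_mul]
    exact convMul_apply_eq_zero_of_comul_mem_tensorIdeal hα hβ (hcomul x hx)

end HopfAction

lemma finiteType_int_of_subring_closure_eq {k : Type*} [CommRing k] {R : Subring k}
    (hR : ∃ s : Finset k, Subring.closure (s : Set k) = R) : Algebra.FiniteType ℤ R := by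
  obtain ⟨s, rfl⟩ := hR
  exact (subalgebraOfSubring (Subring.closure (s : Set k))).fg_iff_finiteType.1
    ⟨s, Algebra.adjoin_int _⟩

lemma natCast_finrank_ne_zero {k H K : Type*} [Field k] [Ring H] [Bialgebra k H]
    [FiniteDimensional k H] [CommRing K] {p : ℕ} [CharP K p] (hp : Module.finrank k H < p) :
    (Module.finrank k H : K) ≠ 0 := by
  have : Nontrivial H := (Bialgebra.counitAlgHom k H).toRingHom.domain_nontrivial
  rw [Ne, CharP.cast_eq_zero_iff K p]
  exact Nat.not_dvd_of_pos_of_lt Module.finrank_pos hp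

open WeylAlgebra in
theorem reduction_mod_p_inner_faithful_general {k : Type} [Field k] [IsAlgClosed k] [CharZero k]
    {H : Type} [Ring H] [HopfAlgebra k H] {n : ℕ} {ha : HopfAction k H (WeylAlgebra k n)}
    (hif : ha.InnerFaithful) {R : Type} [CommRing R] [Algebra R k] [FaithfulSMul R k]
    [Algebra.FiniteType ℤ R] [Module R H] [IsScalarTower R k H]
    {M : Type} [Ring M] [HopfAlgebra R M] [Module.Finite R M] [Module.Projective R M]
    {ι : M →ₗ[R] H} (hι : IsCoalgebraOrder (k := k) ι) {haR : HopfAction R M (WeylAlgebra R n)}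
    (hact : ∀ x a, ha.act (ι x) (baseChange R k n a) = baseChange R k n (haR.act x a))
    {K : Type} [Field K] [Algebra R K] (hK : (Module.finrank k H : K) ≠ 0)
    (haK : ModAlgAction K (K ⊗[R] M) (bcComul R K M (comul (R := R)))
      (bcCounit R K M (counit (R := R))) (WeylAlgebra K n))
    (hactK : ∀ x a, haK.act (1 ⊗ₜ x) (baseChange R K n a) = baseChange R K n (haR.act x a)) :
    InnerFaithfulWith K (K ⊗[R] M) (bcComul R K M (comul (R := R)))
      (bcCounit R K M (counit (R := R)))
      ((HopfAlgebra.antipode (R := R) (A := M)).baseChange K) (WeylAlgebra K n) haK.act := by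
  rintro I ⟨-, hcomul, hcounit, -⟩ hI
  rw [bcComul_eq_comul] at hcomul
  rw [bcCounit_eq_counit] at hcounit
  refine (Submodule.eq_bot_iff I).2 fun x hx => ?_
  refine hif.eq_zero_of_forall_dualExtend_eq_zero hι hact hK fun α hα => ?_
  exact HopfAction.dualExtend_apply_eq_zero_of_mem_biideal (IsCoalgebraOrder.mk_one R M K) hactK
    hcomul hcounit hI hα x hx

/-- Let `H` be a finite dimensional Hopf algebra over `k` acting **inner faithfully** on
the Weyl algebra `A = A_n(k)`, the action restricting to a Hopf `R`-order `H_R` over a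
finitely generated subring `R ⊆ k`.  Then for every sufficiently large prime `p`, the
reduced action of `H_p = H_R ⊗_R F̄_p` on `A_p = A_n(F̄_p)` is inner faithful. -/
theorem reduction_mod_p_inner_faithful
    (k : Type) [Field k] [IsAlgClosed k] [CharZero k]
    (H : Type) [Ring H] [HopfAlgebra k H] [FiniteDimensional k H]
    (n : ℕ) (ha : HopfAction k H (WeylAlgebra k n))
    (hif : ha.InnerFaithful)
    (R : Subring k) (hfg : ∃ s : Finset k, Subring.closure (s : Set k) = R)
    (HR : Type) [Ring HR] [HopfAlgebra R HR] [Module.Finite R HR] [Module.Projective R HR]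
    (ι : HR →ₗ[R] H) (hone : ι 1 = 1) (hmul : ∀ x y : HR, ι (x * y) = ι x * ι y)
    (horder : Function.Bijective (LinearMap.liftBaseChange k ι))
    (hcomul : ∀ x : HR, Coalgebra.comul (R := k) (ι x) =
        ordTensor R k H HR ι (Coalgebra.comul (R := R) x))
    (hcounit : ∀ x : HR, Coalgebra.counit (R := k) (ι x) =
        algebraMap R k (Coalgebra.counit (R := R) x))
    (hanti : ∀ x : HR,
        HopfAlgebra.antipode (R := k) (ι x) = ι (HopfAlgebra.antipode (R := R) x))
    (haR : HopfAction R HR (WeylAlgebra R n))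
    (j : WeylAlgebra R n →+* WeylAlgebra k n)
    (hjX : ∀ i : Fin n, j (WeylAlgebra.X i) = WeylAlgebra.X i)
    (hjY : ∀ i : Fin n, j (WeylAlgebra.Y i) = WeylAlgebra.Y i)
    (hjs : ∀ r : R, j (algebraMap R (WeylAlgebra R n) r) = algebraMap k (WeylAlgebra k n) r)
    (hj : ∀ (x : HR) (a : WeylAlgebra R n), ha.act (ι x) (j a) = j (haR.act x a)) :
    ∃ N : ℕ, ∀ p : ℕ, ∀ hp : p.Prime, N ≤ p →
      haveI : Fact p.Prime := ⟨hp⟩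
      ∀ ψ : R →+* AlgebraicClosure (ZMod p),
      letI := ψ.toAlgebra
      ∀ jp : WeylAlgebra R n →+* WeylAlgebra (AlgebraicClosure (ZMod p)) n,
        (∀ i : Fin n, jp (WeylAlgebra.X i) = WeylAlgebra.X i) →
        (∀ i : Fin n, jp (WeylAlgebra.Y i) = WeylAlgebra.Y i) →
        (∀ r : R, jp (algebraMap R (WeylAlgebra R n) r) =
          algebraMap (AlgebraicClosure (ZMod p)) (WeylAlgebra (AlgebraicClosure (ZMod p)) n)
            (ψ r)) →
        ∀ hap : ModAlgAction (AlgebraicClosure (ZMod p)) (AlgebraicClosure (ZMod p) ⊗[R] HR)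
            (bcComul R (AlgebraicClosure (ZMod p)) HR (Coalgebra.comul (R := R)))
            (bcCounit R (AlgebraicClosure (ZMod p)) HR (Coalgebra.counit (R := R)))
            (WeylAlgebra (AlgebraicClosure (ZMod p)) n),
          (∀ (x : HR) (a : WeylAlgebra R n),
            hap.act ((1 : AlgebraicClosure (ZMod p)) ⊗ₜ[R] x) (jp a) = jp (haR.act x a)) →
          InnerFaithfulWith (AlgebraicClosure (ZMod p)) (AlgebraicClosure (ZMod p) ⊗[R] HR)
            (bcComul R (AlgebraicClosure (ZMod p)) HR (Coalgebra.comul (R := R)))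
            (bcCounit R (AlgebraicClosure (ZMod p)) HR (Coalgebra.counit (R := R)))
            ((HopfAlgebra.antipode (R := R) (A := HR)).baseChange (AlgebraicClosure (ZMod p)))
            (WeylAlgebra (AlgebraicClosure (ZMod p)) n) hap.act := by
  have := finiteType_int_of_subring_closure_eq hfg
  have hι : IsCoalgebraOrder (k := k) ι := ⟨horder, hcomul, hcounit⟩
  refine ⟨Module.finrank k H + 1, fun p hp hN => ?_⟩
  have : Fact p.Prime := ⟨hp⟩
  intro ψ
  let := ψ.toAlgebra
  intro jp hX hY hs hap hact
  have hj_eq := WeylAlgebra.eq_baseChange R k n j hjX hjY hjs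
  have hjp_eq := WeylAlgebra.eq_baseChange R _ n jp hX hY hs
  simp only [hj_eq] at hj
  simp only [hjp_eq] at hact
  exact reduction_mod_p_inner_faithful_general hif hι hj
    (natCast_finrank_ne_zero (p := p) (Nat.lt_of_succ_le hN)) hap hact
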